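/- arXiv:2402.00848 — 10 statements merged into one kernel-verified Lean document; each statement's English description precedes it below -/
import Mathlib

section
/- Let (Ω,μ) be a probability space, let 2 < p < ∞ and 1 ≤ q < ∞, and let X_N be an N-dimensional linear space of real-valued measurable functions defined at every point of Ω with finite L_p(μ)-norm, satisfying the Nikol'skii inequality ‖f‖_p ≤ M‖f‖_2 for all f ∈ X_N. Suppose points ξ^1,…,ξ^m ∈ Ω and nonnegative weights λ_1,…,λ_m are such that (∑_{j=1}^m λ_j |f(ξ^j)|^q)^{1/q} ≤ D‖f‖_p for every f ∈ X_N. Then for every basis {u_i}_{i=1}^N of X_N that is orthonormal in L_2(Ω,μ) and every j ∈ {1,…,m}, one has λ_j (∑_{i=1}^N |u_i(ξ^j)|^2)^{q/2} ≤ (DM)^q. -/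
open MeasureTheory

/-- The `L_p(μ)`-norm of a function `f`, `(∫ |f|^p dμ)^(1/p)`. -/
noncomputable def LpNorm {Ω : Type*} [MeasurableSpace Ω] (μ : Measure Ω) (p : ℝ)
    (f : Ω → ℝ) : ℝ :=
  (∫ ω, |f ω| ^ p ∂μ) ^ (1 / p)

/-- Lemma 2.1: weighted RDI `(∑ λ_j |f(ξ^j)|^q)^{1/q} ≤ D‖f‖_p` together with the
Nikol'skii inequality `‖f‖_p ≤ M‖f‖_2` forces `λ_j (∑_i u_i(ξ^j)²)^{q/2} ≤ (DM)^q` for any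
orthonormal basis `u` of `X_N`. -/
theorem stmt_0 {Ω : Type*} [MeasurableSpace Ω] (μ : Measure Ω) [IsProbabilityMeasure μ]
    (p q : ℝ) (hp : 2 < p) (hq : 1 ≤ q)
    (N : ℕ) (X : Submodule ℝ (Ω → ℝ)) (hdim : Module.finrank ℝ X = N)
    (hmeas : ∀ f ∈ X, Measurable f)
    (hfin : ∀ f ∈ X, Integrable (fun ω => |f ω| ^ p) μ)
    (M : ℝ) (hM : 0 < M)
    (hNik : ∀ f ∈ X, LpNorm μ p f ≤ M * LpNorm μ 2 f)
    (m : ℕ) (ξ : Fin m → Ω) (lam : Fin m → ℝ) (hlam : ∀ j, 0 ≤ lam j)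
    (D : ℝ) (hD : 0 < D)
    (hRDI : ∀ f ∈ X, (∑ j, lam j * |f (ξ j)| ^ q) ^ (1 / q) ≤ D * LpNorm μ p f)
    (u : Fin N → Ω → ℝ)
    (hu_mem : ∀ i, u i ∈ X)
    (hu_indep : LinearIndependent ℝ u)
    (hu_span : Submodule.span ℝ (Set.range u) = X)
    (hu_ortho : ∀ i k, (∫ ω, u i ω * u k ω ∂μ) = if i = k then (1 : ℝ) else 0) :
    ∀ j, lam j * (∑ i, (u i (ξ j)) ^ 2) ^ (q / 2) ≤ (D * M) ^ q := by
  intro j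
  have hL2 : ∀ i, MemLp (u i) 2 μ := by
    intro i
    rw [memLp_two_iff_integrable_sq (hmeas _ (hu_mem i)).aestronglyMeasurable]
    refine Integrable.mono' ((integrable_const (1 : ℝ)).add (hfin _ (hu_mem i)))
      ((hmeas _ (hu_mem i)).pow_const 2).aestronglyMeasurable (Filter.Eventually.of_forall ?_)
    intro ω
    simp only [Pi.add_apply]
    rw [Real.norm_eq_abs, abs_of_nonneg (sq_nonneg _), ← sq_abs]
    have h0 : 0 ≤ |u i ω| := abs_nonneg _
    rcases le_total (|u i ω|) 1 with h | h
    · have : 0 ≤ |u i ω| ^ p := Real.rpow_nonneg h0 p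
      nlinarith
    · have : |u i ω| ^ (2 : ℝ) ≤ |u i ω| ^ p := Real.rpow_le_rpow_of_exponent_le h hp.le
      rw [Real.rpow_two] at this
      linarith
  have hint : ∀ i k, Integrable (fun ω => u i ω * u k ω) μ := fun i k =>
    (hL2 i).integrable_mul (hL2 k)
  set S : ℝ := ∑ i, (u i (ξ j)) ^ 2 with hS
  have hS0 : 0 ≤ S := Finset.sum_nonneg fun i _ => sq_nonneg _
  have hq0 : 0 < q := by linarith
  rcases hS0.eq_or_lt with h0 | hSpos
  · rw [← h0, Real.zero_rpow (by positivity), mul_zero]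
    positivity
  let f : Ω → ℝ := ∑ i, u i (ξ j) • u i
  have hfX : f ∈ X := Submodule.sum_mem _ fun i _ => X.smul_mem _ (hu_mem i)
  have hfa : ∀ ω, f ω = ∑ i, u i (ξ j) * u i ω := by
    intro ω
    simp [f, Finset.sum_apply]
  have hfξ : f (ξ j) = S := by
    rw [hfa, hS]
    exact Finset.sum_congr rfl fun i _ => by ring
  have hf2 : ∫ ω, |f ω| ^ (2 : ℝ) ∂μ = S := by
    have : ∀ ω, |f ω| ^ (2 : ℝ) =
        ∑ i, ∑ k, (u i (ξ j) * u k (ξ j)) * (u i ω * u k ω) := by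
      intro ω
      rw [Real.rpow_two, sq_abs, hfa, sq, Finset.sum_mul_sum]
      refine Finset.sum_congr rfl fun i _ => Finset.sum_congr rfl fun k _ => by ring
    simp_rw [this]
    rw [integral_finsetSum _ fun i _ => integrable_finsetSum _ fun k _ => (hint i k).const_mul _]
    rw [hS]
    refine Finset.sum_congr rfl fun i _ => ?_
    rw [integral_finsetSum _ fun k _ => (hint i k).const_mul _]
    simp_rw [integral_const_mul, hu_ortho]
    simp [sq]
  have hN2 : LpNorm μ 2 f = S ^ ((1 : ℝ) / 2) := by rw [LpNorm, hf2]
  have hsum0 : ∀ k ∈ Finset.univ, 0 ≤ lam k * |f (ξ k)| ^ q := fun k _ =>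
    mul_nonneg (hlam k) (Real.rpow_nonneg (abs_nonneg _) _)
  have h1 : (∑ k, lam k * |f (ξ k)| ^ q) ^ (1 / q) ≤ D * M * S ^ ((1 : ℝ) / 2) := by
    refine (hRDI f hfX).trans ?_
    rw [mul_assoc, ← hN2]
    exact mul_le_mul_of_nonneg_left (hNik f hfX) hD.le
  have h2 := Real.rpow_le_rpow (Real.rpow_nonneg (Finset.sum_nonneg hsum0) _) h1 hq0.le
  rw [← Real.rpow_mul (Finset.sum_nonneg hsum0), one_div_mul_cancel hq0.ne', Real.rpow_one,
    Real.mul_rpow (by positivity) (by positivity), ← Real.rpow_mul hS0] at h2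
  have h3 := (Finset.single_le_sum hsum0 (Finset.mem_univ j)).trans h2
  rw [hfξ, abs_of_pos hSpos, show (1 : ℝ) / 2 * q = q / 2 by ring] at h3
  have h4 : S ^ q = S ^ (q / 2) * S ^ (q / 2) := by
    rw [← Real.rpow_add hSpos]; congr 1; ring
  rw [h4, ← mul_assoc] at h3
  exact le_of_mul_le_mul_right h3 (Real.rpow_pos_of_pos hSpos _)
end

section
/- For a ∈ (0,1/2], define f_a ∈ C[0,1] by f_a(x) = 1 for 0 ≤ x ≤ a, f_a(x) = 2 − x/a for a ≤ x ≤ 2a, and f_a(x) = 0 for 2a ≤ x ≤ 1. Let p,q ∈ [1,∞) and let X_N be a linear subspace of C[0,1] that contains the functions f_a and f_{a/2} for some a ∈ (0,1/2]. Suppose points ξ^1,…,ξ^m ∈ [0,1] are such that 0 < ((1/m)∑_{j=1}^m |f(ξ^j)|^q)^{1/q} ≤ D‖f‖_{L_p[0,1]} for every f ∈ X_N with f ≠ 0. Then m ≥ D^{−q}(2a)^{−q/p}. -/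
open MeasureTheory

/-- The function `f_a`: equal to `1` on `[0,a]`, linear (`2 - x/a`) on `[a,2a]`, and `0` on
`[2a,1]`. -/
noncomputable def fA (a : ℝ) (x : ℝ) : ℝ :=
  if x ≤ a then 1 else if x ≤ 2 * a then 2 - x / a else 0

/-- Proposition 2.3: if `X_N ⊂ C[0,1]` contains `f_a` and `f_{a/2}` and points
`ξ^1,…,ξ^m ∈ [0,1]` give an injective RDI `0 < ((1/m)∑_j |f(ξ^j)|^q)^{1/q} ≤ D‖f‖_{L_p[0,1]}`
for all nonzero `f ∈ X_N`, then `m ≥ D^{-q}(2a)^{-q/p}`. -/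
theorem stmt_4 (p q : ℝ) (hp : 1 ≤ p) (hq : 1 ≤ q)
    (X : Submodule ℝ (ℝ → ℝ))
    (hcont : ∀ f ∈ X, ContinuousOn f (Set.Icc 0 1))
    (a : ℝ) (ha : a ∈ Set.Ioc (0 : ℝ) (1 / 2))
    (hfa : fA a ∈ X) (hfa2 : fA (a / 2) ∈ X)
    (m : ℕ) (ξ : Fin m → ℝ) (hξ : ∀ j, ξ j ∈ Set.Icc (0 : ℝ) 1)
    (D : ℝ) (hD : 0 < D)
    (hRDI : ∀ f ∈ X, (∃ x ∈ Set.Icc (0 : ℝ) 1, f x ≠ 0) →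
      0 < ((1 / (m : ℝ)) * ∑ j, |f (ξ j)| ^ q) ^ (1 / q) ∧
      ((1 / (m : ℝ)) * ∑ j, |f (ξ j)| ^ q) ^ (1 / q)
        ≤ D * (∫ x in (0 : ℝ)..1, |f x| ^ p) ^ (1 / p)) :
    (m : ℝ) ≥ D ^ (-q) * (2 * a) ^ (-(q / p)) := by
  obtain ⟨ha0, ha1⟩ := ha
  have hp0 : 0 < p := by linarith
  have hq0 : 0 < q := by linarith
  have h1 := (hRDI _ hfa2 ⟨0, by simp, by simp [fA, (half_pos ha0).le]⟩).1
  have hex : ∃ j, ξ j ≤ a := by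
    by_contra! hcon
    have : ∑ j, |fA (a / 2) (ξ j)| ^ q = 0 := by
      apply Finset.sum_eq_zero
      intro j _
      have hj := hcon j
      have : fA (a / 2) (ξ j) = 0 := by
        unfold fA
        rw [if_neg (by linarith), if_neg (by linarith)]
      rw [this, abs_zero, Real.zero_rpow hq0.ne']
    rw [this, mul_zero, Real.zero_rpow (by positivity)] at h1
    exact lt_irrefl _ h1
  obtain ⟨j, hj⟩ := hex
  have hm : (0 : ℝ) < m := by
    have : 0 < m := j.pos
    exact_mod_cast this
  have h2 := (hRDI _ hfa ⟨0, by simp, by simp [fA, ha0.le]⟩).2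
  have hsum : 1 ≤ ∑ j, |fA a (ξ j)| ^ q := by
    have h := Finset.single_le_sum (f := fun j => |fA a (ξ j)| ^ q)
      (fun i _ => by positivity) (Finset.mem_univ j)
    have h' : |fA a (ξ j)| ^ q = 1 := by simp [fA, hj]
    simp only [h'] at h
    exact h
  have hc := hcont _ hfa
  have hc' : ContinuousOn (fun x => |fA a x| ^ p) (Set.Icc 0 1) :=
    hc.abs.rpow_const (fun x _ => Or.inr hp0.le)
  have i1 : IntervalIntegrable (fun x => |fA a x| ^ p) volume 0 (2 * a) := by
    apply ContinuousOn.intervalIntegrable_of_Icc (by linarith)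
    exact hc'.mono (Set.Icc_subset_Icc le_rfl (by linarith))
  have i2 : IntervalIntegrable (fun x => |fA a x| ^ p) volume (2 * a) 1 := by
    apply ContinuousOn.intervalIntegrable_of_Icc (by linarith)
    exact hc'.mono (Set.Icc_subset_Icc (by linarith) le_rfl)
  have hI0 : 0 ≤ ∫ x in (0 : ℝ)..1, |fA a x| ^ p :=
    intervalIntegral.integral_nonneg (by norm_num) (fun x _ => by positivity)
  have hI : ∫ x in (0 : ℝ)..1, |fA a x| ^ p ≤ 2 * a := by
    rw [← intervalIntegral.integral_add_adjacent_intervals i1 i2]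
    have e1 : ∫ x in (0 : ℝ)..(2 * a), |fA a x| ^ p ≤ ∫ x in (0 : ℝ)..(2 * a), (1 : ℝ) := by
      apply intervalIntegral.integral_mono_on (by linarith) i1 (by simp)
      intro x hx
      apply Real.rpow_le_one (abs_nonneg _) _ hp0.le
      unfold fA
      split_ifs with c1 c2
      · simp
      · have : x / a ≤ 2 := by rw [div_le_iff₀ ha0]; exact c2
        have : 1 ≤ x / a := by rw [le_div_iff₀ ha0]; linarith
        rw [abs_le]; constructor <;> linarith
      · simp
    have e2 : ∫ x in (2 * a)..1, |fA a x| ^ p = ∫ x in (2 * a)..1, (0 : ℝ) := by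
      apply intervalIntegral.integral_congr_ae
      filter_upwards with x hx
      rw [Set.uIoc_of_le (by linarith)] at hx
      have : fA a x = 0 := by
        unfold fA
        rw [if_neg (by linarith [hx.1]), if_neg (by linarith [hx.1])]
      rw [this, abs_zero, Real.zero_rpow hp0.ne']
    rw [e2]
    simp at e1 ⊢
    exact e1
  have h3 : (1 / (m : ℝ)) ^ (1 / q) ≤ D * (2 * a) ^ (1 / p) := by
    refine le_trans ?_ (h2.trans ?_)
    · apply Real.rpow_le_rpow (by positivity) _ (by positivity)
      exact le_mul_of_one_le_right (by positivity) hsum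
    · gcongr
  have h4 : 1 / (m : ℝ) ≤ D ^ q * (2 * a) ^ (q / p) := by
    have h := Real.rpow_le_rpow (by positivity) h3 hq0.le
    rw [← Real.rpow_mul (by positivity), one_div_mul_cancel hq0.ne', Real.rpow_one,
      Real.mul_rpow hD.le (by positivity), ← Real.rpow_mul (by positivity)] at h
    rwa [one_div_mul_eq_div] at h
  rw [Real.rpow_neg hD.le, Real.rpow_neg (by positivity), ← mul_inv, ge_iff_le]
  rw [one_div] at h4
  exact inv_le_of_inv_le₀ hm h4
end

section
/- Let (Ω,μ) be a probability space, let 2 ≤ r < p < ∞, and let X_N be a linear space of real-valued measurable functions defined at every point of Ω with finite L_p(μ)-norm, satisfying the Nikol'skii inequality ‖f‖_p ≤ M‖f‖_2 for all f ∈ X_N. Suppose points ξ^1,…,ξ^m ∈ Ω and nonnegative weights λ_1,…,λ_m with λ_1 + … + λ_m = 1 satisfy (∑_{j=1}^m λ_j |f(ξ^j)|^p)^{1/p} ≤ D‖f‖_p for every f ∈ X_N. Then (∑_{j=1}^m λ_j |f(ξ^j)|^r)^{1/r} ≤ DM‖f‖_r for every f ∈ X_N. -/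
open MeasureTheory

theorem LpNorm_mono_aux {Ω : Type*} [MeasurableSpace Ω] (μ : Measure Ω) [IsProbabilityMeasure μ]
    (s t : ℝ) (hs : 0 < s) (hst : s ≤ t) (f : Ω → ℝ)
    (his : Integrable (fun ω => |f ω| ^ s) μ) (hit : Integrable (fun ω => |f ω| ^ t) μ) :
    LpNorm μ s f ≤ LpNorm μ t f := by
  have ht : 0 < t := hs.trans_le hst
  have h1 : 1 ≤ t / s := (one_le_div hs).2 hst
  have key : ∀ x : ℝ, (|x| ^ s) ^ (t / s) = |x| ^ t := by
    intro x
    rw [← Real.rpow_mul (abs_nonneg x), mul_div_cancel₀ _ hs.ne']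
  have hI : 0 ≤ ∫ ω, |f ω| ^ s ∂μ := integral_nonneg fun ω => by positivity
  have hJ : (∫ ω, |f ω| ^ s ∂μ) ^ (t / s) ≤ ∫ ω, |f ω| ^ t ∂μ := by
    have := (convexOn_rpow h1).map_integral_le (μ := μ) (f := fun ω => |f ω| ^ s)
      (Real.continuous_rpow_const (by positivity)).continuousOn isClosed_Ici
      (Filter.Eventually.of_forall fun ω => by simp only [Set.mem_Ici]; positivity) his
      (by simpa only [Function.comp_def, key] using hit)
    simpa only [key] using this
  unfold LpNorm
  calc (∫ ω, |f ω| ^ s ∂μ) ^ (1 / s) = ((∫ ω, |f ω| ^ s ∂μ) ^ (t / s)) ^ (1 / t) := by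
        rw [← Real.rpow_mul hI]; congr 1; field_simp
    _ ≤ _ := Real.rpow_le_rpow (by positivity) hJ (by positivity)

theorem integrable_aux {Ω : Type*} [MeasurableSpace Ω] (μ : Measure Ω) [IsProbabilityMeasure μ]
    (s t : ℝ) (hs : 0 < s) (hst : s ≤ t) (f : Ω → ℝ) (hf : Measurable f)
    (hit : Integrable (fun ω => |f ω| ^ t) μ) : Integrable (fun ω => |f ω| ^ s) μ := by
  refine Integrable.mono' ((integrable_const (1 : ℝ)).add hit)
    ((hf.abs.pow_const s).aestronglyMeasurable) (Filter.Eventually.of_forall fun ω => ?_)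
  rw [Real.norm_of_nonneg (by positivity)]
  simp only [Pi.add_apply]
  rcases le_total |f ω| 1 with h | h
  · have := Real.rpow_le_one (abs_nonneg _) h hs.le
    have : 0 ≤ |f ω| ^ t := by positivity
    linarith
  · have := Real.rpow_le_rpow_of_exponent_le h hst
    linarith

/-- comment on WRDI: for `2 ≤ r < p < ∞`, the Nikol'skii inequality
`‖f‖_p ≤ M‖f‖_2` and the WRDI `(∑_j λ_j |f(ξ^j)|^p)^{1/p} ≤ D‖f‖_p` with probability weights
imply the WRDI `(∑_j λ_j |f(ξ^j)|^r)^{1/r} ≤ DM‖f‖_r`. -/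
theorem stmt_5 {Ω : Type*} [MeasurableSpace Ω] (μ : Measure Ω) [IsProbabilityMeasure μ]
    (r p : ℝ) (hr : 2 ≤ r) (hrp : r < p)
    (X : Submodule ℝ (Ω → ℝ))
    (hmeas : ∀ f ∈ X, Measurable f)
    (hfin : ∀ f ∈ X, Integrable (fun ω => |f ω| ^ p) μ)
    (M : ℝ) (hM : 0 < M)
    (hNik : ∀ f ∈ X, LpNorm μ p f ≤ M * LpNorm μ 2 f)
    (m : ℕ) (ξ : Fin m → Ω) (lam : Fin m → ℝ)
    (hlam : ∀ j, 0 ≤ lam j) (hlamsum : ∑ j, lam j = 1)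
    (D : ℝ) (hD : 0 < D)
    (hWRDI : ∀ f ∈ X, (∑ j, lam j * |f (ξ j)| ^ p) ^ (1 / p) ≤ D * LpNorm μ p f) :
    ∀ f ∈ X, (∑ j, lam j * |f (ξ j)| ^ r) ^ (1 / r) ≤ D * M * LpNorm μ r f := by
  intro f hf
  have hr0 : 0 < r := by linarith
  have hp0 : 0 < p := by linarith
  have hir := integrable_aux μ r p hr0 hrp.le f (hmeas f hf) (hfin f hf)
  have hi2 := integrable_aux μ 2 r (by norm_num) hr f (hmeas f hf) hir
  have h2r := LpNorm_mono_aux μ 2 r (by norm_num) hr f hi2 hir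
  have hS : 0 ≤ ∑ j, lam j * |f (ξ j)| ^ r :=
    Finset.sum_nonneg fun j _ => mul_nonneg (hlam j) (by positivity)
  have hJ := Real.rpow_arith_mean_le_arith_mean_rpow Finset.univ lam (fun j => |f (ξ j)| ^ r)
    (fun j _ => hlam j) hlamsum (fun j _ => by positivity) ((one_le_div hr0).2 hrp.le)
  have key : ∀ x : ℝ, (|x| ^ r) ^ (p / r) = |x| ^ p := by
    intro x
    rw [← Real.rpow_mul (abs_nonneg x), mul_div_cancel₀ _ hr0.ne']
  simp only [key] at hJ
  calc (∑ j, lam j * |f (ξ j)| ^ r) ^ (1 / r)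
      = ((∑ j, lam j * |f (ξ j)| ^ r) ^ (p / r)) ^ (1 / p) := by
        rw [← Real.rpow_mul hS]; congr 1; field_simp
    _ ≤ (∑ j, lam j * |f (ξ j)| ^ p) ^ (1 / p) :=
        Real.rpow_le_rpow (by positivity) hJ (by positivity)
    _ ≤ D * LpNorm μ p f := hWRDI f hf
    _ ≤ D * (M * LpNorm μ 2 f) := by gcongr; exact hNik f hf
    _ ≤ D * (M * LpNorm μ r f) := by gcongr
    _ = D * M * LpNorm μ r f := by ring
end

section
/- Let (Ω,μ) be a probability space, 1 ≤ p < ∞, 1 ≤ q < ∞, and let X be a set of real-valued measurable functions on Ω with finite L_p(μ)-norm. Suppose there are points ξ^1,…,ξ^m ∈ Ω and nonnegative weights λ_1,…,λ_m with λ_1 + … + λ_m ≤ C (C > 0) such that ‖f‖_p ≤ D(∑_{j=1}^m λ_j |f(ξ^j)|^q)^{1/q} for every f ∈ X. Then there exist m_0 ≤ (C²+1)m and points ζ^1,…,ζ^{m_0} ∈ Ω (each ζ^i equal to some ξ^j, repetitions allowed) such that ‖f‖_p ≤ D(C + C^{−1})^{1/q} ((1/m_0)∑_{j=1}^{m_0}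 |f(ζ^j)|^q)^{1/q} for every f ∈ X. -/
open MeasureTheory

/-- Proposition 3.1: a weighted LDI `‖f‖_p ≤ D (∑_j λ_j |f(ξ^j)|^q)^{1/q}` with
nonnegative weights summing to at most `C` yields an equal-weight LDI with `m₀ ≤ (C²+1)m`
points (each taken among the `ξ^j`) and constant `D(C + C⁻¹)^{1/q}`. -/
theorem stmt_6 {Ω : Type*} [MeasurableSpace Ω] (μ : Measure Ω) [IsProbabilityMeasure μ]
    (p q : ℝ) (hp : 1 ≤ p) (hq : 1 ≤ q)
    (X : Set (Ω → ℝ))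
    (hmeas : ∀ f ∈ X, Measurable f)
    (hfin : ∀ f ∈ X, Integrable (fun ω => |f ω| ^ p) μ)
    (m : ℕ) (ξ : Fin m → Ω) (lam : Fin m → ℝ) (hlam : ∀ j, 0 ≤ lam j)
    (C : ℝ) (hC : 0 < C) (hsum : ∑ j, lam j ≤ C)
    (D : ℝ) (hD : 0 < D)
    (hWLDI : ∀ f ∈ X, LpNorm μ p f ≤ D * (∑ j, lam j * |f (ξ j)| ^ q) ^ (1 / q)) :
    ∃ (m₀ : ℕ) (ζ : Fin m₀ → Ω),
      (m₀ : ℝ) ≤ (C ^ 2 + 1) * m ∧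
      (∀ i, ∃ j, ζ i = ξ j) ∧
      ∀ f ∈ X, LpNorm μ p f ≤ D * (C + C⁻¹) ^ (1 / q) *
        ((1 / (m₀ : ℝ)) * ∑ i, |f (ζ i)| ^ q) ^ (1 / q) := by
  classical
  set n : Fin m → ℕ := fun j => ⌈lam j * (C * m)⌉₊ with hn
  have hbound : ((∑ j, n j : ℕ) : ℝ) ≤ (C ^ 2 + 1) * m := by
    push_cast
    have h1 : ∀ j, (n j : ℝ) ≤ lam j * (C * m) + 1 := fun j =>
      (Nat.ceil_lt_add_one (mul_nonneg (hlam j) (by positivity))).le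
    calc ∑ j, (n j : ℝ) ≤ ∑ j, (lam j * (C * m) + 1) := Finset.sum_le_sum fun j _ => h1 j
      _ = (∑ j, lam j) * (C * m) + m := by
        rw [Finset.sum_add_distrib, ← Finset.sum_mul]; simp
      _ ≤ C * (C * m) + m := by gcongr
      _ = _ := by ring
  have hweight : ∀ j, lam j ≤ (C + C⁻¹) * ((1 / ((∑ j, n j : ℕ) : ℝ)) * n j) := by
    intro j
    have hm : (0 : ℝ) < m := by exact_mod_cast j.pos
    have h1 : lam j * (C * m) ≤ n j := Nat.le_ceil _
    have hle : n j ≤ ∑ j, n j := Finset.single_le_sum (fun _ _ => Nat.zero_le _) (Finset.mem_univ j)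
    rcases Nat.eq_zero_or_pos (∑ j, n j) with h0 | h0
    · have hz : n j = 0 := by omega
      rw [hz] at h1 ⊢
      have : 0 < C * m := by positivity
      simp only [Nat.cast_zero, mul_zero] at h1 ⊢
      exact nonpos_of_mul_nonpos_left h1 this
    · have h0' : (0 : ℝ) < ((∑ j, n j : ℕ) : ℝ) := by exact_mod_cast h0
      generalize ((∑ j, n j : ℕ) : ℝ) = M at *
      have e : (C + C⁻¹) * (1 / M * n j) = ((C ^ 2 + 1) * n j) / (C * M) := by
        field_simp
      rw [e, le_div_iff₀ (by positivity)]
      calc lam j * (C * M) ≤ lam j * (C * ((C ^ 2 + 1) * m)) := by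
            have := hlam j
            gcongr
        _ = (C ^ 2 + 1) * (lam j * (C * m)) := by ring
        _ ≤ _ := by gcongr
  refine ⟨∑ j, n j, fun i => ξ (finSigmaFinEquiv.symm i).1, hbound, fun i => ⟨_, rfl⟩, ?_⟩
  intro f hf
  have hs : ∑ i : Fin (∑ j, n j), |f (ξ (finSigmaFinEquiv.symm i).1)| ^ q
      = ∑ j, (n j : ℝ) * |f (ξ j)| ^ q := by
    rw [Equiv.sum_comp finSigmaFinEquiv.symm
      (fun x : (i : Fin m) × Fin (n i) => |f (ξ x.1)| ^ q), Fintype.sum_sigma]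
    simp
  have hCC : 0 ≤ C + C⁻¹ := by positivity
  rw [hs, mul_assoc, ← Real.mul_rpow hCC (by positivity)]
  refine (hWLDI f hf).trans ?_
  have h0 : 0 ≤ ∑ j, lam j * |f (ξ j)| ^ q :=
    Finset.sum_nonneg fun j _ => mul_nonneg (hlam j) (by positivity)
  refine mul_le_mul_of_nonneg_left (Real.rpow_le_rpow h0 ?_ (by positivity)) hD.le
  rw [Finset.mul_sum, Finset.mul_sum]
  refine Finset.sum_le_sum fun j _ => ?_
  calc lam j * |f (ξ j)| ^ q
      ≤ ((C + C⁻¹) * ((1 / ((∑ j, n j : ℕ) : ℝ)) * n j)) * |f (ξ j)| ^ q := by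
        gcongr
        exact hweight j
    _ = _ := by ring
end

section
/- There exists an absolute constant C > 0 with the following property: for every probability space (Ω,μ) and every N-dimensional linear space X_N of real-valued measurable functions defined at every point of Ω with finite L_2(μ)-norm, there exist points ξ^1,…,ξ^N ∈ Ω (repetitions allowed) such that ((1/N)∑_{j=1}^N |f(ξ^j)|²)^{1/2} ≤ C‖f‖_2 for every f ∈ X_N. -/
open MeasureTheory

open Matrix in
theorem aux_rank_one {n : ℕ} (M : Matrix (Fin n) (Fin n) ℝ) (hM : M.PosDef) (v : Fin n → ℝ)
    (ht : v ⬝ᵥ (M⁻¹ *ᵥ v) < 1) :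
    (M - vecMulVec v v).PosDef ∧
    (M - vecMulVec v v)⁻¹.trace = M⁻¹.trace + (v ⬝ᵥ ((M⁻¹ * M⁻¹) *ᵥ v)) / (1 - v ⬝ᵥ (M⁻¹ *ᵥ v)) := by
  have hdet : IsUnit M.det := (Matrix.isUnit_iff_isUnit_det _).1 hM.isUnit
  have hMK : M * M⁻¹ = 1 := Matrix.mul_nonsing_inv _ hdet
  have hMT : Mᵀ = M := by simpa using hM.1.eq
  have hKT : M⁻¹ᵀ = M⁻¹ := by simpa using hM.inv.1.eq
  set K := M⁻¹ with hK
  set w := K *ᵥ v with hw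
  have hMw : M *ᵥ w = v := by rw [hw, mulVec_mulVec, hMK, one_mulVec]
  have hvK : v ᵥ* K = w := by rw [← mulVec_transpose, hKT]
  set t := v ⬝ᵥ w with htd
  refine ⟨?_, ?_⟩
  · refine PosDef.of_dotProduct_mulVec_pos ?_ ?_
    · refine hM.1.sub ?_
      ext i j; simp [vecMulVec_apply, mul_comm]
    · intro x hx
      have h1 := hM.dotProduct_mulVec_pos hx
      have h2 := hM.posSemidef.dotProduct_mulVec_nonneg (x - (v ⬝ᵥ x) • w)
      have hwM : w ⬝ᵥ (M *ᵥ x) = v ⬝ᵥ x := by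
        rw [dotProduct_mulVec, ← mulVec_transpose, hMT, hMw]
      simp only [star_trivial, mulVec_sub, mulVec_smul, hMw, sub_dotProduct, dotProduct_sub,
        smul_dotProduct, dotProduct_smul, smul_eq_mul, hwM, sub_mulVec, vecMulVec_mulVec,
        dotProduct_comm x v, dotProduct_comm w v, op_smul_eq_smul] at h1 h2 ⊢
      rw [← htd] at h2
      by_cases h0 : v ⬝ᵥ x = 0
      · rw [h0]; simpa using h1
      · have : 0 < (1 - t) * (v ⬝ᵥ x)^2 := by
          have := sub_pos.2 ht
          positivity
        nlinarith
  · have hinv : (M - vecMulVec v v)⁻¹ = K + (1 / (1 - t)) • vecMulVec w w := by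
      refine inv_eq_right_inv ?_
      rw [sub_mul, mul_add, mul_add, hMK, mul_smul_comm, mul_smul_comm, mul_vecMulVec, hMw,
        vecMulVec_mul, hvK, vecMulVec_mul_vecMulVec, ← htd]
      ext i j
      have : 1 - t ≠ 0 := (sub_pos.2 ht).ne'
      simp [vecMulVec_apply]
      field_simp
      ring
    rw [hinv, trace_add, trace_smul, trace_vecMulVec, ← mulVec_mulVec, dotProduct_mulVec v K, hvK,
      smul_eq_mul]
    ring

open Matrix in
theorem aux_trace {n : ℕ} (M : Matrix (Fin n) (Fin n) ℝ) (hM : M.PosDef) :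
    (M + (3:ℝ) • (1 : Matrix (Fin n) (Fin n) ℝ)).PosDef ∧
    (M + (3:ℝ) • (1 : Matrix (Fin n) (Fin n) ℝ))⁻¹.trace +
      3 * ((M + (3:ℝ) • (1 : Matrix (Fin n) (Fin n) ℝ))⁻¹ *
        (M + (3:ℝ) • (1 : Matrix (Fin n) (Fin n) ℝ))⁻¹).trace ≤ M⁻¹.trace := by
  have hM' : (M + (3:ℝ) • (1 : Matrix (Fin n) (Fin n) ℝ)).PosDef :=
    hM.add (PosDef.one.smul (by norm_num))
  refine ⟨hM', ?_⟩
  set M' := M + (3:ℝ) • (1 : Matrix (Fin n) (Fin n) ℝ) with hMd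
  have h1 : M⁻¹ * M = 1 := nonsing_inv_mul _ ((Matrix.isUnit_iff_isUnit_det _).1 hM.isUnit)
  have h3 : M' * M'⁻¹ = 1 := mul_nonsing_inv _ ((Matrix.isUnit_iff_isUnit_det _).1 hM'.isUnit)
  have h4 : M'⁻¹ * M' = 1 := nonsing_inv_mul _ ((Matrix.isUnit_iff_isUnit_det _).1 hM'.isUnit)
  have h2 : M * M⁻¹ = 1 := mul_nonsing_inv _ ((Matrix.isUnit_iff_isUnit_det _).1 hM.isUnit)
  have hKT : M'⁻¹ᴴ = M'⁻¹ := hM'.inv.1.eq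
  have r1 : M⁻¹ = M'⁻¹ + (3:ℝ) • (M⁻¹ * M'⁻¹) := by
    calc M⁻¹ = M⁻¹ * (M' * M'⁻¹) := by rw [h3, mul_one]
      _ = _ := by rw [← mul_assoc, hMd, mul_add, h1, add_mul]; simp
  have r2 : M⁻¹ = M'⁻¹ + (3:ℝ) • (M'⁻¹ * M⁻¹) := by
    calc M⁻¹ = (M'⁻¹ * M') * M⁻¹ := by rw [h4, one_mul]
      _ = _ := by rw [mul_assoc, hMd, add_mul, h2, mul_add]; simp
  have r3 : M⁻¹ = M'⁻¹ + (3:ℝ) • (M'⁻¹ * M'⁻¹) + (9:ℝ) • (M'⁻¹ * M⁻¹ * M'⁻¹) := by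
    conv_lhs => rw [r1, r2]
    rw [add_mul, smul_add, smul_mul_assoc, smul_smul, add_assoc]
    norm_num
  have hp := (hM.inv.posSemidef.mul_mul_conjTranspose_same M'⁻¹).trace_nonneg
  rw [hKT] at hp
  conv_rhs => rw [r3]
  simp only [trace_add, trace_smul, smul_eq_mul]
  linarith

open Matrix in
theorem aux_bss {Ω : Type} (S : Set Ω) {n : ℕ} (hn : 0 < n) (v : Ω → Fin n → ℝ)
    (H : ∀ P : Matrix (Fin n) (Fin n) ℝ, P.PosSemidef → ∃ ω ∈ S, v ω ⬝ᵥ (P *ᵥ v ω) ≤ P.trace)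
    (k : ℕ) : ∃ ξ : Fin k → Ω, (∀ j, ξ j ∈ S) ∧
      (((3 * n + 3 * k : ℝ)) • (1 : Matrix (Fin n) (Fin n) ℝ)
        - ∑ j, vecMulVec (v (ξ j)) (v (ξ j))).PosDef ∧
      (((3 * n + 3 * k : ℝ)) • (1 : Matrix (Fin n) (Fin n) ℝ)
        - ∑ j, vecMulVec (v (ξ j)) (v (ξ j)))⁻¹.trace ≤ 1 / 3 := by
  have hn' : (0:ℝ) < n := by exact_mod_cast hn
  have : Nonempty (Fin n) := ⟨⟨0, hn⟩⟩
  induction k with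
  | zero =>
    refine ⟨Fin.elim0, fun j => j.elim0, ?_, ?_⟩
    · simpa using (PosDef.one (n := Fin n) (R := ℝ)).smul (by positivity : (0:ℝ) < 3 * n)
    · have : ((3 * n : ℝ) • (1 : Matrix (Fin n) (Fin n) ℝ))⁻¹ = (1 / (3 * n) : ℝ) • 1 := by
        refine inv_eq_right_inv ?_
        rw [smul_mul_smul_comm, mul_one_div_cancel (by positivity)]
        simp
      simp only [CharP.cast_eq_zero, mul_zero, add_zero, Finset.univ_eq_empty, Finset.sum_empty, sub_zero]
      rw [this, trace_smul, trace_one, Fintype.card_fin, smul_eq_mul]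
      apply le_of_eq
      field_simp
  | succ k ih =>
    obtain ⟨ξ, hS, hpd, htr⟩ := ih
    set M := ((3 * n + 3 * k : ℝ)) • (1 : Matrix (Fin n) (Fin n) ℝ)
        - ∑ j, vecMulVec (v (ξ j)) (v (ξ j)) with hM
    obtain ⟨hpd', htr'⟩ := aux_trace M hpd
    set M' := M + (3:ℝ) • (1 : Matrix (Fin n) (Fin n) ℝ) with hM'
    have hKT : M'⁻¹ᴴ = M'⁻¹ := hpd'.inv.1.eq
    have hKK : (M'⁻¹ * M'⁻¹).PosDef := by
      have := (PosDef.one (n := Fin n) (R := ℝ)).mul_mul_conjTranspose_same (B := M'⁻¹)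
        (vecMul_injective_of_isUnit hpd'.inv.isUnit)
      rwa [hKT, mul_one] at this
    have hτ := hKK.trace_pos
    set τ := (M'⁻¹ * M'⁻¹).trace
    obtain ⟨ω, hω, hle⟩ := H (M'⁻¹ + (1 / (3 * τ)) • (M'⁻¹ * M'⁻¹))
      (hpd'.inv.posSemidef.add (hKK.posSemidef.smul (by positivity)))
    rw [trace_add, trace_smul, add_mulVec, dotProduct_add, smul_mulVec, dotProduct_smul,
      smul_eq_mul, smul_eq_mul] at hle
    have ha := hpd'.inv.posSemidef.dotProduct_mulVec_nonneg (v ω)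
    have hb := hKK.posSemidef.dotProduct_mulVec_nonneg (v ω)
    rw [star_trivial] at ha hb
    have e1 : 1 / (3 * τ) * τ = 1 / 3 := by field_simp
    change _ ≤ M'⁻¹.trace + 1 / (3 * τ) * τ at hle
    rw [e1] at hle
    set b := v ω ⬝ᵥ ((M'⁻¹ * M'⁻¹) *ᵥ v ω)
    set a := v ω ⬝ᵥ (M'⁻¹ *ᵥ v ω) with had
    have hb' : 0 ≤ 1 / (3 * τ) * b := by positivity
    have hlt : a < 1 := by linarith
    obtain ⟨q1, q2⟩ := aux_rank_one M' hpd' (v ω) hlt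
    have key : ((3 * n + 3 * (k + 1 : ℕ) : ℝ)) • (1 : Matrix (Fin n) (Fin n) ℝ)
        - ∑ j, vecMulVec (v ((Fin.snoc ξ ω : Fin (k+1) → Ω) j)) (v ((Fin.snoc ξ ω : Fin (k+1) → Ω) j)) =
        M' - vecMulVec (v ω) (v ω) := by
      rw [Fin.sum_univ_castSucc, hM', hM]
      simp only [Fin.snoc_castSucc, Fin.snoc_last]
      push_cast
      module
    refine ⟨Fin.snoc ξ ω, ?_, ?_, ?_⟩
    · intro j
      refine Fin.lastCases ?_ (fun i => ?_) j
      · simpa using hω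
      · simpa using hS i
    · rw [key]; exact q1
    · rw [key, q2]
      have : b / (1 - a) ≤ 3 * τ := by
        rw [div_le_iff₀ (by linarith)]
        have : 1 / (3 * τ) * b ≤ 1 - a := by linarith
        rw [one_div_mul_eq_div, div_le_iff₀ (by positivity)] at this
        linarith
      change _ + b / (1 - a) ≤ _
      linarith

open Matrix in
theorem aux_main {Ω : Type} [MeasurableSpace Ω] (μ : Measure Ω) [IsProbabilityMeasure μ]
    (N : ℕ) (hN : 0 < N) (b : Fin N → Ω → ℝ) (hb : ∀ k, MemLp (b k) 2 μ) :
    ∃ ξ : Fin N → Ω, ∀ a : Fin N → ℝ,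
      ∑ j, (∑ k, a k * b k (ξ j)) ^ 2 ≤ 6 * N * ∫ ω, (∑ k, a k * b k ω) ^ 2 ∂μ := by
  have hint : ∀ k l, Integrable (fun ω => b k ω * b l ω) μ := fun k l =>
    (hb k).integrable_mul (hb l)
  let G : Matrix (Fin N) (Fin N) ℝ := Matrix.of fun k l => ∫ ω, b k ω * b l ω ∂μ
  have hexp : ∀ (s t : Fin N → ℝ) ω, (∑ k, s k * b k ω) * (∑ l, t l * b l ω)
      = ∑ k, ∑ l, s k * t l * (b k ω * b l ω) := by
    intro s t ω
    rw [Finset.sum_mul_sum]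
    refine Finset.sum_congr rfl fun k _ => Finset.sum_congr rfl fun l _ => by ring
  have hgi : ∀ (s t : Fin N → ℝ),
      Integrable (fun ω => (∑ k, s k * b k ω) * (∑ l, t l * b l ω)) μ := by
    intro s t
    simp only [hexp]
    exact integrable_finsetSum _ fun k _ => integrable_finsetSum _ fun l _ =>
      (hint k l).const_mul _
  have hg : ∀ (s t : Fin N → ℝ),
      ∫ ω, (∑ k, s k * b k ω) * (∑ l, t l * b l ω) ∂μ = s ⬝ᵥ (G *ᵥ t) := by
    intro s t
    simp only [hexp]
    rw [integral_finsetSum _ fun k _ => integrable_finsetSum _ fun l _ =>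
      (hint k l).const_mul _]
    simp only [dotProduct, mulVec, Finset.mul_sum]
    refine Finset.sum_congr rfl fun k _ => ?_
    rw [integral_finsetSum _ fun l _ => (hint k l).const_mul _]
    refine Finset.sum_congr rfl fun l _ => ?_
    rw [integral_const_mul]
    simp only [G, of_apply]
    ring
  have hG : G.IsHermitian := by
    ext k l
    simp [G, mul_comm]
  -- diagonalisation
  let U : Matrix (Fin N) (Fin N) ℝ := hG.eigenvectorUnitary
  let d : Fin N → ℝ := hG.eigenvalues
  have hUU : U * Uᵀ = 1 := by
    have := Unitary.coe_mul_star_self hG.eigenvectorUnitary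
    simpa [U, star_eq_conjTranspose] using this
  have hUU' : Uᵀ * U = 1 := by
    have := Unitary.coe_star_mul_self hG.eigenvectorUnitary
    simpa [U, star_eq_conjTranspose] using this
  have hGU : ∀ i, G *ᵥ (Uᵀ i) = d i • Uᵀ i := by
    intro i
    have := hG.mulVec_eigenvectorBasis i
    simpa [U, d, hG.eigenvectorUnitary_transpose_apply] using this
  have hUd : ∀ i j, Uᵀ i ⬝ᵥ Uᵀ j = if i = j then 1 else 0 := by
    intro i j
    have := congrFun (congrFun hUU' i) j
    rw [mul_apply, one_apply] at this
    simpa [dotProduct] using this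
  let e : Fin N → Ω → ℝ := fun i ω => ∑ k, Uᵀ i k * b k ω
  have hee : ∀ i j, ∫ ω, e i ω * e j ω ∂μ = if i = j then d i else 0 := by
    intro i j
    simp only [e]
    rw [hg, hGU, dotProduct_smul, hUd]
    by_cases h : i = j <;> simp [h]
  have heei : ∀ i j, Integrable (fun ω => e i ω * e j ω) μ := fun i j => hgi _ _
  have hd : ∀ i, 0 ≤ d i := by
    intro i
    have := hee i i
    rw [if_pos rfl] at this
    rw [← this]
    exact integral_nonneg fun ω => mul_self_nonneg _
  have hnull : ∀ i, d i = 0 → ∀ᵐ ω ∂μ, e i ω = 0 := by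
    intro i hi
    have h := hee i i
    rw [if_pos rfl, hi, integral_eq_zero_iff_of_nonneg (fun ω => mul_self_nonneg _) (heei i i)] at h
    filter_upwards [h] with ω hω
    simpa using hω
  have hae : ∀ᵐ ω ∂μ, ∀ i, d i = 0 → e i ω = 0 := by
    rw [ae_all_iff]
    intro i
    by_cases hi : d i = 0
    · filter_upwards [hnull i hi] with ω hω _ using hω
    · exact Filter.Eventually.of_forall fun ω h => absurd h hi
  let v : Ω → Fin N → ℝ := fun ω i => e i ω / √(d i)
  obtain ⟨ξ, hS, hpd, -⟩ := aux_bss {ω | ∀ i, d i = 0 → e i ω = 0} hN v (by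
    intro P hP
    have hvexp : ∀ ω, v ω ⬝ᵥ (P *ᵥ v ω) =
        ∑ i, ∑ j, (P i j / (√(d i) * √(d j))) * (e i ω * e j ω) := by
      intro ω
      simp only [dotProduct, mulVec, Finset.mul_sum, v]
      refine Finset.sum_congr rfl fun i _ => Finset.sum_congr rfl fun j _ => ?_
      simp only [div_eq_mul_inv, mul_inv]
      ring
    have hvi : Integrable (fun ω => v ω ⬝ᵥ (P *ᵥ v ω)) μ := by
      simp only [hvexp]
      exact integrable_finsetSum _ fun k _ => integrable_finsetSum _ fun l _ =>
        (heei k l).const_mul _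
    have hvint : ∫ ω, v ω ⬝ᵥ (P *ᵥ v ω) ∂μ ≤ P.trace := by
      simp only [hvexp]
      rw [integral_finsetSum _ fun k _ => integrable_finsetSum _ fun l _ =>
        (heei k l).const_mul _]
      refine Finset.sum_le_sum fun i _ => ?_
      rw [integral_finsetSum _ fun l _ => (heei i l).const_mul _]
      simp only [integral_const_mul, hee, mul_ite, mul_zero, Finset.sum_ite_eq, Finset.mem_univ,
        if_true, diag_apply]
      rw [Real.mul_self_sqrt (hd i)]
      by_cases h : d i = 0
      · simp [h, hP.diag_nonneg]
      · rw [div_mul_cancel₀ _ h]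
    obtain ⟨ω, h1, h2⟩ := exists_notMem_null_le_integral hvi (ae_iff.1 hae)
    refine ⟨ω, ?_, h2.trans hvint⟩
    simpa using h1) N
  refine ⟨ξ, fun a => ?_⟩
  let c : Fin N → ℝ := Uᵀ *ᵥ a
  have hUc : U *ᵥ c = a := by simp only [c]; rw [mulVec_mulVec, hUU, one_mulVec]
  have hf : ∀ ω, ∑ k, a k * b k ω = ∑ i, c i * e i ω := by
    intro ω
    conv_lhs => rw [← hUc]
    simp only [mulVec, dotProduct, e, Finset.sum_mul, Finset.mul_sum, transpose_apply]
    rw [Finset.sum_comm]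
    refine Finset.sum_congr rfl fun i _ => Finset.sum_congr rfl fun j _ => by ring
  let x : Fin N → ℝ := fun i => c i * √(d i)
  have hfx : ∀ j, ∑ k, a k * b k (ξ j) = v (ξ j) ⬝ᵥ x := by
    intro j
    rw [hf]
    refine Finset.sum_congr rfl fun i _ => ?_
    by_cases h : d i = 0
    · simp [v, x, h, hS j i h]
    · have : √(d i) ≠ 0 := by rw [Real.sqrt_ne_zero (hd i)]; exact h
      simp only [v, x]
      field_simp
  have hnorm : ∫ ω, (∑ k, a k * b k ω) ^ 2 ∂μ = x ⬝ᵥ x := by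
    simp only [hf, sq, Finset.sum_mul_sum]
    have h0 : ∀ i j, ∀ ω, c i * e i ω * (c j * e j ω) = c i * c j * (e i ω * e j ω) := by
      intros; ring
    simp only [h0]
    rw [integral_finsetSum _ fun k _ => integrable_finsetSum _ fun l _ =>
        (heei k l).const_mul _]
    refine Finset.sum_congr rfl fun i _ => ?_
    rw [integral_finsetSum _ fun l _ => (heei i l).const_mul _]
    simp only [integral_const_mul, hee, mul_ite, mul_zero, Finset.sum_ite_eq, Finset.mem_univ,
        if_true, x]
    nth_rewrite 1 [← Real.mul_self_sqrt (hd i)]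
    ring
  have hx := hpd.posSemidef.dotProduct_mulVec_nonneg x
  rw [star_trivial, sub_mulVec, smul_mulVec, one_mulVec, dotProduct_sub, dotProduct_smul,
    sum_mulVec, dotProduct_sum, smul_eq_mul] at hx
  simp only [vecMulVec_mulVec, op_smul_eq_smul, dotProduct_smul, smul_eq_mul] at hx
  rw [hnorm]
  have : ∑ j, (∑ k, a k * b k (ξ j)) ^ 2 = ∑ j, v (ξ j) ⬝ᵥ x * x ⬝ᵥ v (ξ j) := by
    refine Finset.sum_congr rfl fun j _ => ?_
    rw [hfx, dotProduct_comm x, sq]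
  rw [this]
  linarith

/-- Proposition 4.1, via Lunin: there is an absolute constant `C > 0` such that
every `N`-dimensional subspace `X_N ⊂ L_2` of a probability space satisfies
`X_N ∈ RD(N,2,2,C)`: there are `N` points with `((1/N)∑_j |f(ξ^j)|²)^{1/2} ≤ C‖f‖_2`. -/
theorem stmt_8 :
    ∃ C : ℝ, 0 < C ∧
      ∀ (Ω : Type) [MeasurableSpace Ω], ∀ (μ : Measure Ω) [IsProbabilityMeasure μ],
        ∀ (N : ℕ) (X : Submodule ℝ (Ω → ℝ)), Module.finrank ℝ X = N →
          (∀ f ∈ X, Measurable f) →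
          (∀ f ∈ X, Integrable (fun ω => |f ω| ^ (2 : ℝ)) μ) →
          ∃ ξ : Fin N → Ω, ∀ f ∈ X,
            ((1 / (N : ℝ)) * ∑ j, |f (ξ j)| ^ (2 : ℝ)) ^ ((1 : ℝ) / 2)
              ≤ C * LpNorm μ 2 f := by
  refine ⟨√6, by positivity, ?_⟩
  intro Ω _ μ _ N X hX hm hi
  rcases Nat.eq_zero_or_pos N with rfl | hN
  · refine ⟨Fin.elim0, fun f _ => ?_⟩
    have : 0 ≤ LpNorm μ 2 f := by
      unfold LpNorm
      exact Real.rpow_nonneg (integral_nonneg fun ω => by positivity) _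
    simp only [Finset.univ_eq_empty, Finset.sum_empty, mul_zero]
    rw [Real.zero_rpow (by norm_num)]
    positivity
  have : FiniteDimensional ℝ X := Module.finite_of_finrank_pos (by omega)
  let B := Module.finBasisOfFinrankEq ℝ X hX
  obtain ⟨ξ, hξ⟩ := aux_main μ N hN (fun k => (B k : Ω → ℝ)) (by
    intro k
    rw [memLp_two_iff_integrable_sq (hm _ (B k).2).aestronglyMeasurable]
    simpa using hi _ (B k).2)
  refine ⟨ξ, fun f hf => ?_⟩
  have hrep : ∀ ω, ∑ k, B.repr ⟨f, hf⟩ k * (B k : Ω → ℝ) ω = f ω := by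
    intro ω
    have h := congrArg (fun g : X => (g : Ω → ℝ) ω) (B.sum_repr ⟨f, hf⟩)
    dsimp only at h
    rw [← h, Submodule.coe_sum, Finset.sum_apply]
    rfl
  have h := hξ (fun k => B.repr ⟨f, hf⟩ k)
  simp only [hrep] at h
  unfold LpNorm
  simp only [Real.rpow_two, sq_abs]
  rw [← Real.sqrt_eq_rpow, ← Real.sqrt_eq_rpow, ← Real.sqrt_mul (by norm_num)]
  refine Real.sqrt_le_sqrt ?_
  have hN' : (0:ℝ) < N := by exact_mod_cast hN
  rw [one_div_mul_eq_div, div_le_iff₀ hN']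
  linarith
end

section
/- Let 1 ≤ p < ∞, let Ω be a compact subset of ℝ^d with a Borel probability measure μ, and let X_N be an N-dimensional subspace of C(Ω). Assume: (A1) points ξ^1,…,ξ^m ∈ Ω and positive weights w_1,…,w_m satisfy ‖u‖_p ≤ D(∑_{j=1}^m w_j |u(ξ^j)|^p)^{1/p} for all u ∈ X_N; (A2) ∑_{j=1}^m w_j ≤ W; and the Nikol'skii inequality ‖u‖_∞ ≤ M‖u‖_p holds for all u ∈ X_N. Then for every f ∈ C(Ω) and every u ∈ X_N satisfying (∑_{j=1}^m w_j |f(ξ^j) − u(ξ^j)|^p)^{1/p} ≤ (∑_{j=1}^m w_j |f(ξ^j) − g(ξ^j)|^p)^{1/p} for all g ∈ X_N, one has ‖f − u‖_∞ ≤ (2MDW^{1/p} + 1) d(f, X_N)_∞. -/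
open MeasureTheory

/-- The uniform norm `sup_ω |f ω|`. -/
noncomputable def supNorm {Ω : Type*} (f : Ω → ℝ) : ℝ :=
  ⨆ ω, |f ω|

/-- The best uniform approximation `d(f, X)_∞ = inf_{g ∈ X} ‖f - g‖_∞`. -/
noncomputable def distInfty {Ω : Type*} [TopologicalSpace Ω]
    (f : C(Ω, ℝ)) (X : Submodule ℝ C(Ω, ℝ)) : ℝ :=
  ⨅ g : X, supNorm (fun ω => f ω - (g : C(Ω, ℝ)) ω)

theorem wMink {m : ℕ} (w : Fin m → ℝ) (hw : ∀ j, 0 < w j) (p : ℝ) (hp : 1 ≤ p)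
    (a b : Fin m → ℝ) :
    (∑ j, w j * |a j + b j| ^ p) ^ (1 / p) ≤
      (∑ j, w j * |a j| ^ p) ^ (1 / p) + (∑ j, w j * |b j| ^ p) ^ (1 / p) := by
  have key : ∀ (j : Fin m) (x : ℝ), |w j ^ (1 / p) * x| ^ p = w j * |x| ^ p := by
    intro j x
    have h0 := (hw j).le
    rw [abs_mul, abs_of_nonneg (Real.rpow_nonneg h0 _),
      Real.mul_rpow (Real.rpow_nonneg h0 _) (abs_nonneg _), ← Real.rpow_mul h0,
      one_div_mul_cancel (by linarith), Real.rpow_one]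
  have := Real.Lp_add_le Finset.univ (fun j => w j ^ (1 / p) * a j)
    (fun j => w j ^ (1 / p) * b j) hp
  simpa only [← mul_add, key] using this

/-- Theorem 5.1: under the weighted LDI (A1), the weight bound (A2) and the
Nikol'skii inequality `‖u‖_∞ ≤ M‖u‖_p`, any minimizer `u ∈ X_N` of the discrete weighted
`ℓ_p` distance to the data of `f` satisfies `‖f - u‖_∞ ≤ (2MDW^{1/p} + 1) d(f,X_N)_∞`. -/
theorem stmt_10 (d : ℕ) (Ω : Set (Fin d → ℝ)) (hΩ : IsCompact Ω)
    (μ : Measure Ω) [IsProbabilityMeasure μ]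
    (p : ℝ) (hp : 1 ≤ p)
    (N : ℕ) (X : Submodule ℝ C(Ω, ℝ)) (hdim : Module.finrank ℝ X = N)
    (m : ℕ) (ξ : Fin m → Ω) (w : Fin m → ℝ) (hw : ∀ j, 0 < w j)
    (D : ℝ) (hD : 0 < D)
    (hA1 : ∀ u ∈ X, LpNorm μ p ⇑u ≤ D * (∑ j, w j * |u (ξ j)| ^ p) ^ (1 / p))
    (W : ℝ) (hW : 0 < W) (hA2 : ∑ j, w j ≤ W)
    (M : ℝ) (hM : 0 < M)
    (hNik : ∀ u ∈ X, supNorm ⇑u ≤ M * LpNorm μ p ⇑u)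
    (f : C(Ω, ℝ)) (u : C(Ω, ℝ)) (hu_mem : u ∈ X)
    (hu_min : ∀ g ∈ X,
      (∑ j, w j * |f (ξ j) - u (ξ j)| ^ p) ^ (1 / p)
        ≤ (∑ j, w j * |f (ξ j) - g (ξ j)| ^ p) ^ (1 / p)) :
    supNorm (fun ω => f ω - u ω) ≤ (2 * M * D * W ^ (1 / p) + 1) * distInfty f X := by
  have : CompactSpace Ω := isCompact_iff_compactSpace.mp hΩ
  have hbdd : ∀ h : C(Ω, ℝ), ∀ ω, |h ω| ≤ supNorm ⇑h := by
    intro h ω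
    refine le_ciSup (f := fun ω => |h ω|) ?_ ω
    refine ⟨‖h‖, ?_⟩
    rintro _ ⟨x, rfl⟩
    exact h.norm_coe_le_norm x
  have hp0 : 0 < p := by linarith
  have hK : 0 ≤ 2 * M * D * W ^ (1 / p) + 1 := by positivity
  unfold distInfty
  rw [Real.mul_iInf_of_nonneg hK]
  refine le_ciInf ?_
  rintro ⟨g, hg⟩
  change _ ≤ _ * supNorm (fun ω => f ω - g ω)
  set e := supNorm (fun ω => f ω - g ω) with he
  have he0 : 0 ≤ e := Real.iSup_nonneg fun _ => abs_nonneg _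
  have hfg : ∀ ω, |f ω - g ω| ≤ e := fun ω => hbdd (f - g) ω
  have hS : (∑ j, w j * |f (ξ j) - g (ξ j)| ^ p) ^ (1 / p) ≤ W ^ (1 / p) * e := by
    have h1 : ∑ j, w j * |f (ξ j) - g (ξ j)| ^ p ≤ W * e ^ p := by
      calc _ ≤ ∑ j, w j * e ^ p := by
            refine Finset.sum_le_sum fun j _ => ?_
            exact mul_le_mul_of_nonneg_left
              (Real.rpow_le_rpow (abs_nonneg _) (hfg _) hp0.le) (hw j).le
        _ = (∑ j, w j) * e ^ p := by rw [Finset.sum_mul]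
        _ ≤ _ := mul_le_mul_of_nonneg_right hA2 (Real.rpow_nonneg he0 _)
    have h0 : 0 ≤ ∑ j, w j * |f (ξ j) - g (ξ j)| ^ p :=
      Finset.sum_nonneg fun j _ => mul_nonneg (hw j).le (Real.rpow_nonneg (abs_nonneg _) _)
    refine (Real.rpow_le_rpow h0 h1 (by positivity)).trans (le_of_eq ?_)
    rw [Real.mul_rpow hW.le (Real.rpow_nonneg he0 _), ← Real.rpow_mul he0,
      mul_one_div_cancel hp0.ne', Real.rpow_one]
  have hgu : g - u ∈ X := X.sub_mem hg hu_mem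
  have hT : (∑ j, w j * |(g - u) (ξ j)| ^ p) ^ (1 / p) ≤ 2 * (W ^ (1 / p) * e) := by
    have h := wMink w hw p hp (fun j => f (ξ j) - u (ξ j)) (fun j => g (ξ j) - f (ξ j))
    have h2 := hu_min g hg
    have e1 : ∀ j, (f (ξ j) - u (ξ j)) + (g (ξ j) - f (ξ j)) = (g - u) (ξ j) := by
      intro j
      simp
    have e2 : ∀ j, |g (ξ j) - f (ξ j)| = |f (ξ j) - g (ξ j)| := fun j => abs_sub_comm _ _
    simp only [e1, e2] at h
    linarith
  have hN : supNorm ⇑(g - u) ≤ M * (D * (2 * (W ^ (1 / p) * e))) :=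
    (hNik _ hgu).trans (mul_le_mul_of_nonneg_left
      ((hA1 _ hgu).trans (mul_le_mul_of_nonneg_left hT hD.le)) hM.le)
  refine Real.iSup_le (fun ω => ?_) (mul_nonneg hK he0)
  have h1 := hfg ω
  have h2 : |g ω - u ω| ≤ _ := hbdd (g - u) ω
  have h3 := abs_sub_le (f ω) (g ω) (u ω)
  linarith
end

section
/- Let p ∈ [1,∞), let Ω be a compact subset of ℝ^d with a Borel probability measure μ, and let X_N be a finite-dimensional subspace of C(Ω). Assume points ξ^1,…,ξ^m ∈ Ω are such that ‖u‖_p ≤ D max_{1≤j≤m}|u(ξ^j)| for all u ∈ X_N. Then for every f ∈ C(Ω) and every u ∈ X_N satisfying max_{1≤j≤m}|f(ξ^j) − u(ξ^j)| ≤ max_{1≤j≤m}|f(ξ^j) − g(ξ^j)| for all g ∈ X_N, one has ‖f − u‖_p ≤ (2D + 1) d(f, X_N)_∞. -/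
open MeasureTheory

lemma LpNorm_eq_aux {Ω : Type*} [TopologicalSpace Ω] [CompactSpace Ω] [MeasurableSpace Ω]
    [BorelSpace Ω] (μ : Measure Ω) [IsProbabilityMeasure μ] (p : ℝ) (hp : 1 ≤ p) (f : C(Ω, ℝ)) :
    MemLp (⇑f) (ENNReal.ofReal p) μ ∧
    LpNorm μ p ⇑f = (eLpNorm (⇑f) (ENNReal.ofReal p) μ).toReal := by
  have hm : MemLp (⇑f) (ENNReal.ofReal p) μ := by
    refine MemLp.of_bound f.continuous.measurable.aestronglyMeasurable ‖f‖ ?_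
    exact Filter.Eventually.of_forall fun x => f.norm_coe_le_norm x
  refine ⟨hm, ?_⟩
  have hp0 : 0 < p := by linarith
  rw [hm.eLpNorm_eq_integral_rpow_norm (by simpa using hp0) ENNReal.ofReal_ne_top,
    ENNReal.toReal_ofReal hp0.le, ENNReal.toReal_ofReal (by positivity)]
  simp [LpNorm]

/-- Theorem 5.2: if `‖u‖_p ≤ D max_j |u(ξ^j)|` for all `u ∈ X_N`
(the LDI(p,∞) assumption), then any minimizer `u ∈ X_N` of the discrete uniform distance
`max_j |f(ξ^j) - u(ξ^j)|` satisfies `‖f - u‖_p ≤ (2D + 1) d(f,X_N)_∞`. -/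
theorem stmt_11 (d : ℕ) (Ω : Set (Fin d → ℝ)) (hΩ : IsCompact Ω)
    (μ : Measure Ω) [IsProbabilityMeasure μ]
    (p : ℝ) (hp : 1 ≤ p)
    (X : Submodule ℝ C(Ω, ℝ)) (hfd : FiniteDimensional ℝ X)
    (m : ℕ) (ξ : Fin m → Ω)
    (D : ℝ) (hD : 0 < D)
    (hLDI : ∀ u ∈ X, LpNorm μ p ⇑u ≤ D * ⨆ j, |u (ξ j)|)
    (f : C(Ω, ℝ)) (u : C(Ω, ℝ)) (hu_mem : u ∈ X)
    (hu_min : ∀ g ∈ X,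
      (⨆ j, |f (ξ j) - u (ξ j)|) ≤ ⨆ j, |f (ξ j) - g (ξ j)|) :
    LpNorm μ p (fun ω => f ω - u ω) ≤ (2 * D + 1) * distInfty f X := by
  have : CompactSpace Ω := isCompact_iff_compactSpace.mp hΩ
  have : Nonempty Ω := nonempty_of_isProbabilityMeasure μ
  unfold distInfty
  have hc : 0 < 2 * D + 1 := by linarith
  rw [← div_le_iff₀' hc]
  refine le_ciInf fun g => ?_
  rw [div_le_iff₀' hc]
  obtain ⟨g, hg⟩ := g
  simp only
  set S := supNorm (fun ω => f ω - g ω) with hS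
  have hb : ∀ ω, |f ω - g ω| ≤ S := fun ω => by
    refine le_ciSup (f := fun ω => |f ω - g ω|) ?_ ω
    refine ⟨‖f - g‖, ?_⟩
    rintro _ ⟨x, rfl⟩
    exact (f - g).norm_coe_le_norm x
  have hS0 : 0 ≤ S := Real.iSup_nonneg fun _ => abs_nonneg _
  have hp0 : 0 < p := by linarith
  have h1 : LpNorm μ p ⇑(f - g) ≤ S := by
    rw [(LpNorm_eq_aux μ p hp (f - g)).2]
    refine ENNReal.toReal_le_of_le_ofReal hS0 ?_
    refine (eLpNorm_le_of_ae_bound (C := S) (Filter.Eventually.of_forall hb)).trans ?_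
    simp
  have hmin : (⨆ j, |f (ξ j) - u (ξ j)|) ≤ S :=
    (hu_min g hg).trans (Real.iSup_le (fun j => hb _) hS0)
  have h2 : LpNorm μ p ⇑(g - u) ≤ D * (2 * S) := by
    refine (hLDI _ (X.sub_mem hg hu_mem)).trans ?_
    refine mul_le_mul_of_nonneg_left (Real.iSup_le (fun j => ?_) (by linarith)) hD.le
    have h3 : |f (ξ j) - u (ξ j)| ≤ S :=
      (le_ciSup (f := fun j => |f (ξ j) - u (ξ j)|) (Set.finite_range _).bddAbove j).trans hmin
    have h4 := hb (ξ j)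
    simp only [ContinuousMap.sub_apply]
    rw [abs_le] at *
    constructor <;> linarith
  have h5 : LpNorm μ p ⇑(f - u) ≤ LpNorm μ p ⇑(f - g) + LpNorm μ p ⇑(g - u) := by
    obtain ⟨m1, e1⟩ := LpNorm_eq_aux μ p hp (f - g)
    obtain ⟨m2, e2⟩ := LpNorm_eq_aux μ p hp (g - u)
    rw [(LpNorm_eq_aux μ p hp (f - u)).2, e1, e2,
      ← ENNReal.toReal_add m1.eLpNorm_ne_top m2.eLpNorm_ne_top]
    refine ENNReal.toReal_mono (ENNReal.add_ne_top.2 ⟨m1.eLpNorm_ne_top, m2.eLpNorm_ne_top⟩) ?_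
    have : (⇑(f - u) : Ω → ℝ) = ⇑(f - g) + ⇑(g - u) := by ext x; simp
    rw [this]
    exact eLpNorm_add_le m1.1 m2.1 (by simpa using hp)
  change LpNorm μ p ⇑(f - u) ≤ _
  linarith
end

section
/- There exist absolute positive constants C_1, C_2, C_3 with the following property. Let Ω ⊂ ℝ^d be a nonempty set with a probability measure μ, let t > 0, and let X_N be an N-dimensional linear space of bounded measurable real-valued functions on Ω satisfying the Nikol'skii inequality ‖f‖_∞ ≤ t N^{1/2} ‖f‖_2 for all f ∈ X_N. Then there exists a set of m ≤ C_1 t² N points ξ^1,…,ξ^m ∈ Ω such that for every f ∈ X_N both ‖f‖_∞ ≤ C_2^{−1/2} t N^{1/2} ((1/m)∑_{j=1}^m |f(ξ^j)|²)^{1/2} and C_2‖f‖_2² ≤ (1/m)∑_{j=1}^m |f(ξ^j)|² ≤ C_3 t² ‖f‖_2² hold. -/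
open MeasureTheory

section realpart
variable {κ : Type*} [DecidableEq κ]

/-- discrete partial derivative -/
def rD (k : κ) (p : (κ → ℝ) → ℝ) (x : κ → ℝ) : ℝ := p (x + Pi.single k 1) - p x

/-- multi-affine with the Rayleigh property -/
structure Ray (p : (κ → ℝ) → ℝ) : Prop where
  aff : ∀ x k (c : ℝ), p (x + Pi.single k c) = p x + c * rD k p x
  ray : ∀ x i j, p x * rD j (rD i p) x ≤ rD i p x * rD j p x

def Above (p : (κ → ℝ) → ℝ) (a : κ → ℝ) : Prop := ∀ x, a ≤ x → 0 < p x

/-- average of two shifts -/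
noncomputable def rav (y z : κ) (p : (κ → ℝ) → ℝ) (x : κ → ℝ) : ℝ :=
  (p (x - Pi.single y 1) + p (x - Pi.single z 1)) / 2

lemma Ray.affD {p : (κ → ℝ) → ℝ} (h : Ray p) (u : κ) (x k) (c : ℝ) :
    rD u p (x + Pi.single k c) = rD u p x + c * rD k (rD u p) x := by
  have h1 := h.aff (x + Pi.single u 1) k c
  have h2 := h.aff x k c
  have e : x + Pi.single k c + Pi.single u 1 = x + Pi.single u 1 + Pi.single k c := by abel
  have e' : x + Pi.single k 1 + Pi.single u 1 = x + Pi.single u 1 + Pi.single k (1:ℝ) := by abel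
  simp only [rD] at *
  rw [e, e', h1, h2]; ring

lemma rD_comm (k l : κ) (q : (κ → ℝ) → ℝ) (x) : rD k (rD l q) x = rD l (rD k q) x := by
  have : x + Pi.single k 1 + Pi.single l 1 = x + Pi.single l 1 + Pi.single k (1:ℝ) := by abel
  simp only [rD, this]; ring

lemma aff_rD {q : (κ → ℝ) → ℝ} (h : ∀ x k (c : ℝ), q (x + Pi.single k c) = q x + c * rD k q x)
    (u : κ) (x k) (c : ℝ) :
    rD u q (x + Pi.single k c) = rD u q x + c * rD k (rD u q) x := by
  have h1 := h (x + Pi.single u 1) k c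
  have h2 := h x k c
  have e : x + Pi.single k c + Pi.single u 1 = x + Pi.single u 1 + Pi.single k c := by abel
  have e' : x + Pi.single k 1 + Pi.single u 1 = x + Pi.single u 1 + Pi.single k (1:ℝ) := by abel
  simp only [rD] at *
  rw [e, e', h1, h2]; ring

lemma aff_same {q : (κ → ℝ) → ℝ} (h : ∀ x k (c : ℝ), q (x + Pi.single k c) = q x + c * rD k q x)
    (u : κ) (x) : rD u (rD u q) x = 0 := by
  have h1 := h x u 2
  have e : x + Pi.single u 1 + Pi.single u 1 = x + Pi.single u (2:ℝ) := by
    rw [add_assoc, ← Pi.single_add]; norm_num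
  simp only [rD] at *
  rw [e, h1]; ring

lemma aff_line {q : (κ → ℝ) → ℝ} (h : ∀ x k (c : ℝ), q (x + Pi.single k c) = q x + c * rD k q x)
    (y z : κ) (x) (s : ℝ) :
    q (x + Pi.single y s + Pi.single z s) =
      q x + (rD y q x + rD z q x) * s + rD z (rD y q) x * s ^ 2 := by
  rw [h, aff_rD h, h, rD_comm y z]; ring

lemma aff_line2 {q : (κ → ℝ) → ℝ} (h : ∀ x k (c : ℝ), q (x + Pi.single k c) = q x + c * rD k q x)
    (y z : κ) (x) (s : ℝ) :
    rD z q (x + Pi.single y s + Pi.single z s) = rD z q x + rD z (rD y q) x * s := by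
  rw [aff_rD h, aff_same h, aff_rD h, rD_comm]; ring

lemma aff_line1 {q : (κ → ℝ) → ℝ} (h : ∀ x k (c : ℝ), q (x + Pi.single k c) = q x + c * rD k q x)
    (y z : κ) (x) (s : ℝ) :
    rD y q (x + Pi.single y s + Pi.single z s) = rD y q x + rD z (rD y q) x * s := by
  rw [add_right_comm, aff_line2 h z y, rD_comm]

lemma num_aux {η P B d q K M : ℝ} (h0 : 0 ≤ η) (h1 : η ≤ 1/2) (hPpos : 0 < P) (hd : 0 ≤ d)
    (hB0 : 0 ≤ B) (hBη : B ≤ η * P)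
    (hquad : ∀ s : ℝ, 0 ≤ (d * K - B * M) * (s * s) + (2 * (d * q - M * P)) * s + (B * q - K * P)) :
    (q - K / 2) * (P + B * -(1/2+η) + d * (-(1/2+η))^2) ≤
      (q + K * -(1/2+η) + M * (-(1/2+η))^2) * (P - B / 2) := by
  have hdisc := discrim_le_zero hquad
  rw [discrim] at hdisc
  have hX0 : 0 ≤ B * q - K * P := by have := hquad 0; linarith
  have hid : d * (B * q - K * P) - B * (d * q - M * P) + P * (d * K - B * M) = 0 := by ring
  have e : (q - K / 2) * (P + B * -(1/2+η) + d * (-(1/2+η))^2) -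
      (q + K * -(1/2+η) + M * (-(1/2+η))^2) * (P - B / 2) =
        -η * (B * q - K * P) + (1/2+η)^2 * (d * q - M * P) - (1/2+η)^2 / 2 * (d * K - B * M) := by
    ring
  rw [← sub_nonpos, e]
  clear hquad e
  generalize B * q - K * P = X at *
  generalize d * q - M * P = Y at *
  generalize d * K - B * M = Z at *
  have hYZ : Y ^ 2 ≤ X * Z := by linarith
  clear hdisc
  have hYX : Y ≤ η * X := by
    by_contra hc
    push Not at hc
    have hYpos : 0 < Y := lt_of_le_of_lt (by positivity) hc
    have hZ1 : P * Z ≤ P * (η * Y) := by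
      have := mul_nonneg hd hX0
      have := mul_le_mul_of_nonneg_right hBη hYpos.le
      linarith
    have hZ2 : Z ≤ η * Y := le_of_mul_le_mul_left hZ1 hPpos
    have : Y * Y ≤ Y * (η * X) := by
      have := mul_le_mul_of_nonneg_left hZ2 hX0
      linarith
    have := le_of_mul_le_mul_left this hYpos
    linarith
  have hZ0 : 0 ≤ Z := by
    by_contra hc
    push Not at hc
    have hX00 : X = 0 := by
      by_contra hne
      have : 0 < X := lt_of_le_of_ne hX0 (Ne.symm hne)
      have := mul_neg_of_pos_of_neg this hc
      linarith [sq_nonneg Y]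
    rw [hX00, zero_mul] at hYZ
    have hY0 : Y = 0 := by
      apply pow_eq_zero_iff (two_ne_zero) |>.1
      exact le_antisymm hYZ (sq_nonneg Y)
    rw [hX00, hY0] at hid
    have := mul_neg_of_pos_of_neg hPpos hc
    linarith
  have h5 : (1/2+η)^2 ≤ 1 := by nlinarith
  have h6 : (1/2+η)^2 * Y ≤ η * X := by
    have h8 : 0 ≤ η * X := by positivity
    have := mul_le_mul_of_nonneg_left hYX (sq_nonneg (1/2+η))
    have := mul_le_mul_of_nonneg_right h5 h8
    linarith
  have h7 : 0 ≤ (1/2+η)^2 / 2 * Z := by positivity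
  linarith

lemma nonneg_of_affine {a b : ℝ} (h : ∀ s, 0 ≤ s → 0 < a + s * b) : 0 ≤ b := by
  by_contra hb
  push Not at hb
  have ha := h 0 le_rfl
  have := h (a / (-b)) (by apply div_nonneg <;> linarith)
  have e : a / (-b) * b = -a := by
    rw [div_neg, neg_mul, div_mul_cancel₀ _ hb.ne]
  rw [e] at this; linarith

lemma Ray.D_nonneg {p : (κ → ℝ) → ℝ} (h : Ray p) {a : κ → ℝ} (ha : Above p a) {x} (hx : a ≤ x)
    (k : κ) : 0 ≤ rD k p x := by
  apply nonneg_of_affine (a := p x)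
  intro s hs
  rw [← h.aff]
  apply ha
  intro i
  have := hx i
  have h0 : (0:ℝ) ≤ (Pi.single k s : κ → ℝ) i := by
    rw [Pi.single_apply]; split_ifs <;> simp [hs]
  simp only [Pi.add_apply]; linarith

lemma Ray.step {p : (κ → ℝ) → ℝ} (h : Ray p) {a : κ → ℝ} (ha : Above p a) {x} (hx : a ≤ x)
    (k u : κ) {c β : ℝ} (hc : 0 ≤ c) (hb : rD u p x ≤ β * p x) :
    rD u p (x + Pi.single k c) ≤ β * p (x + Pi.single k c) := by
  rw [h.affD, h.aff]
  have h1 := h.ray x u k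
  have h2 := h.D_nonneg ha hx k
  have h3 := ha x hx
  have : rD k (rD u p) x ≤ β * rD k p x := by
    have : p x * rD k (rD u p) x ≤ p x * (β * rD k p x) := by nlinarith
    exact le_of_mul_le_mul_left this h3
  nlinarith

lemma Ray.mono [Fintype κ] {p : (κ → ℝ) → ℝ} (h : Ray p) {a : κ → ℝ} (ha : Above p a) {x} (hx : a ≤ x)
    (u : κ) {β : ℝ} (hb : rD u p a ≤ β * p a) :
    rD u p x ≤ β * p x := by
  have key : ∀ s : Finset κ, rD u p (s.piecewise x a) ≤ β * p (s.piecewise x a) := by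
    intro s
    induction s using Finset.induction_on with
    | empty => simpa using hb
    | insert k s hk ih =>
      have e : (insert k s).piecewise x a = s.piecewise x a + Pi.single k (x k - a k) := by
        ext i
        by_cases hi : i = k
        · subst hi; simp [hk]
        · simp [Finset.piecewise, hi]
      rw [e]
      refine h.step ha ?_ k u (by linarith [hx k]) ih
      intro i
      by_cases hi : i ∈ s <;> simp [hi, hx i]
  simpa using key Finset.univ

lemma Ray.barrier [Fintype κ] {p : (κ → ℝ) → ℝ} (h : Ray p) {a : κ → ℝ} (ha : Above p a) {y z : κ}
    {η : ℝ} (h0 : 0 ≤ η) (h1 : η ≤ 1/2)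
    (hy : rD y p a ≤ η / 2 * p a) (hz : rD z p a ≤ η / 2 * p a) :
    Above (rav y z p) (a + Pi.single y (1/2 + η) + Pi.single z (1/2+η)) ∧
    ∀ u β, rD u p a ≤ β * p a →
      rD u (rav y z p) (a + Pi.single y (1/2 + η) + Pi.single z (1/2+η)) ≤
        β * rav y z p (a + Pi.single y (1/2 + η) + Pi.single z (1/2+η)) := by
  have hrav : ∀ x, rav y z p x = p x - (rD y p x + rD z p x) / 2 := by
    intro x
    have e1 := h.aff x y (-1)
    have e2 := h.aff x z (-1)
    rw [Pi.single_neg, ← sub_eq_add_neg] at e1 e2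
    rw [rav, e1, e2]; ring
  have hsn : ∀ (k i : κ), (0:ℝ) ≤ (Pi.single k (1/2+η) : κ → ℝ) i := by
    intro k i
    rw [Pi.single_apply]; split_ifs <;> linarith
  set a' := a + Pi.single y (1/2 + η) + Pi.single z (1/2+η) with ha'
  have haa : a ≤ a' := by
    intro i
    have := hsn y i
    have := hsn z i
    simp only [ha', Pi.add_apply]; linarith
  have habove : Above (rav y z p) a' := by
    intro x hx
    have h3 := h.mono ha (haa.trans hx) y hy
    have h4 := h.mono ha (haa.trans hx) z hz
    have h5 := ha x (haa.trans hx)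
    rw [hrav]
    nlinarith
  refine ⟨habove, ?_⟩
  intro u β hu
  -- expansions around a'
  have hq := aff_rD h.aff u
  have line := aff_line h.aff y z a'
  have lineD := aff_line hq y z a'
  have hDrav : rD u (rav y z p) a' = rD u p a' - (rD y (rD u p) a' + rD z (rD u p) a') / 2 := by
    rw [rD_comm y u, rD_comm z u]
    conv_lhs => rw [rD, hrav, hrav]
    simp only [rD]; ring
  have hback : a' + Pi.single y (-(1/2+η)) + Pi.single z (-(1/2+η)) = a := by
    simp only [ha', Pi.single_neg]; abel
  have hpa := line (-(1/2+η))
  have hqa := lineD (-(1/2+η))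
  rw [hback] at hpa hqa
  rw [hDrav, hrav]
  have hPpos := ha a' haa
  have hB1 := h.mono ha haa y hy
  have hB2 := h.mono ha haa z hz
  have hrap := habove a' le_rfl
  rw [hrav] at hrap
  have hpapos := ha a le_rfl
  have hBy := h.D_nonneg ha haa y
  have hBz := h.D_nonneg ha haa z
  have hquad : ∀ s : ℝ, 0 ≤
     (rD z (rD y p) a' * (rD y (rD u p) a' + rD z (rD u p) a') - (rD y p a' + rD z p a') *
        rD z (rD y (rD u p)) a') * (s * s) +
     (2 * (rD z (rD y p) a' * rD u p a' - rD z (rD y (rD u p)) a' * p a')) * s +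
     ((rD y p a' + rD z p a') * rD u p a' - (rD y (rD u p) a' + rD z (rD u p) a') * p a') := by
    intro s
    have r1 := h.ray (a' + Pi.single y s + Pi.single z s) u y
    have r2 := h.ray (a' + Pi.single y s + Pi.single z s) u z
    rw [aff_line1 hq, aff_line1 h.aff, line, lineD] at r1
    rw [aff_line2 hq, aff_line2 h.aff, line, lineD] at r2
    nlinarith
  have hd : 0 ≤ rD z (rD y p) a' := by
    have hx : ∀ s, 0 ≤ s → 0 ≤ rD y p a' + s * rD z (rD y p) a' := by
      intro s hs
      have := h.D_nonneg ha (x := a' + Pi.single z s) (by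
        intro i
        have := haa i
        have h0 : (0:ℝ) ≤ (Pi.single z s : κ → ℝ) i := by
          rw [Pi.single_apply]; split_ifs <;> simp [hs]
        simp only [Pi.add_apply]; linarith) y
      rwa [aff_rD h.aff] at this
    apply nonneg_of_affine (a := rD y p a' + 1)
    intro s hs
    linarith [hx s hs]
  generalize rD z (rD y p) a' = d at *
  generalize rD z (rD y (rD u p)) a' = M at *
  generalize rD y (rD u p) a' + rD z (rD u p) a' = K at *
  have hBη : rD y p a' + rD z p a' ≤ η * p a' := by linarith
  have hB0 : 0 ≤ rD y p a' + rD z p a' := by linarith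
  generalize rD y p a' + rD z p a' = B at *
  generalize rD u p a' = q at *
  generalize p a' = P at *
  have main : (q - K / 2) * p a ≤ rD u p a * (P - B / 2) := by
    rw [hpa, hqa]
    exact num_aux h0 h1 hPpos hd hB0 hBη hquad
  have : p a * (q - K / 2) ≤ p a * (β * (P - B / 2)) := by nlinarith
  exact le_of_mul_le_mul_left this hpapos
end realpart


section complexpart
open Complex
variable {κ : Type*} [DecidableEq κ] [Fintype κ]

def toC (x : κ → ℝ) : κ → ℂ := fun k => (x k : ℂ)

lemma toC_add_single (x : κ → ℝ) (k : κ) (c : ℝ) :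
    toC (x + Pi.single k c) = toC x + Pi.single k (c : ℂ) := by
  ext i
  by_cases h : i = k
  · subst h; simp [toC]
  · simp [toC, h]

lemma toC_sub_single (x : κ → ℝ) (k : κ) :
    toC (x - Pi.single k 1) = toC x - Pi.single k (1 : ℂ) := by
  ext i
  by_cases h : i = k
  · subst h; simp [toC]
  · simp [toC, h]

structure Good (f : (κ → ℂ) → ℂ) : Prop where
  diff : Differentiable ℂ f
  aff : ∀ z k (c : ℂ), f (z + Pi.single k c) = f z + c * (f (z + Pi.single k 1) - f z)
  real : ∀ x : κ → ℝ, (f (toC x)).im = 0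
  stab : ∀ z, (∀ k, 0 < (z k).im) → f z ≠ 0
  pos : ∃ L : ℝ, ∀ x : κ → ℝ, (∀ k, L ≤ x k) → 0 < (f (toC x)).re

def sh (k : κ) (f : (κ → ℂ) → ℂ) : (κ → ℂ) → ℂ := fun z => f (z - Pi.single k 1)
noncomputable def av (k l : κ) (f : (κ → ℂ) → ℂ) : (κ → ℂ) → ℂ := fun z => (sh k f z + sh l f z) / 2

lemma sh_comm (k l : κ) (f : (κ → ℂ) → ℂ) : sh k (sh l f) = sh l (sh k f) := by
  ext z; simp only [sh]; congr 1; abel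

lemma sh_av (k l m : κ) (f : (κ → ℂ) → ℂ) : sh k (av l m f) = av l m (sh k f) := by
  ext z
  have h1 := congrFun (sh_comm k l f) z
  have h2 := congrFun (sh_comm k m f) z
  simp only [av, sh] at *
  rw [h1, h2]

lemma Good.im_le {f : (κ → ℂ) → ℂ} (h : Good f) (k : κ) (z : κ → ℂ) (hz : ∀ k, 0 < (z k).im) :
    ((f (z + Pi.single k 1) - f z) * (starRingEnd ℂ) (f z)).im ≤ 0 ∧
    (((f (z + Pi.single k 1) - f z) * (starRingEnd ℂ) (f z)).im = 0 → f (z + Pi.single k 1) - f z = 0) := by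
  have h0 := h.stab z hz
  set w := f (z + Pi.single k 1) - f z with hw
  by_cases hw0 : w = 0
  · simp [hw0]
  have key : (w * (starRingEnd ℂ) (f z)).im < 0 := by
    by_contra hc
    push Not at hc
    refine h.stab (z + Pi.single k (- f z / w)) ?_ ?_
    · intro i
      have : 0 ≤ ((Pi.single k (- f z / w) : κ → ℂ) i).im := by
        rw [Pi.single_apply]
        split_ifs
        · rw [Complex.div_im]
          have hn : 0 < normSq w := normSq_pos.2 hw0
          rw [← sub_div]
          apply div_nonneg _ hn.le
          simp only [mul_im, conj_re, conj_im, neg_re, neg_im] at *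
          linarith
        · simp
      simp only [Pi.add_apply, add_im]
      linarith [hz i]
    · rw [h.aff, ← hw]; field_simp; ring
  exact ⟨key.le, fun e => absurd e key.ne⟩

lemma Good.im_le' {f : (κ → ℂ) → ℂ} (h : Good f) (k : κ) (z : κ → ℂ) (hz : ∀ k, 0 ≤ (z k).im) :
    ((f (z + Pi.single k 1) - f z) * (starRingEnd ℂ) (f z)).im ≤ 0 := by
  have hc : Continuous f := h.diff.continuous
  let g : ℝ → ℝ := fun η => 
    ((f ((z + fun _ => (η:ℂ) * I) + Pi.single k 1) - f (z + fun _ => (η:ℂ) * I)) * (starRingEnd ℂ) (f (z + fun _ => (η:ℂ) * I))).im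
  have hg : Continuous g := by
    have h1 : Continuous fun η : ℝ => (z + fun _ => (η:ℂ) * I) := by fun_prop
    have h2 := hc.comp h1
    have h3 := hc.comp (h1.add (continuous_const (y := (Pi.single k 1 : κ → ℂ))))
    exact Complex.continuous_im.comp ((h3.sub h2).mul (Complex.continuous_conj.comp h2))
  have ht : Filter.Tendsto g (nhdsWithin 0 (Set.Ioi 0)) (nhds (g 0)) := hg.continuousWithinAt
  have h0 : g 0 = ((f (z + Pi.single k 1) - f z) * (starRingEnd ℂ) (f z)).im := by
    have : (z + fun _ => ((0:ℝ):ℂ) * I) = z := by ext; simp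
    simp only [g, this]
  rw [← h0]
  refine le_of_tendsto ht ?_
  filter_upwards [self_mem_nhdsWithin] with η hη
  refine (h.im_le k _ ?_).1
  intro i
  have : 0 < η := hη
  simp
  linarith [hz i]

def re' (f : (κ → ℂ) → ℂ) (x : κ → ℝ) : ℝ := (f (toC x)).re

lemma Good.ofReal {f : (κ → ℂ) → ℂ} (h : Good f) (x : κ → ℝ) : f (toC x) = (re' f x : ℂ) := by
  apply Complex.ext
  · simp [re']
  · simp [h.real x]

lemma Good.D {f : (κ → ℂ) → ℂ} (h : Good f) (k : κ) (x : κ → ℝ) :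
    f (toC x + Pi.single k 1) - f (toC x) = (rD k (re' f) x : ℂ) := by
  have := toC_add_single x k 1
  rw [Complex.ofReal_one] at this
  rw [← this, h.ofReal, h.ofReal, rD]; push_cast; rfl

lemma Good.ray {f : (κ → ℂ) → ℂ} (h : Good f) : Ray (re' f) := by
  have aff : ∀ x k (c : ℝ), re' f (x + Pi.single k c) = re' f x + c * rD k (re' f) x := by
    intro x k c
    have := h.aff (toC x) k c
    rw [h.D, ← toC_add_single, h.ofReal, h.ofReal] at this
    exact_mod_cast this
  refine ⟨aff, ?_⟩
  intro x i j
  have h1 := h.im_le' i (toC x + Pi.single j I) (by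
    intro k
    by_cases hk : k = j
    · subst hk; simp [toC]
    · simp [toC, hk])
  rw [add_right_comm, h.aff _ j I, h.aff _ j I] at h1
  have e : toC x + Pi.single i 1 = toC (x + Pi.single i 1) := by
    rw [toC_add_single]; simp
  rw [e, h.D, h.D, h.ofReal, h.ofReal] at h1
  have e2 : (re' f (x + Pi.single i 1)) = re' f x + rD i (re' f) x := by simp [rD]
  have e3 : rD j (re' f) (x + Pi.single i 1) = rD j (re' f) x + rD j (rD i (re' f)) x := by
    rw [aff_rD aff, rD_comm]; ring
  rw [e2, e3] at h1
  simp at h1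
  linarith

lemma Good.sh {f : (κ → ℂ) → ℂ} (h : Good f) (k : κ) : Good (sh k f) := by
  refine ⟨?_, ?_, ?_, ?_, ?_⟩
  · exact h.diff.comp (differentiable_id.sub (differentiable_const _))
  · intro z l c
    have := h.aff (z - Pi.single k 1) l c
    simp only [_root_.sh]
    rw [add_sub_right_comm, add_sub_right_comm, this]
  · intro x
    simp only [_root_.sh]
    rw [← toC_sub_single]; exact h.real _
  · intro z hz
    apply h.stab
    intro i
    by_cases hi : i = k
    · subst hi; simpa using hz i
    · simpa [hi] using hz i
  · obtain ⟨L, hL⟩ := h.pos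
    refine ⟨L + 1, fun x hx => ?_⟩
    simp only [_root_.sh]
    rw [← toC_sub_single]
    apply hL
    intro i
    have := hx i
    by_cases hi : i = k
    · subst hi; simp; linarith
    · simp [hi]; linarith

lemma Good.av {f : (κ → ℂ) → ℂ} (h : Good f) (k l : κ) : Good (av k l f) := by
  have hk := h.sh k
  have hl := h.sh l
  refine ⟨?_, ?_, ?_, ?_, ?_⟩
  · have h1 := hk.diff
    have h2 := hl.diff
    unfold _root_.av
    fun_prop
  · intro z m c
    simp only [_root_.av]
    rw [hk.aff, hl.aff]; ring
  · intro x
    simp only [_root_.av]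
    rw [hk.ofReal, hl.ofReal]
    have : ((re' (_root_.sh k f) x : ℂ) + (re' (_root_.sh l f) x : ℂ)) / 2 =
      (((re' (_root_.sh k f) x + re' (_root_.sh l f) x) / 2 : ℝ) : ℂ) := by push_cast; rfl
    rw [this, ofReal_im]
  · intro z hz h0
    have e : ∀ m, _root_.sh m f z = f z - (f (z + Pi.single m 1) - f z) := by
      intro m
      have := h.aff z m (-1)
      rw [Pi.single_neg, ← sub_eq_add_neg] at this
      rw [_root_.sh, this]; ring
    simp only [_root_.av, e] at h0
    obtain ⟨a1, a2⟩ := h.im_le k z hz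
    obtain ⟨b1, b2⟩ := h.im_le l z hz
    set u := f (z + Pi.single k 1) - f z
    set v := f (z + Pi.single l 1) - f z
    have huv : u + v = 2 * f z := by
      have : (f z - u + (f z - v)) = 0 := by simpa using h0
      linear_combination -this
    have : ((u + v) * (starRingEnd ℂ) (f z)).im = 0 := by
      rw [huv, mul_assoc, mul_conj]
      have : (2:ℂ) * (normSq (f z) : ℂ) = ((2 * normSq (f z) : ℝ) : ℂ) := by push_cast; rfl
      rw [this, ofReal_im]
    rw [add_mul, add_im] at this
    have u0 := a2 (by linarith)
    have v0 := b2 (by linarith)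
    rw [u0, v0] at huv
    have : f z = 0 := by simpa using huv.symm
    exact h.stab z hz this
  · obtain ⟨L, hL⟩ := hk.pos
    obtain ⟨L', hL'⟩ := hl.pos
    refine ⟨max L L', fun x hx => ?_⟩
    have h1 := hL x (fun k => (le_max_left _ _).trans (hx k))
    have h2 := hL' x (fun k => (le_max_right _ _).trans (hx k))
    simp only [_root_.av]
    simp
    linarith

lemma re'_av {f : (κ → ℂ) → ℂ} (k l : κ) : re' (av k l f) = rav k l (re' f) := by
  ext x
  simp only [re', av, sh, rav, toC_sub_single]
  simp

end complexpart


section selection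

lemma ratio_antitone {h g : ℝ → ℝ} (dh : Differentiable ℝ h) (dg : Differentiable ℝ g)
    (W : ∀ x, deriv g x * h x - g x * deriv h x ≤ 0) {D : Set ℝ} (hD : Convex ℝ D)
    (hpos : ∀ x ∈ D, 0 < h x) : AntitoneOn (fun x => g x / h x) D := by
  apply antitoneOn_of_deriv_nonpos hD
  · exact dg.continuous.continuousOn.div dh.continuous.continuousOn (fun x hx => (hpos x hx).ne')
  · intro x hx
    exact ((dg x).div (dh x) (hpos x (interior_subset hx)).ne').differentiableWithinAt
  · intro x hx
    have hx' := hpos x (interior_subset hx)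
    have := ((dg x).hasDerivAt.div (dh x).hasDerivAt hx'.ne').deriv
    have e : (fun x => g x / h x) = g / h := rfl
    rw [e, this]
    exact div_nonpos_of_nonpos_of_nonneg (W x) (sq_nonneg _)

lemma select_real {h g1 g2 : ℝ → ℝ} (dh : Differentiable ℝ h) (dg1 : Differentiable ℝ g1)
    (dg2 : Differentiable ℝ g2)
    (W1 : ∀ x, deriv g1 x * h x - g1 x * deriv h x ≤ 0)
    (W2 : ∀ x, deriv g2 x * h x - g2 x * deriv h x ≤ 0)
    {L r : ℝ} (hL : ∀ x, L ≤ x → 0 < h x) 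
    (hG : ∀ x, r ≤ x → 0 < h x - (g1 x + g2 x) / 2) :
    (∀ x, r ≤ x → 0 < h x - g1 x) ∨ (∀ x, r ≤ x → 0 < h x - g2 x) := by
  by_cases hne : (Set.Icc r L ∩ {x | h x ≤ 0}).Nonempty
  · exfalso
    have hcomp : IsCompact (Set.Icc r L ∩ {x | h x ≤ 0}) :=
      isCompact_Icc.inter_right (isClosed_le dh.continuous continuous_const)
    obtain ⟨ρ, ⟨⟨hρr, hρL⟩, hρ0⟩, hmax⟩ := hcomp.exists_isMaxOn hne continuous_id.continuousOn
    have hp : ∀ x ∈ Set.Ioi ρ, 0 < h x := by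
      intro x hx
      by_contra hc
      push Not at hc
      have hxL : x ≤ L := by
        by_contra hh
        push Not at hh
        linarith [hL x hh.le]
      have : x ≤ ρ := hmax ⟨⟨hρr.trans (le_of_lt hx), hxL⟩, hc⟩
      exact absurd this (not_le.2 hx)
    have hρge : 0 ≤ h ρ := by
      have : Filter.Tendsto h (nhdsWithin ρ (Set.Ioi ρ)) (nhds (h ρ)) := dh.continuous.continuousWithinAt
      refine ge_of_tendsto this ?_
      filter_upwards [self_mem_nhdsWithin] with x hx using (hp x hx).le
    have hρeq : h ρ = 0 := le_antisymm hρ0 hρge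
    have hg := hG ρ hρr
    have hlim : ∀ g : ℝ → ℝ, Differentiable ℝ g → (∀ x, deriv g x * h x - g x * deriv h x ≤ 0) → 0 ≤ g ρ := by
      intro g dg W
      have ha := ratio_antitone dh dg W (convex_Ioi ρ) hp
      set c := g (ρ+1) / h (ρ+1) with hc
      have t1 : Filter.Tendsto (fun x => g x - c * h x) (nhdsWithin ρ (Set.Ioi ρ)) (nhds (g ρ - c * h ρ)) :=
        (dg.continuous.sub (continuous_const.mul dh.continuous)).continuousWithinAt
      have : 0 ≤ g ρ - c * h ρ := by
        refine ge_of_tendsto t1 ?_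
        have hlt : ρ < ρ + 1 := by linarith
        filter_upwards [Ioo_mem_nhdsGT hlt] with x hx
        have h1 := ha (show x ∈ Set.Ioi ρ from hx.1) (show ρ + 1 ∈ Set.Ioi ρ from hlt) hx.2.le
        simp only at h1
        rw [← hc, le_div_iff₀ (hp x hx.1)] at h1
        linarith
      rw [hρeq] at this; linarith
    have := hlim g1 dg1 W1
    have := hlim g2 dg2 W2
    linarith
  · have hp : ∀ x ∈ Set.Ici r, 0 < h x := by
      intro x hx
      by_contra hc
      push Not at hc
      have hxL : x ≤ L := by
        by_contra hh
        push Not at hh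
        linarith [hL x hh.le]
      exact hne ⟨x, ⟨hx, hxL⟩, hc⟩
    have hr := hp r Set.self_mem_Ici
    have hg := hG r le_rfl
    have fin : ∀ g : ℝ → ℝ, Differentiable ℝ g → (∀ x, deriv g x * h x - g x * deriv h x ≤ 0) → g r < h r → 
        ∀ x, r ≤ x → 0 < h x - g x := by
      intro g dg W hgr x hx
      have ha := ratio_antitone dh dg W (convex_Ici r) hp Set.self_mem_Ici hx hx
      simp only at ha
      have h1 : g r / h r < 1 := (div_lt_one hr).2 hgr
      have h2 : g x / h x < 1 := lt_of_le_of_lt ha h1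
      rw [div_lt_one (hp x hx)] at h2
      linarith
    by_cases hlt : g1 r < h r
    · exact Or.inl (fin g1 dg1 W1 hlt)
    · exact Or.inr (fin g2 dg2 W2 (by linarith))

variable {κ : Type*} [DecidableEq κ] [Fintype κ]
open Complex

lemma deriv_nonpos_right {m : ℝ → ℝ} {m' : ℝ} (h : HasDerivAt m m' 0) (h0 : m 0 = 0)
    (hle : ∀ c, 0 < c → m c ≤ 0) : m' ≤ 0 := by
  have := (hasDerivAt_iff_tendsto_slope.1 h).mono_left (nhdsWithin_mono 0 (s := Set.Ioi 0) (by
    intro x hx; exact ne_of_gt hx))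
  refine le_of_tendsto this ?_
  filter_upwards [self_mem_nhdsWithin] with c hc
  have hc' : 0 < c := hc
  rw [slope_def_field, h0]
  simp only [sub_zero]
  exact div_nonpos_of_nonpos_of_nonneg (hle c hc') hc'.le

lemma Good.line {f : (κ → ℂ) → ℂ} (h : Good f) (k : κ) :
    Differentiable ℝ (fun x : ℝ => re' f (fun _ => x)) ∧
    Differentiable ℝ (fun x : ℝ => rD k (re' f) (fun _ => x)) ∧
    ∀ x, deriv (fun x : ℝ => rD k (re' f) (fun _ => x)) x * re' f (fun _ => x) -
      rD k (re' f) (fun _ => x) * deriv (fun x : ℝ => re' f (fun _ => x)) x ≤ 0 := by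
  let H : ℂ → ℂ := fun s => f (fun _ => s)
  let G : ℂ → ℂ := fun s => f ((fun _ => s) + Pi.single k 1) - f (fun _ => s)
  have dl : Differentiable ℂ (fun s : ℂ => (fun _ : κ => s)) := by fun_prop
  have dH : Differentiable ℂ H := h.diff.comp dl
  have dG : Differentiable ℂ G := (h.diff.comp (dl.add (differentiable_const _))).sub dH
  have eH : ∀ x : ℝ, H x = (re' f (fun _ => x) : ℂ) := fun x => h.ofReal (fun _ => x)
  have eG : ∀ x : ℝ, G x = (rD k (re' f) (fun _ => x) : ℂ) := fun x => h.D k (fun _ => x)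
  have hH : ∀ x : ℝ, HasDerivAt (fun x : ℝ => re' f (fun _ => x)) (deriv H x).re x := by
    intro x
    have := (dH x).hasDerivAt.real_of_complex
    simpa only [eH, ofReal_re] using this
  have hGd : ∀ x : ℝ, HasDerivAt (fun x : ℝ => rD k (re' f) (fun _ => x)) (deriv G x).re x := by
    intro x
    have := (dG x).hasDerivAt.real_of_complex
    simpa only [eG, ofReal_re] using this
  refine ⟨fun x => (hH x).differentiableAt, fun x => (hGd x).differentiableAt, fun x => ?_⟩
  rw [(hH x).deriv, (hGd x).deriv]
  let m : ℝ → ℝ := fun c => (G (x + c * I) * (starRingEnd ℂ) (H (x + c * I))).im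
  have hl : HasDerivAt (fun c : ℝ => (x:ℂ) + c * I) I 0 := by
    have := ((hasDerivAt_id (0:ℝ)).ofReal_comp.mul_const I).const_add (x:ℂ)
    simpa using this
  have h1 : HasDerivAt (fun c : ℝ => H (x + c * I)) (deriv H x * I) 0 := by
    have h2 : HasDerivAt H (deriv H x) ((x:ℂ) + (0:ℝ) * I) := by simpa using (dH x).hasDerivAt
    exact h2.comp (0:ℝ) hl
  have h3 : HasDerivAt (fun c : ℝ => G (x + c * I)) (deriv G x * I) 0 := by
    have h2 : HasDerivAt G (deriv G x) ((x:ℂ) + (0:ℝ) * I) := by simpa using (dG x).hasDerivAt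
    exact h2.comp (0:ℝ) hl
  have h4 : HasDerivAt (fun c : ℝ => (starRingEnd ℂ) (H (x + c * I))) ((starRingEnd ℂ) (deriv H x * I)) 0 := by
    exact h1.star
  have h5 := h3.mul h4
  have h6 : HasDerivAt m _ 0 := (Complex.imCLM.hasFDerivAt.comp_hasDerivAt (0:ℝ) h5)
  have := deriv_nonpos_right h6 (by simp [m, eH, eG]) (by
    intro c hc
    refine (h.im_le' k (fun _ => (x:ℂ) + c * I) ?_)
    intro i; simp [hc.le])
  simp [eH, eG] at this
  linarith

lemma Good.select {f : (κ → ℂ) → ℂ} (h : Good f) (k l : κ) {r : ℝ}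
    (hG : ∀ x, r ≤ x → 0 < re' (_root_.av k l f) (fun _ => x)) :
    (∀ x, r ≤ x → 0 < re' (_root_.sh k f) (fun _ => x)) ∨ (∀ x, r ≤ x → 0 < re' (_root_.sh l f) (fun _ => x)) := by
  have e : ∀ m x, re' (_root_.sh m f) x = re' f x - rD m (re' f) x := by
    intro m x
    have := h.ray.aff x m (-1)
    rw [Pi.single_neg, ← sub_eq_add_neg] at this
    simp only [re', _root_.sh, ← toC_sub_single]
    simp only [re'] at this
    rw [this]; ring
  have e2 : ∀ x, re' (_root_.av k l f) x = re' f x - (rD k (re' f) x + rD l (re' f) x) / 2 := by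
    intro x
    have h1 := e k x
    have h2 := e l x
    simp only [re', _root_.av] at *
    simp
    rw [h1, h2]; ring
  obtain ⟨L, hL⟩ := h.pos
  simp only [e, e2] at *
  obtain ⟨d0, d1, w1⟩ := h.line k
  obtain ⟨-, d2, w2⟩ := h.line l
  exact select_real d0 d1 d2 w1 w2 (L := L) (fun x hx => hL (fun _ => x) (fun _ => hx)) hG

variable {ι : Type*} [DecidableEq ι] [Fintype ι]

noncomputable def avL (l : List ι) (f : (ι × Bool → ℂ) → ℂ) : (ι × Bool → ℂ) → ℂ :=
  l.foldr (fun i g => av (i, true) (i, false) g) f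

lemma Good.avL {f : (ι × Bool → ℂ) → ℂ} (h : Good f) (l : List ι) : Good (avL l f) := by
  induction l with
  | nil => exact h
  | cons i l ih => exact ih.av _ _

lemma sh_avL (k : ι × Bool) (l : List ι) (f : (ι × Bool → ℂ) → ℂ) : sh k (avL l f) = avL l (sh k f) := by
  induction l with
  | nil => rfl
  | cons i l ih =>
    change sh k (av _ _ (avL l f)) = av _ _ (avL l (sh k f))
    rw [sh_av, ih]

lemma Good.selectL (l : List ι) (hl : l.Nodup) {r : ℝ} : ∀ {f : (ι × Bool → ℂ) → ℂ}, Good f →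
    (∀ x, r ≤ x → 0 < re' (_root_.avL l f) (fun _ => x)) →
    ∃ s : ι → Bool, ∀ x, r ≤ x →
      0 < re' f (fun k => x - if k.1 ∈ l ∧ k.2 = s k.1 then 1 else 0) := by
  induction l with
  | nil => intro f h hG; exact ⟨fun _ => true, by simpa [_root_.avL] using hG⟩
  | cons i l ih =>
    intro f h hG
    have hil : i ∉ l := (List.nodup_cons.1 hl).1
    have key : ∃ b : Bool, ∀ x, r ≤ x → 0 < re' (_root_.avL l (_root_.sh (i, b) f)) (fun _ => x) := by
      rcases (h.avL l).select (i, true) (i, false) hG with h1 | h1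
      · exact ⟨true, by rwa [sh_avL] at h1⟩
      · exact ⟨false, by rwa [sh_avL] at h1⟩
    obtain ⟨b, hb⟩ := key
    obtain ⟨s, hs⟩ := ih (List.nodup_cons.1 hl).2 (h.sh (i, b)) hb
    refine ⟨Function.update s i b, fun x hx => ?_⟩
    have := hs x hx
    simp only [re', _root_.sh, ← toC_sub_single] at this
    simp only [re']
    convert this using 4
    ext ⟨j, c⟩
    by_cases hj : j = i
    · subst hj
      by_cases hc : c = b
      · subst hc; simp [hil]
      · simp [hc, hil]
    · simp [hj, Pi.single_apply]

lemma Good.barrierL {f : (ι × Bool → ℂ) → ℂ} (h : Good f) {x0 η : ℝ} (h0 : 0 ≤ η) (h1 : η ≤ 1/2)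
    (ha : Above (re' f) (fun _ => x0))
    (hb : ∀ k, rD k (re' f) (fun _ => x0) ≤ η / 2 * re' f (fun _ => x0)) (l : List ι) (hl : l.Nodup) :
    Above (re' (_root_.avL l f)) (fun k => x0 + if k.1 ∈ l then 1/2 + η else 0) ∧
    ∀ k, rD k (re' (_root_.avL l f)) (fun k => x0 + if k.1 ∈ l then 1/2 + η else 0) ≤
      η / 2 * re' (_root_.avL l f) (fun k => x0 + if k.1 ∈ l then 1/2 + η else 0) := by
  induction l with
  | nil => simpa only [_root_.avL, List.foldr_nil, List.not_mem_nil, if_false, add_zero] using ⟨ha, hb⟩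
  | cons i l ih =>
    have hil : i ∉ l := (List.nodup_cons.1 hl).1
    obtain ⟨a1, a2⟩ := ih (List.nodup_cons.1 hl).2
    have e : (fun k : ι × Bool => x0 + if k.1 ∈ i :: l then 1/2 + η else 0) =
      (fun k => x0 + if k.1 ∈ l then 1/2 + η else 0) + Pi.single (i, true) (1/2+η) + Pi.single (i, false) (1/2+η) := by
      ext ⟨j, c⟩
      by_cases hj : j = i
      · subst hj
        cases c <;> simp [hil, Pi.single_apply]
      · simp [hj, Pi.single_apply]
    have e2 : re' (_root_.avL (i :: l) f) = rav (i,true) (i,false) (re' (_root_.avL l f)) := re'_av _ _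
    have := (h.avL l).ray.barrier a1 (y := (i, true)) (z := (i, false)) h0 h1 (a2 _) (a2 _)
    rw [e, e2]
    exact ⟨this.1, fun k => this.2 k _ (a2 k)⟩

lemma Good.main {f : (ι × Bool → ℂ) → ℂ} (h : Good f) {x0 η : ℝ} (h0 : 0 ≤ η) (h1 : η ≤ 1/2)
    (ha : Above (re' f) (fun _ => x0))
    (hb : ∀ k, rD k (re' f) (fun _ => x0) ≤ η / 2 * re' f (fun _ => x0)) :
    ∃ s : ι → Bool, ∀ x, x0 + 1/2 + η ≤ x →
      0 < re' f (fun k => x - if k.2 = s k.1 then 1 else 0) := by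
  have := (h.barrierL h0 h1 ha hb Finset.univ.toList (Finset.nodup_toList _)).1
  have := Good.selectL (Finset.univ.toList : List ι) (Finset.nodup_toList _) (r := x0 + 1/2 + η) h (by
    intro x hx
    apply this
    intro k
    simp; linarith)
  simpa using this
end selection


section detpart
open Complex Matrix
variable {n : Type*} [DecidableEq n] [Fintype n] {ι : Type*} [DecidableEq ι] [Fintype ι]

lemma det_rank_one {R : Type*} [CommRing R] (A : Matrix n n R) (u v : n → R) (c : R) :
    (A + c • vecMulVec u v).det = A.det + c * ((A + vecMulVec u v).det - A.det) := by
  have key : ∀ c : R, (A + c • vecMulVec u v).det =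
      A.det + c * (Matrix.fromBlocks A (-replicateCol Unit u) (replicateRow Unit v) 0).det := by
    intro c
    have h1 := Matrix.det_fromBlocks_one₂₂ A (-(c • replicateCol Unit u)) (replicateRow Unit v)
    have e1 : A - (-(c • replicateCol Unit u)) * replicateRow Unit v = A + c • vecMulVec u v := by
      rw [Matrix.neg_mul, sub_neg_eq_add, Matrix.smul_mul, ← vecMulVec_eq]
    rw [e1] at h1
    rw [← h1]
    have e2 : Matrix.fromBlocks A (-(c • replicateCol Unit u)) (replicateRow Unit v) 1 =
      (Matrix.fromBlocks A 0 (replicateRow Unit v) 1).updateCol (Sum.inr ()) 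
        ((fun k => (Matrix.fromBlocks A 0 (replicateRow Unit v) 1) k (Sum.inr ())) +
          c • (fun k => (Matrix.fromBlocks A (-replicateCol Unit u) (replicateRow Unit v) 0) k (Sum.inr ()))) := by
      ext i j
      rcases i with i | i <;> rcases j with j | j <;> simp [Matrix.updateCol_apply]
    have e3 : Matrix.fromBlocks A (-replicateCol Unit u) (replicateRow Unit v) 0 = 
      (Matrix.fromBlocks A 0 (replicateRow Unit v) 1).updateCol (Sum.inr ()) 
        (fun k => (Matrix.fromBlocks A (-replicateCol Unit u) (replicateRow Unit v) 0) k (Sum.inr ())) := by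
      ext i j
      rcases i with i | i <;> rcases j with j | j <;> simp [Matrix.updateCol_apply]
    rw [e2, Matrix.det_updateCol_add, Matrix.det_updateCol_smul, ← e3]
    congr 1
    have : (Matrix.fromBlocks A 0 (replicateRow Unit v) 1).updateCol (Sum.inr ()) 
        (fun k => (Matrix.fromBlocks A 0 (replicateRow Unit v) (1 : Matrix Unit Unit R)) k (Sum.inr ())) = 
        Matrix.fromBlocks A 0 (replicateRow Unit v) 1 := by
      ext i j
      rcases i with i | i <;> rcases j with j | j <;> simp [Matrix.updateCol_apply]
    rw [this, Matrix.det_fromBlocks_zero₁₂, Matrix.det_one, mul_one]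
  have h1 := key 1
  rw [one_smul, one_mul] at h1
  rw [key, h1]; ring

def gM {R : Type*} [CommRing R] (u : ι → n → R) (z : ι → R) : Matrix n n R :=
  Matrix.of fun a b => ∑ i, z i * (u i a * u i b)

lemma gM_add_single {R : Type*} [CommRing R] (u : ι → n → R) (z : ι → R) (i : ι) (c : R) :
    gM u (z + Pi.single i c) = gM u z + c • vecMulVec (u i) (u i) := by
  ext a b
  simp [gM, add_mul, Finset.sum_add_distrib, Pi.single_apply, vecMulVec_apply]

lemma gM_quad {R : Type*} [CommRing R] (u : ι → n → R) (z : ι → R) (x y : n → R) :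
    x ⬝ᵥ (gM u z *ᵥ y) = ∑ i, z i * ((u i ⬝ᵥ x) * (u i ⬝ᵥ y)) := by
  have h : gM u z *ᵥ y = fun a => ∑ i, (z i * (u i ⬝ᵥ y)) * u i a := by
    ext a
    simp only [gM, dotProduct, mulVec, Matrix.of_apply, Finset.sum_mul, Finset.mul_sum]
    rw [Finset.sum_comm]
    refine Finset.sum_congr rfl fun i _ => Finset.sum_congr rfl fun j _ => by ring
  rw [h]
  have h2 : x ⬝ᵥ (fun a => ∑ i, (z i * (u i ⬝ᵥ y)) * u i a) = ∑ a, ∑ i, x a * ((z i * (u i ⬝ᵥ y)) * u i a) := by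
    simp only [dotProduct, Finset.mul_sum]
  rw [h2, Finset.sum_comm]
  refine Finset.sum_congr rfl fun i _ => ?_
  have h3 : u i ⬝ᵥ x = ∑ a, u i a * x a := rfl
  rw [h3, Finset.sum_mul, Finset.mul_sum]
  refine Finset.sum_congr rfl fun a _ => by ring

lemma gM_posDef (u : ι → n → ℝ) (hu : ∀ x, x ≠ 0 → 0 < ∑ i, (u i ⬝ᵥ x) ^ 2) (w : ι → ℝ)
    (hw : ∀ i, 0 < w i) : (gM u w).PosDef := by
  refine Matrix.PosDef.of_dotProduct_mulVec_pos ?_ ?_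
  · ext a b
    simp [gM, Matrix.conjTranspose_apply, mul_comm]
  · intro x hx
    rw [star_trivial, gM_quad]
    have h := hu x hx
    have : ∃ i ∈ Finset.univ, 0 < (u i ⬝ᵥ x) ^ 2 := by
      by_contra hc
      push Not at hc
      exact absurd (Finset.sum_nonpos hc) (not_le.2 h)
    obtain ⟨i, hi, hpos⟩ := this
    refine Finset.sum_pos' (fun j _ => ?_) ⟨i, hi, ?_⟩
    · have := hw j
      have := mul_self_nonneg (u j ⬝ᵥ x)
      positivity
    · have := hw i
      rw [← sq]; positivity

lemma gM_map (u : ι → n → ℝ) (x : ι → ℝ) :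
    (gM (fun i a => (u i a : ℂ)) (fun i => (x i : ℂ))).det = ((gM u x).det : ℂ) := by
  have : gM (fun i a => (u i a : ℂ)) (fun i => (x i : ℂ)) = (Complex.ofRealHom).mapMatrix (gM u x) := by
    ext a b
    simp [gM]
  rw [this, ← RingHom.map_det]; rfl

noncomputable def bP (u : ι → n → ℝ) (z : ι × Bool → ℂ) : ℂ :=
  (gM (fun i a => (u i a : ℂ)) (fun i => z (i, true))).det *
  (gM (fun i a => (u i a : ℂ)) (fun i => z (i, false))).det

lemma gM_stab (u : ι → n → ℝ) (hu : ∀ x, x ≠ 0 → 0 < ∑ i, (u i ⬝ᵥ x) ^ 2) (z : ι → ℂ)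
    (hz : ∀ i, 0 < (z i).im) : (gM (fun i a => (u i a : ℂ)) z).det ≠ 0 := by
  intro h0
  obtain ⟨v, hv, hMv⟩ := Matrix.exists_mulVec_eq_zero_iff.2 h0
  have h1 := gM_quad (fun i a => (u i a : ℂ)) z (fun a => (starRingEnd ℂ) (v a)) v
  rw [hMv, dotProduct_zero] at h1
  have hc : ∀ i, ((fun a => (u i a : ℂ)) ⬝ᵥ fun a => (starRingEnd ℂ) (v a)) = (starRingEnd ℂ) ((fun a => (u i a : ℂ)) ⬝ᵥ v) := by
    intro i
    simp [dotProduct]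
  have h2 : ∑ i, (z i).im * normSq ((fun a => (u i a : ℂ)) ⬝ᵥ v) = 0 := by
    have := congrArg Complex.im h1
    simp only [hc, mul_comm ((starRingEnd ℂ) _), mul_conj] at this
    simpa using this.symm
  have h3 : ∀ i, normSq ((fun a => (u i a : ℂ)) ⬝ᵥ v) = 0 := by
    intro i
    have := (Finset.sum_eq_zero_iff_of_nonneg (fun i _ => mul_nonneg (hz i).le (normSq_nonneg _))).1 h2 i (Finset.mem_univ i)
    rcases mul_eq_zero.1 this with h | h
    · exact absurd h (hz i).ne'
    · exact h
  have h4 : ∀ i, ((fun a => (u i a : ℂ)) ⬝ᵥ v) = 0 := fun i => normSq_eq_zero.1 (h3 i)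
  have hre : (fun a => (v a).re) = 0 := by
    by_contra hne
    refine (hu _ hne).ne' ?_
    refine Finset.sum_eq_zero fun i _ => ?_
    have := congrArg Complex.re (h4 i)
    simp [dotProduct] at this
    simp [dotProduct, this]
  have him : (fun a => (v a).im) = 0 := by
    by_contra hne
    refine (hu _ hne).ne' ?_
    refine Finset.sum_eq_zero fun i _ => ?_
    have := congrArg Complex.im (h4 i)
    simp [dotProduct] at this
    simp [dotProduct, this]
  apply hv
  ext a
  exact Complex.ext (congrFun hre a) (congrFun him a)

lemma bP_real (u : ι → n → ℝ) (x : ι × Bool → ℝ) :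
    bP u (toC x) = (((gM u (fun i => x (i, true))).det * (gM u (fun i => x (i, false))).det : ℝ) : ℂ) := by
  have h1 := gM_map u (fun i => x (i, true))
  have h2 := gM_map u (fun i => x (i, false))
  simp only [bP, toC]
  rw [h1, h2]; push_cast; rfl

lemma bP_re (u : ι → n → ℝ) (x : ι × Bool → ℝ) :
    re' (bP u) x = (gM u (fun i => x (i, true))).det * (gM u (fun i => x (i, false))).det := by
  rw [re', bP_real, ofReal_re]

lemma bP_good (u : ι → n → ℝ) (hu : ∀ x, x ≠ 0 → 0 < ∑ i, (u i ⬝ᵥ x) ^ 2) : Good (bP u) := by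
  refine ⟨?_, ?_, ?_, ?_, ?_⟩
  · unfold bP
    simp only [det_apply, gM, Matrix.of_apply]
    fun_prop
  · intro z ⟨i, b⟩ c
    have e1 : ∀ (c : ℂ) (b' : Bool), (fun j => (z + Pi.single (i, b) c : ι × Bool → ℂ) (j, b')) = 
        if b' = b then (fun j => z (j, b')) + Pi.single i c else (fun j => z (j, b')) := by
      intro c b'
      split_ifs with h
      · subst h; ext j; simp [Pi.single_apply]
      · ext j; simp [Pi.single_apply, h]
    simp only [bP, e1]
    cases b
    · simp only [if_true, Bool.true_eq_false, if_false, gM_add_single, one_smul]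
      rw [det_rank_one]; ring
    · simp only [if_true, Bool.false_eq_true, if_false, gM_add_single, one_smul]
      rw [det_rank_one]; ring
  · intro x
    rw [bP_real, ofReal_im]
  · intro z hz
    exact mul_ne_zero (gM_stab u hu _ fun i => hz _) (gM_stab u hu _ fun i => hz _)
  · refine ⟨1, fun x hx => ?_⟩
    have := bP_re u x
    rw [re'] at this
    rw [this]
    exact mul_pos (gM_posDef u hu _ fun i => by linarith [hx (i, true)]).det_pos
      (gM_posDef u hu _ fun i => by linarith [hx (i, false)]).det_pos

lemma bP_above (u : ι → n → ℝ) (hu : ∀ x, x ≠ 0 → 0 < ∑ i, (u i ⬝ᵥ x) ^ 2) {x0 : ℝ} (h0 : 0 < x0) :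
    Above (re' (bP u)) (fun _ => x0) := by
  intro x hx
  rw [bP_re]
  exact mul_pos (gM_posDef u hu _ fun i => h0.trans_le (hx (i, true))).det_pos
      (gM_posDef u hu _ fun i => h0.trans_le (hx (i, false))).det_pos

lemma det_lev (u : ι → n → ℝ) (hu : ∀ x, x ≠ 0 → 0 < ∑ i, (u i ⬝ᵥ x) ^ 2) {x0 ε : ℝ} (h0 : 0 < x0)
    (hε : 0 ≤ ε) (i : ι) (hi : ∀ x, (u i ⬝ᵥ x) ^ 2 ≤ ε * ∑ j, (u j ⬝ᵥ x) ^ 2) :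
    (gM u ((fun _ => x0) + Pi.single i 1)).det ≤ (1 + ε / x0) * (gM u (fun _ => x0)).det := by
  have hpd := gM_posDef u hu (fun _ => x0) (fun _ => h0)
  have hdet := hpd.det_pos
  rw [gM_add_single, one_smul]
  set A := gM u (fun _ => x0) with hA
  have hunit : IsUnit A.det := hdet.ne'.isUnit
  rw [vecMulVec_eq Unit, Matrix.det_add_replicateCol_mul_replicateRow hunit]
  set w := A⁻¹ *ᵥ u i with hw
  have hAw : A *ᵥ w = u i := by
    rw [hw, Matrix.mulVec_mulVec, Matrix.mul_nonsing_inv _ hunit, Matrix.one_mulVec]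
  have e : (replicateRow Unit (u i) * A⁻¹ * replicateCol Unit (u i)) = Matrix.of fun _ _ => u i ⬝ᵥ w := by
    ext a b
    rw [Matrix.mul_assoc]
    simp [Matrix.mul_apply, dotProduct, hw, mulVec]
  have hq := gM_quad u (fun _ => x0) w w
  rw [← hA, hAw] at hq
  have hq2 : w ⬝ᵥ u i = x0 * ∑ j, (u j ⬝ᵥ w) ^ 2 := by
    rw [hq, Finset.mul_sum]
    exact Finset.sum_congr rfl fun j _ => by ring
  have h1 := hi w
  rw [dotProduct_comm] at hq2
  have hτ : u i ⬝ᵥ w ≤ ε / x0 := by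
    by_contra hc
    push Not at hc
    have hpos : 0 < u i ⬝ᵥ w := lt_of_le_of_lt (by positivity) hc
    have : (u i ⬝ᵥ w) * (u i ⬝ᵥ w) ≤ (u i ⬝ᵥ w) * (ε / x0) := by
      have : ∑ j, (u j ⬝ᵥ w) ^ 2 = (u i ⬝ᵥ w) / x0 := by rw [hq2]; field_simp
      rw [this] at h1
      calc _ = _ := by ring
        _ ≤ _ := h1
        _ = _ := by ring
    exact absurd (le_of_mul_le_mul_left this hpos) (not_le.2 hc)
  rw [e]
  have : ((1 : Matrix Unit Unit ℝ) + Matrix.of fun _ _ => u i ⬝ᵥ w).det = 1 + u i ⬝ᵥ w := by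
    simp
  rw [this, mul_comm]
  gcongr

lemma bP_lev (u : ι → n → ℝ) (hu : ∀ x, x ≠ 0 → 0 < ∑ i, (u i ⬝ᵥ x) ^ 2) {x0 ε : ℝ} (h0 : 0 < x0)
    (hε : 0 ≤ ε) (hi : ∀ i x, (u i ⬝ᵥ x) ^ 2 ≤ ε * ∑ j, (u j ⬝ᵥ x) ^ 2) (k : ι × Bool) :
    rD k (re' (bP u)) (fun _ => x0) ≤ ε / x0 * re' (bP u) (fun _ => x0) := by
  obtain ⟨i, b⟩ := k
  have h1 := det_lev u hu h0 hε i (hi i)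
  have hdet := (gM_posDef u hu (fun _ => x0) (fun _ => h0)).det_pos
  have e1 : ∀ (b' : Bool), (fun j => ((fun _ => x0) + Pi.single (i, b) 1 : ι × Bool → ℝ) (j, b')) = 
        if b' = b then (fun j => x0) + Pi.single i 1 else (fun j => x0) := by
      intro b'
      split_ifs with h
      · subst h; ext j; simp [Pi.single_apply]
      · ext j; simp [Pi.single_apply, h]
  rw [rD, bP_re, bP_re]
  simp only [e1]
  cases b <;> simp <;> nlinarith

lemma gen_eig (u : ι → n → ℝ) (hu : ∀ x, x ≠ 0 → 0 < ∑ i, (u i ⬝ᵥ x) ^ 2) (w : ι → ℝ) {r : ℝ}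
    (hr : ∀ x, r ≤ x → (gM u (fun i => x - w i)).det ≠ 0) (y : n → ℝ) :
    ∑ i, w i * (u i ⬝ᵥ y) ^ 2 ≤ r * ∑ i, (u i ⬝ᵥ y) ^ 2 := by
  by_contra hc
  push Not at hc
  have hy : y ≠ 0 := by
    rintro rfl; simp at hc
  have hn : 0 < ‖y‖ := norm_pos_iff.2 hy
  have hcont : ∀ i, Continuous fun x : n → ℝ => u i ⬝ᵥ x := by
    intro i; unfold dotProduct; fun_prop
  have hcomp : IsCompact (Metric.sphere (0 : n → ℝ) 1) := isCompact_sphere 0 1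
  have hs0 : ∀ x ∈ Metric.sphere (0 : n → ℝ) 1, x ≠ 0 := by
    rintro x hx rfl; simp at hx
  have hys : (‖y‖⁻¹ • y) ∈ Metric.sphere (0 : n → ℝ) 1 := by
    simp [norm_smul, hn.ne']
  obtain ⟨z, hz, hmax⟩ := hcomp.exists_isMaxOn ⟨_, hys⟩
    (f := fun x => (∑ i, w i * (u i ⬝ᵥ x) ^ 2) / ∑ i, (u i ⬝ᵥ x) ^ 2) (by
      apply ContinuousOn.div
      · exact Continuous.continuousOn (by fun_prop)
      · exact Continuous.continuousOn (by fun_prop)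
      · intro x hx; exact (hu x (hs0 x hx)).ne')
  set ρ := (∑ i, w i * (u i ⬝ᵥ z) ^ 2) / ∑ i, (u i ⬝ᵥ z) ^ 2 with hρ
  have hall : ∀ x, ∑ i, w i * (u i ⬝ᵥ x) ^ 2 ≤ ρ * ∑ i, (u i ⬝ᵥ x) ^ 2 := by
    intro x
    by_cases hx : x = 0
    · subst hx; simp
    have hxn : 0 < ‖x‖ := norm_pos_iff.2 hx
    have h1 := hmax (show (‖x‖⁻¹ • x) ∈ Metric.sphere (0 : n → ℝ) 1 by simp [norm_smul, hxn.ne'])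
    simp only [Set.mem_setOf_eq, dotProduct_smul, smul_eq_mul, mul_pow, mul_left_comm _ (‖x‖⁻¹ ^ 2), ← Finset.mul_sum] at h1
    rw [mul_div_mul_left _ _ (by positivity), ← hρ, div_le_iff₀ (hu x hx)] at h1
    exact h1
  have hrρ : r < ρ := by
    have h1 := hall y
    have h2 := hu y hy
    by_contra hh
    push Not at hh
    nlinarith
  apply hr ρ hrρ.le
  have hq : ∀ x, x ⬝ᵥ (gM u (fun i => ρ - w i) *ᵥ x) = ρ * ∑ i, (u i ⬝ᵥ x) ^ 2 - ∑ i, w i * (u i ⬝ᵥ x) ^ 2 := by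
    intro x
    rw [gM_quad, Finset.mul_sum, ← Finset.sum_sub_distrib]
    exact Finset.sum_congr rfl fun i _ => by ring
  have hpsd : (gM u (fun i => ρ - w i)).PosSemidef := by
    refine Matrix.PosSemidef.of_dotProduct_mulVec_nonneg ?_ ?_
    · ext a b
      simp [gM, Matrix.conjTranspose_apply, mul_comm]
    · intro x
      rw [star_trivial, hq]; linarith [hall x]
  have h0 := (hpsd.dotProduct_mulVec_zero_iff z).1 (by
    rw [star_trivial, hq, hρ, div_mul_cancel₀ _ (hu z (hs0 z hz)).ne']; ring)
  exact Matrix.exists_mulVec_eq_zero_iff.1 ⟨z, hs0 z hz, h0⟩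

/-- Weak form of Weaver's conjecture -/
lemma weaver (u : ι → n → ℝ) (hu : ∀ x, x ≠ 0 → 0 < ∑ i, (u i ⬝ᵥ x) ^ 2) {q : ℝ} (h0 : 0 < q) (h1 : q ≤ 1/4)
    (hi : ∀ i x, (u i ⬝ᵥ x) ^ 2 ≤ q ^ 2 * ∑ j, (u j ⬝ᵥ x) ^ 2) :
    ∃ s : ι → Bool, ∀ b x, ∑ i, (if s i = b then (u i ⬝ᵥ x) ^ 2 else 0) ≤ (1/2 + 3 * q) * ∑ i, (u i ⬝ᵥ x) ^ 2 := by
  obtain ⟨s, hs⟩ := (bP_good u hu).main (x0 := q) (η := 2 * q) (by linarith) (by linarith)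
    (bP_above u hu h0) (by
      intro k
      have := bP_lev u hu h0 (sq_nonneg q) hi k
      have e : q ^ 2 / q = 2 * q / 2 := by field_simp
      rwa [e] at this)
  refine ⟨s, fun b x => ?_⟩
  have := gen_eig u hu (fun i => if s i = b then 1 else 0) (r := 1/2 + 3 * q) (by
    intro x hx
    have h2 := (hs x (by linarith)).ne'
    rw [bP_re] at h2
    cases b
    · convert right_ne_zero_of_mul h2 using 6 with i
      cases s i <;> simp
    · convert left_ne_zero_of_mul h2 using 6 with i
      cases s i <;> simp) x
  simpa using this
end detpart


section iterpart
open Matrix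

lemma halve {n : Type*} [Fintype n] [DecidableEq n] {ι : Type*} [DecidableEq ι]
    (u : ι → n → ℝ) (S : Finset ι)
    (hu : ∀ x, x ≠ 0 → 0 < ∑ i ∈ S, (u i ⬝ᵥ x) ^ 2) {q : ℝ} (h0 : 0 < q) (h1 : q ≤ 1/4)
    (hi : ∀ i ∈ S, ∀ x, (u i ⬝ᵥ x) ^ 2 ≤ q ^ 2 * ∑ j ∈ S, (u j ⬝ᵥ x) ^ 2) :
    ∃ S' ⊆ S, 2 * S'.card ≤ S.card ∧ ∀ x,
      (1/2 - 3 * q) * ∑ i ∈ S, (u i ⬝ᵥ x) ^ 2 ≤ ∑ i ∈ S', (u i ⬝ᵥ x) ^ 2 ∧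
      ∑ i ∈ S', (u i ⬝ᵥ x) ^ 2 ≤ (1/2 + 3 * q) * ∑ i ∈ S, (u i ⬝ᵥ x) ^ 2 := by
  have e : ∀ x, ∑ i : S, (u i ⬝ᵥ x) ^ 2 = ∑ i ∈ S, (u i ⬝ᵥ x) ^ 2 := fun x =>
    Finset.sum_coe_sort S (fun i => (u i ⬝ᵥ x) ^ 2)
  obtain ⟨s, hs⟩ := weaver (fun i : S => u i) (fun x hx => by rw [e]; exact hu x hx) h0 h1
    (fun i x => by rw [e]; exact hi i i.2 x)
  simp only [e] at hs
  classical
  let T : Bool → Finset ι := fun b => S.filter (fun i => if h : i ∈ S then s ⟨i, h⟩ = b else False)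
  have hT : ∀ b x, ∑ i ∈ T b, (u i ⬝ᵥ x) ^ 2 = ∑ i : S, (if s i = b then (u i ⬝ᵥ x) ^ 2 else 0) := by
    intro b x
    rw [Finset.sum_filter, ← Finset.sum_coe_sort]
    refine Finset.sum_congr rfl fun i _ => ?_
    simp
  have hsum : ∀ x, ∑ i ∈ T true, (u i ⬝ᵥ x) ^ 2 + ∑ i ∈ T false, (u i ⬝ᵥ x) ^ 2 = ∑ i ∈ S, (u i ⬝ᵥ x) ^ 2 := by
    intro x
    rw [hT, hT, ← Finset.sum_add_distrib, ← e]
    refine Finset.sum_congr rfl fun i _ => ?_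
    cases s i <;> simp
  have hcard : (T true).card + (T false).card = S.card := by
    rw [← Finset.card_union_of_disjoint]
    · congr 1
      ext i
      by_cases h : i ∈ S
      · cases h' : s ⟨i, h⟩ <;> simp [T, h, h']
      · simp [T, h]
    · rw [Finset.disjoint_left]
      intro i hi
      by_cases h : i ∈ S
      · cases h' : s ⟨i, h⟩ <;> simp [T, h, h'] at hi ⊢
      · simp [T, h]
  rcases le_total (T true).card (T false).card with hc | hc
  · refine ⟨T true, Finset.filter_subset _ _, by omega, fun x => ?_⟩
    have a := hs true x
    have b := hs false x
    have c := hsum x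
    rw [← hT] at a b
    constructor <;> linarith
  · refine ⟨T false, Finset.filter_subset _ _, by omega, fun x => ?_⟩
    have a := hs true x
    have b := hs false x
    have c := hsum x
    rw [← hT] at a b
    constructor <;> linarith

lemma iterate_halve {n : Type*} [Fintype n] [DecidableEq n] {ι : Type*} [DecidableEq ι]
    (u : ι → n → ℝ) (G : (n → ℝ) → ℝ) (hG : ∀ x, x ≠ 0 → 0 < G x) (hG0 : ∀ x, 0 ≤ G x)
    {K : ℝ} (hK : 0 < K) (hu : ∀ i x, (u i ⬝ᵥ x) ^ 2 ≤ K * G x) {m0 : ℝ} (hm0 : 3600 * K ≤ m0) :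
    ∀ (k : ℕ) (S : Finset ι) (q : ℝ), 0 < q → q ^ 2 * (2 ^ k * m0) = K → (S.card : ℝ) ≤ 2 ^ k * m0 →
    (∀ x, (1/2 - 15 * q) * (2 ^ k * m0) * G x ≤ ∑ i ∈ S, (u i ⬝ᵥ x) ^ 2 ∧
      ∑ i ∈ S, (u i ⬝ᵥ x) ^ 2 ≤ (2 + 120 * q) * (2 ^ k * m0) * G x) →
    ∃ S' : Finset ι, (S'.card : ℝ) ≤ m0 ∧ ∀ x, 1/4 * m0 * G x ≤ ∑ i ∈ S', (u i ⬝ᵥ x) ^ 2 ∧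
      ∑ i ∈ S', (u i ⬝ᵥ x) ^ 2 ≤ 4 * m0 * G x := by
  have hm : 0 < m0 := by linarith
  have hq60 : ∀ (k : ℕ) (q : ℝ), 0 < q → q ^ 2 * (2 ^ k * m0) = K → q ≤ 1/60 := by
    intro k q h0 h
    by_contra hh
    push Not at hh
    have h1 : (1:ℝ) ≤ 2 ^ k := one_le_pow₀ (by norm_num)
    have h2 : m0 ≤ 2 ^ k * m0 := le_mul_of_one_le_left hm.le h1
    have h3 : (1/60)^2 < q ^ 2 := by gcongr
    nlinarith
  intro k
  induction k with
  | zero =>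
    intro S q h0 hqK hc hS
    have h60 := hq60 _ _ h0 hqK
    refine ⟨S, by simpa using hc, fun x => ?_⟩
    obtain ⟨a, b⟩ := hS x
    have hg : 0 ≤ m0 * G x := mul_nonneg hm.le (hG0 x)
    simp only [pow_zero, one_mul] at a b
    constructor <;> nlinarith
  | succ k ih =>
    intro S q h0 hqK hc hS
    have h60 := hq60 _ _ h0 hqK
    set m : ℝ := 2 ^ k * m0 with hmdef
    have hmp : 0 < m := by positivity
    have e2 : (2:ℝ) ^ (k + 1) * m0 = 2 * m := by rw [hmdef]; ring
    rw [e2] at hqK hc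
    simp only [e2] at hS
    have hlow : ∀ x, 1/4 * (2 * m) * G x ≤ ∑ i ∈ S, (u i ⬝ᵥ x) ^ 2 := by
      intro x
      have hg : 0 ≤ m * G x := mul_nonneg hmp.le (hG0 x)
      have := (hS x).1
      nlinarith
    obtain ⟨S', -, hc', hS'⟩ := halve u S (fun x hx => by
        have h1 := hlow x
        have := mul_pos hmp (hG x hx)
        nlinarith) (q := 2 * q) (by linarith) (by linarith) (by
        intro i _ x
        refine (hu i x).trans ?_
        have h1 := mul_le_mul_of_nonneg_left (hlow x) (sq_nonneg (2 * q))
        rw [← hqK]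
        nlinarith)
    have hs2 : (0:ℝ) < √2 := by positivity
    have hs2' : (√2:ℝ) ^ 2 = 2 := Real.sq_sqrt (by norm_num)
    have h14 : (1.4:ℝ) ≤ √2 := Real.le_sqrt_of_sq_le (by norm_num)
    refine ih S' (√2 * q) (by positivity) (by rw [mul_pow, hs2', ← hqK]; ring) ?_ ?_
    · have : (2 * S'.card : ℝ) ≤ S.card := by exact_mod_cast hc'
      linarith
    · intro x
      have hg : 0 ≤ m * G x := mul_nonneg hmp.le (hG0 x)
      obtain ⟨a, b⟩ := hS x
      obtain ⟨c, d⟩ := hS' x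
      have h14q : 1.4 * q ≤ √2 * q := by gcongr
      constructor
      · refine le_trans ?_ c
        refine le_trans ?_ (mul_le_mul_of_nonneg_left a (by linarith))
        have : (1/2 - 15 * (√2 * q)) ≤ 2 * ((1 / 2 - 3 * (2 * q)) * (1 / 2 - 15 * q)) := by nlinarith
        have := mul_le_mul_of_nonneg_right this hg
        linarith
      · refine d.trans ?_
        refine (mul_le_mul_of_nonneg_left b (by linarith)).trans ?_
        have : 2 * ((1 / 2 + 3 * (2 * q)) * (2 + 120 * q)) ≤ 2 + 120 * (√2 * q) := by nlinarith
        have := mul_le_mul_of_nonneg_right this hg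
        linarith

lemma multiplic {n : Type*} [Fintype n] [DecidableEq n] {ι : Type*} [DecidableEq ι]
    (u : ι → n → ℝ) (G : (n → ℝ) → ℝ) (hG : ∀ x, x ≠ 0 → 0 < G x) (hG0 : ∀ x, 0 ≤ G x)
    {K : ℝ} (hK : 0 < K) (hu : ∀ i x, (u i ⬝ᵥ x) ^ 2 ≤ K * G x) {m0 : ℝ} (hm0 : 3600 * K ≤ m0)
    (T : Finset ι) (w : ι → ℝ) (hw : ∀ i ∈ T, 0 ≤ w i) (hw1 : ∑ i ∈ T, w i = 1)
    (hP : ∀ x, 3/4 * G x ≤ ∑ i ∈ T, w i * (u i ⬝ᵥ x) ^ 2 ∧ ∑ i ∈ T, w i * (u i ⬝ᵥ x) ^ 2 ≤ 3/2 * G x) :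
    ∃ S' : Finset (Σ _ : ι, ℕ), (S'.card : ℝ) ≤ m0 ∧ ∀ x, 1/4 * m0 * G x ≤ ∑ i ∈ S', (u i.1 ⬝ᵥ x) ^ 2 ∧
      ∑ i ∈ S', (u i.1 ⬝ᵥ x) ^ 2 ≤ 4 * m0 * G x := by
  have hm : 0 < m0 := by linarith
  obtain ⟨k, hk⟩ := pow_unbounded_of_one_lt (4 * T.card * K / m0) (one_lt_two (α := ℝ))
  rw [div_lt_iff₀ hm] at hk
  set M : ℝ := 2 ^ k * m0 with hM
  have hMp : 0 < M := by positivity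
  let S : Finset (Σ _ : ι, ℕ) := T.sigma (fun i => Finset.range ⌊w i * M⌋₊)
  have hQ : ∀ x, ∑ i ∈ S, (u i.1 ⬝ᵥ x) ^ 2 = ∑ i ∈ T, (⌊w i * M⌋₊ : ℝ) * (u i ⬝ᵥ x) ^ 2 := by
    intro x
    rw [Finset.sum_sigma]
    simp
  have hq : 0 < √(K / M) := by positivity
  refine iterate_halve (fun i : (Σ _ : ι, ℕ) => u i.1) G hG hG0 hK (fun i x => hu i.1 x) hm0 k S (√(K / M)) hq ?_ ?_ ?_
  · rw [Real.sq_sqrt (by positivity)]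
    exact div_mul_cancel₀ _ hMp.ne'
  · rw [Finset.card_sigma]
    simp only [Finset.card_range]
    push_cast
    calc ∑ i ∈ T, (⌊w i * M⌋₊ : ℝ) ≤ ∑ i ∈ T, w i * M :=
          Finset.sum_le_sum fun i hi => Nat.floor_le (mul_nonneg (hw i hi) hMp.le)
      _ = M := by rw [← Finset.sum_mul, hw1, one_mul]
  · intro x
    simp only [← hM]
    rw [hQ]
    obtain ⟨a, b⟩ := hP x
    have hg := hG0 x
    have hMg : 0 ≤ M * G x := mul_nonneg hMp.le hg
    constructor
    · have : ∑ i ∈ T, (M * (w i * (u i ⬝ᵥ x) ^ 2) - K * G x) ≤ ∑ i ∈ T, (⌊w i * M⌋₊ : ℝ) * (u i ⬝ᵥ x) ^ 2 := by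
        refine Finset.sum_le_sum fun i hi => ?_
        have h1 := (Nat.lt_floor_add_one (w i * M)).le
        have h2 := mul_le_mul_of_nonneg_right h1 (sq_nonneg (u i ⬝ᵥ x))
        have h3 := hu i x
        linarith
      rw [Finset.sum_sub_distrib, ← Finset.mul_sum, Finset.sum_const, nsmul_eq_mul] at this
      refine le_trans ?_ this
      have h4 := mul_le_mul_of_nonneg_left a hMp.le
      have h5 := mul_le_mul_of_nonneg_right hk.le hg
      have h6 := mul_nonneg hq.le hMg
      nlinarith
    · calc ∑ i ∈ T, (⌊w i * M⌋₊ : ℝ) * (u i ⬝ᵥ x) ^ 2 ≤ ∑ i ∈ T, M * (w i * (u i ⬝ᵥ x) ^ 2) := by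
            refine Finset.sum_le_sum fun i hi => ?_
            have := mul_le_mul_of_nonneg_right (Nat.floor_le (mul_nonneg (hw i hi) hMp.le)) (sq_nonneg (u i ⬝ᵥ x))
            linarith
        _ = M * ∑ i ∈ T, w i * (u i ⬝ᵥ x) ^ 2 := by rw [Finset.mul_sum]
        _ ≤ M * (3/2 * G x) := by gcongr
        _ ≤ _ := by
          have h6 := mul_nonneg hq.le hMg
          nlinarith

lemma discr {Ω : Type*} [MeasurableSpace Ω] (μ : Measure Ω) [IsProbabilityMeasure μ] {N : ℕ}
    (u : Ω → Fin N → ℝ) (hum : ∀ k, Measurable fun ω => u ω k) (hub : ∀ k, ∃ B, ∀ ω, |u ω k| ≤ B)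
    (hG : ∀ x, x ≠ 0 → 0 < ∫ ω, (u ω ⬝ᵥ x) ^ 2 ∂μ) :
    ∃ (ι : Type) (T : Finset ι) (w : ι → ℝ) (z : ι → Ω), (∀ i ∈ T, 0 ≤ w i) ∧ ∑ i ∈ T, w i = 1 ∧
      ∀ x, 3/4 * ∫ ω, (u ω ⬝ᵥ x) ^ 2 ∂μ ≤ ∑ i ∈ T, w i * (u (z i) ⬝ᵥ x) ^ 2 ∧
       ∑ i ∈ T, w i * (u (z i) ⬝ᵥ x) ^ 2 ≤ 3/2 * ∫ ω, (u ω ⬝ᵥ x) ^ 2 ∂μ := by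
  choose B hB using hub
  let Φ : Ω → (Fin N × Fin N → ℝ) := fun ω p => u ω p.1 * u ω p.2
  have hΦc : ∀ p, Integrable (fun ω => Φ ω p) μ := by
    intro p
    refine Integrable.of_bound (((hum p.1).mul (hum p.2)).aestronglyMeasurable) (B p.1 * B p.2) ?_
    refine Filter.Eventually.of_forall fun ω => ?_
    rw [Real.norm_eq_abs, abs_mul]
    exact mul_le_mul (hB _ ω) (hB _ ω) (abs_nonneg _) ((abs_nonneg _).trans (hB _ ω))
  have hΦ : Integrable Φ μ := Integrable.of_eval hΦc
  have hmem : ∫ ω, Φ ω ∂μ ∈ closure (convexHull ℝ (Set.range Φ)) := by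
    refine (convex_convexHull ℝ _).closure.integral_mem isClosed_closure ?_ hΦ
    exact Filter.Eventually.of_forall fun ω => subset_closure (subset_convexHull ℝ _ ⟨ω, rfl⟩)
  set A := ∫ ω, Φ ω ∂μ with hA
  have hAc : ∀ p, A p = ∫ ω, Φ ω p ∂μ := fun p => eval_integral hΦc p
  have hexp : ∀ ω x, (u ω ⬝ᵥ x) ^ 2 = ∑ p : Fin N × Fin N, Φ ω p * (x p.1 * x p.2) := by
    intro ω x
    rw [sq, dotProduct, Finset.sum_mul_sum, Fintype.sum_prod_type]
    refine Finset.sum_congr rfl fun i _ => Finset.sum_congr rfl fun j _ => ?_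
    simp only [Φ]; ring
  have hGA : ∀ x, ∫ ω, (u ω ⬝ᵥ x) ^ 2 ∂μ = ∑ p : Fin N × Fin N, A p * (x p.1 * x p.2) := by
    intro x
    simp only [hexp]
    rw [integral_finset_sum _ (fun p _ => (hΦc p).mul_const _)]
    simp only [integral_mul_const, hAc]
  -- lower bound on the form
  obtain ⟨c, hc, hcl⟩ : ∃ c : ℝ, 0 < c ∧ ∀ x : Fin N → ℝ, c * ‖x‖ ^ 2 ≤ ∫ ω, (u ω ⬝ᵥ x) ^ 2 ∂μ := by
    by_cases hne : (Metric.sphere (0 : Fin N → ℝ) 1).Nonempty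
    · obtain ⟨x0, hx0, hmin⟩ := (isCompact_sphere (0 : Fin N → ℝ) 1).exists_isMinOn hne
        (f := fun x => ∑ p : Fin N × Fin N, A p * (x p.1 * x p.2)) (by fun_prop)
      have hx0' : x0 ≠ 0 := by
        rintro rfl; simp at hx0
      refine ⟨_, hG x0 hx0', fun x => ?_⟩
      by_cases hx : x = 0
      · subst hx; simp
      have hxp : 0 < ‖x‖ := norm_pos_iff.2 hx
      have h1 := hmin (show ‖x‖⁻¹ • x ∈ Metric.sphere (0 : Fin N → ℝ) 1 by
        simp [norm_smul, hxp.ne'])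
      simp only [Set.mem_setOf_eq] at h1
      rw [← hGA, ← hGA] at h1
      have e : ∀ ω, (u ω ⬝ᵥ (‖x‖⁻¹ • x)) ^ 2 = (‖x‖ ^ 2)⁻¹ * (u ω ⬝ᵥ x) ^ 2 := by
        intro ω; rw [dotProduct_smul, smul_eq_mul, mul_pow, inv_pow]
      simp only [e] at h1
      rw [integral_const_mul, inv_mul_eq_div, le_div_iff₀ (by positivity)] at h1
      exact h1
    · refine ⟨1, one_pos, fun x => ?_⟩
      by_cases hx : x = 0
      · subst hx; simp
      have hxp : 0 < ‖x‖ := norm_pos_iff.2 hx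
      exact absurd ⟨‖x‖⁻¹ • x, by simp [norm_smul, hxp.ne']⟩ hne
  let ε : ℝ := c / (4 * (N ^ 2 + 1))
  have hε : 0 < ε := by positivity
  obtain ⟨P, hP, hPd⟩ := Metric.mem_closure_iff.1 hmem ε hε
  rw [convexHull_eq] at hP
  obtain ⟨ι, T, w, z, hw, hw1, hz, hcm⟩ := hP
  have hΩ : Nonempty Ω := nonempty_of_isProbabilityMeasure μ
  have hz' : ∀ i, ∃ ω, i ∈ T → Φ ω = z i := by
    intro i
    by_cases h : i ∈ T
    · obtain ⟨ω, hω⟩ := hz i h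
      exact ⟨ω, fun _ => hω⟩
    · exact ⟨hΩ.some, fun h' => absurd h' h⟩
  choose y hy using hz'
  refine ⟨ι, T, w, y, hw, hw1, fun x => ?_⟩
  rw [Finset.centerMass_eq_of_sum_1 _ _ hw1] at hcm
  have hPx : ∑ i ∈ T, w i * (u (y i) ⬝ᵥ x) ^ 2 = ∑ p : Fin N × Fin N, P p * (x p.1 * x p.2) := by
    simp only [hexp, Finset.mul_sum]
    rw [Finset.sum_comm]
    refine Finset.sum_congr rfl fun p _ => ?_
    rw [← hcm, Finset.sum_apply, Finset.sum_mul]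
    refine Finset.sum_congr rfl fun i hi => ?_
    rw [hy i hi]; simp [mul_assoc]
  have hd : |∑ i ∈ T, w i * (u (y i) ⬝ᵥ x) ^ 2 - ∫ ω, (u ω ⬝ᵥ x) ^ 2 ∂μ| ≤ 1/4 * ∫ ω, (u ω ⬝ᵥ x) ^ 2 ∂μ := by
    have h1 := hcl x
    rw [hPx, hGA x, ← Finset.sum_sub_distrib, ← hGA x]
    calc _ ≤ ∑ p : Fin N × Fin N, |P p * (x p.1 * x p.2) - A p * (x p.1 * x p.2)| :=
          Finset.abs_sum_le_sum_abs _ _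
      _ ≤ ∑ p : Fin N × Fin N, ε * ‖x‖ ^ 2 := by
          refine Finset.sum_le_sum fun p _ => ?_
          rw [← sub_mul, abs_mul, abs_mul, sq]
          have h2 : |P p - A p| ≤ ε := by
            rw [← Real.dist_eq, dist_comm]
            exact (dist_le_pi_dist A P p).trans hPd.le
          have h3 : ∀ i, |x i| ≤ ‖x‖ := fun i => norm_le_pi_norm x i
          exact mul_le_mul h2 (mul_le_mul (h3 _) (h3 _) (abs_nonneg _) (norm_nonneg _)) (by positivity) hε.le
      _ = (N ^ 2 * ε) * ‖x‖ ^ 2 := by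
          simp; ring
      _ ≤ (1/4 * c) * ‖x‖ ^ 2 := by
          refine mul_le_mul_of_nonneg_right ?_ (sq_nonneg _)
          simp only [ε]
          rw [mul_div_assoc', div_le_iff₀ (by positivity)]
          nlinarith
      _ ≤ _ := by linarith
  have hnn : 0 ≤ ∫ ω, (u ω ⬝ᵥ x) ^ 2 ∂μ := integral_nonneg fun ω => sq_nonneg _
  rw [abs_le] at hd
  constructor <;> linarith [hd.1, hd.2]
end iterpart


section finalpart
open Matrix

lemma LpNorm_two_sq {Ω : Type*} [MeasurableSpace Ω] (μ : Measure Ω) (f : Ω → ℝ) :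
    (LpNorm μ 2 f) ^ 2 = ∫ ω, (f ω) ^ 2 ∂μ := by
  have h : ∀ ω, |f ω| ^ (2 : ℝ) = (f ω) ^ 2 := fun ω => by
    rw [Real.rpow_two, sq_abs]
  unfold LpNorm
  simp only [h]
  rw [← Real.sqrt_eq_rpow, Real.sq_sqrt (integral_nonneg fun ω => sq_nonneg _)]

lemma LpNorm_two_nonneg {Ω : Type*} [MeasurableSpace Ω] (μ : Measure Ω) (f : Ω → ℝ) :
    0 ≤ LpNorm μ 2 f := by
  unfold LpNorm
  exact Real.rpow_nonneg (integral_nonneg fun ω => Real.rpow_nonneg (abs_nonneg _) _) _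

lemma le_supNorm {Ω : Type*} (f : Ω → ℝ) (hf : ∃ B : ℝ, ∀ ω, |f ω| ≤ B) (ω : Ω) :
    |f ω| ≤ supNorm f := by
  obtain ⟨B, hB⟩ := hf
  exact le_ciSup (f := fun ω => |f ω|) ⟨B, by rintro _ ⟨ω, rfl⟩; exact hB ω⟩ ω

lemma main_pts {Ω : Type*} [MeasurableSpace Ω] (μ : Measure Ω) [IsProbabilityMeasure μ]
    {t : ℝ} (ht : 0 < t) {N : ℕ} (hN : 0 < N) (X : Submodule ℝ (Ω → ℝ)) (hX : Module.finrank ℝ X = N)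
    (hm : ∀ f ∈ X, Measurable f) (hb : ∀ f ∈ X, ∃ B : ℝ, ∀ ω, |f ω| ≤ B)
    (hn : ∀ f ∈ X, supNorm f ≤ t * Real.sqrt N * LpNorm μ 2 f) :
    ∃ (m : ℕ) (ξ : Fin m → Ω), (m : ℝ) ≤ 3601 * t ^ 2 * N ∧ N ≤ m ∧
      ∀ f ∈ X, 1/4 * m * ∫ ω, (f ω) ^ 2 ∂μ ≤ ∑ j, (f (ξ j)) ^ 2 ∧
        ∑ j, (f (ξ j)) ^ 2 ≤ 14404 * t ^ 2 * N * ∫ ω, (f ω) ^ 2 ∂μ := by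
  have hfin : FiniteDimensional ℝ X := FiniteDimensional.of_finrank_pos (by omega)
  let b : Module.Basis (Fin N) ℝ X := Module.finBasisOfFinrankEq ℝ X hX
  let u : Ω → Fin N → ℝ := fun ω k => (b k : Ω → ℝ) ω
  have hux : ∀ (x : Fin N → ℝ) ω, u ω ⬝ᵥ x = ((∑ k, x k • b k : X) : Ω → ℝ) ω := by
    intro x ω
    simp only [u, dotProduct, Submodule.coe_sum, Submodule.coe_smul, Finset.sum_apply, Pi.smul_apply, smul_eq_mul]
    exact Finset.sum_congr rfl fun k _ => mul_comm _ _
  set K : ℝ := t ^ 2 * N with hKdef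
  have hNr : (0:ℝ) < N := by exact_mod_cast hN
  have hK : 0 < K := by positivity
  have hKf : ∀ f ∈ X, ∀ ω, (f ω) ^ 2 ≤ K * ∫ ω, (f ω) ^ 2 ∂μ := by
    intro f hf ω
    have h1 := (le_supNorm f (hb f hf) ω).trans (hn f hf)
    have h2 := pow_le_pow_left₀ (abs_nonneg _) h1 2
    rw [sq_abs, mul_pow, mul_pow, Real.sq_sqrt hNr.le, LpNorm_two_sq] at h2
    exact h2
  let G : (Fin N → ℝ) → ℝ := fun x => ∫ ω, (u ω ⬝ᵥ x) ^ 2 ∂μ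
  have hGu : ∀ ω x, (u ω ⬝ᵥ x) ^ 2 ≤ K * G x := by
    intro ω x
    simp only [G, hux]
    exact hKf _ (Submodule.coe_mem _) ω
  have hG0 : ∀ x, 0 ≤ G x := fun x => integral_nonneg fun ω => sq_nonneg _
  have hG : ∀ x, x ≠ 0 → 0 < G x := by
    intro x hx
    refine lt_of_le_of_ne (hG0 x) fun h0 => hx ?_
    have h1 : (∑ k, x k • b k : X) = 0 := by
      apply Subtype.ext
      funext ω
      rw [← hux]
      have := hGu ω x
      rw [← h0, mul_zero] at this
      exact pow_eq_zero_iff (two_ne_zero) |>.1 (le_antisymm this (sq_nonneg _))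
    funext k
    exact Fintype.linearIndependent_iff.1 b.linearIndependent x h1 k
  have hK1 : 1 ≤ K := by
    let x : Fin N → ℝ := fun _ => 1
    have hx : x ≠ 0 := fun h => one_ne_zero (congrFun h ⟨0, hN⟩)
    have h1 : G x ≤ K * G x := by
      calc G x ≤ ∫ ω, K * G x ∂μ :=
            integral_mono_of_nonneg (Filter.Eventually.of_forall fun ω => sq_nonneg _) (integrable_const _)
              (Filter.Eventually.of_forall fun ω => hGu ω x)
        _ = K * G x := by simp
    have := hG x hx
    by_contra hh
    push Not at hh
    nlinarith
  obtain ⟨ι, T, w, z, hw, hw1, hP⟩ := discr μ u (fun k => hm _ (b k).2) (fun k => hb _ (b k).2) hG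
  classical
  set m0 : ℝ := 3600 * K with hm0
  obtain ⟨S, hSc, hS⟩ := multiplic (fun i => u (z i)) G hG hG0 hK (fun i x => hGu _ x) (le_refl (3600 * K)) T w hw hw1 hP
  let e := S.equivFin
  let ξ : Fin S.card → Ω := fun j => z (e.symm j).1.1
  have hrep : ∀ f ∈ X, ∃ x : Fin N → ℝ, ∀ ω, f ω = u ω ⬝ᵥ x := by
    intro f hf
    refine ⟨b.repr ⟨f, hf⟩, fun ω => ?_⟩
    rw [hux, b.sum_repr]
  have hsum : ∀ g : Ω → ℝ, ∑ j, g (ξ j) = ∑ i ∈ S, g (z i.1) := by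
    intro g
    rw [← Finset.sum_coe_sort S]
    exact Equiv.sum_comp e.symm (fun i : S => g (z i.1.1))
  refine ⟨S.card, ξ, by linarith, ?_, ?_⟩
  · let L : (Fin N → ℝ) →ₗ[ℝ] (Fin S.card → ℝ) := LinearMap.pi fun j => dotProductBilin ℝ ℝ (u (ξ j))
    have hL : Function.Injective L := by
      rw [injective_iff_map_eq_zero]
      intro x hx
      by_contra hx0
      have h1 := (hS x).1
      rw [← hsum (fun ω => (u ω ⬝ᵥ x) ^ 2)] at h1
      have h2 : ∀ j, u (ξ j) ⬝ᵥ x = 0 := fun j => congrFun hx j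
      simp only [h2] at h1
      have := hG x hx0
      have := mul_pos hK this
      simp at h1
      nlinarith
    have := LinearMap.finrank_le_finrank_of_injective hL
    simpa using this
  · intro f hf
    obtain ⟨x, hx⟩ := hrep f hf
    simp only [hx]
    rw [hsum (fun ω => (u ω ⬝ᵥ x) ^ 2)]
    obtain ⟨h1, h2⟩ := hS x
    have hg := hG0 x
    change 1/4 * (S.card : ℝ) * G x ≤ _ ∧ _ ≤ 14404 * t ^ 2 * N * G x
    constructor
    · refine le_trans ?_ h1
      gcongr
    · refine h2.trans ?_
      rw [hKdef]
      have : 0 ≤ t ^ 2 * N * G x := mul_nonneg hK.le hg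
      linarith
end finalpart

/-- Theorem 5.9: there are absolute constants `C₁, C₂, C₃ > 0` such that if an
`N`-dimensional space `X_N` of bounded measurable functions on `Ω ⊂ ℝ^d` satisfies the
Nikol'skii inequality `‖f‖_∞ ≤ tN^{1/2}‖f‖_2`, then there are `m ≤ C₁t²N` points with both
`‖f‖_∞ ≤ C₂^{-1/2} t N^{1/2} ((1/m)∑_j |f(ξ^j)|²)^{1/2}` and
`C₂‖f‖_2² ≤ (1/m)∑_j |f(ξ^j)|² ≤ C₃t²‖f‖_2²` for all `f ∈ X_N`. -/
theorem stmt_14 :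
    ∃ C₁ C₂ C₃ : ℝ, 0 < C₁ ∧ 0 < C₂ ∧ 0 < C₃ ∧
      ∀ (d : ℕ) (Ω : Set (Fin d → ℝ)), Ω.Nonempty →
      ∀ (μ : Measure Ω) [IsProbabilityMeasure μ],
      ∀ (t : ℝ), 0 < t →
      ∀ (N : ℕ) (X : Submodule ℝ (Ω → ℝ)), Module.finrank ℝ X = N →
        (∀ f ∈ X, Measurable f) →
        (∀ f ∈ X, ∃ B : ℝ, ∀ ω, |f ω| ≤ B) →
        (∀ f ∈ X, supNorm f ≤ t * Real.sqrt N * LpNorm μ 2 f) →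
        ∃ (m : ℕ) (ξ : Fin m → Ω), (m : ℝ) ≤ C₁ * t ^ 2 * N ∧
          ∀ f ∈ X,
            supNorm f ≤ C₂ ^ (-(1 : ℝ) / 2) * t * Real.sqrt N *
              ((1 / (m : ℝ)) * ∑ j, |f (ξ j)| ^ 2) ^ ((1 : ℝ) / 2) ∧
            C₂ * (LpNorm μ 2 f) ^ 2 ≤ (1 / (m : ℝ)) * ∑ j, |f (ξ j)| ^ 2 ∧
            (1 / (m : ℝ)) * ∑ j, |f (ξ j)| ^ 2 ≤ C₃ * t ^ 2 * (LpNorm μ 2 f) ^ 2 := by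
  refine ⟨3601, 1/4, 14404, by norm_num, by norm_num, by norm_num, ?_⟩
  intro d Ω hΩ μ _ t ht N X hX hm hb hn
  have : Nonempty Ω := hΩ.to_subtype
  rcases Nat.eq_zero_or_pos N with hN | hN
  · subst hN
    refine ⟨0, Fin.elim0, by simp, fun f hf => ?_⟩
    have h1 := hn f hf
    simp only [Nat.cast_zero, Real.sqrt_zero, mul_zero, zero_mul] at h1
    have h2 : ∀ ω, f ω = 0 := fun ω => by
      have := (le_supNorm f (hb f hf) ω).trans h1
      exact abs_nonpos_iff.1 this
    have h3 : (LpNorm μ 2 f) ^ 2 = 0 := by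
      rw [LpNorm_two_sq]; simp [h2]
    rw [h3]
    refine ⟨?_, by simp, by simp⟩
    simpa using h1
  · obtain ⟨m, ξ, hmc, hNm, h⟩ := main_pts μ ht hN X hX hm hb hn
    refine ⟨m, ξ, hmc, fun f hf => ?_⟩
    obtain ⟨h1, h2⟩ := h f hf
    have hNr : (0:ℝ) < N := by exact_mod_cast hN
    have hNm' : (N:ℝ) ≤ m := by exact_mod_cast hNm
    have hmp : (0:ℝ) < m := by linarith
    simp only [sq_abs]
    rw [← LpNorm_two_sq] at h1 h2
    have h3 : 1/4 * (LpNorm μ 2 f) ^ 2 ≤ 1 / (m:ℝ) * ∑ j, (f (ξ j)) ^ 2 := by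
      rw [one_div_mul_eq_div (m:ℝ), le_div_iff₀ hmp]; linarith
    refine ⟨?_, h3, ?_⟩
    · refine (hn f hf).trans ?_
      have h4 : ((1:ℝ)/4) ^ (-(1:ℝ)/2) = 2 := by
        rw [show (1:ℝ)/4 = 2 ^ (-2:ℝ) by rw [Real.rpow_neg (by norm_num), Real.rpow_two]; norm_num,
          ← Real.rpow_mul (by norm_num)]
        norm_num
      rw [h4, ← Real.sqrt_eq_rpow]
      have h5 : LpNorm μ 2 f ≤ 2 * √(1 / (m:ℝ) * ∑ j, (f (ξ j)) ^ 2) := by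
        have : LpNorm μ 2 f / 2 ≤ √(1 / (m:ℝ) * ∑ j, (f (ξ j)) ^ 2) := by
          apply Real.le_sqrt_of_sq_le
          rw [div_pow]; linarith
        linarith
      calc t * √N * LpNorm μ 2 f ≤ t * √N * (2 * √(1 / (m:ℝ) * ∑ j, (f (ξ j)) ^ 2)) := by gcongr
        _ = _ := by ring
    · rw [one_div_mul_eq_div (m:ℝ), div_le_iff₀ hmp]
      refine h2.trans ?_
      have : 0 ≤ 14404 * t ^ 2 * (LpNorm μ 2 f) ^ 2 := by positivity
      have := mul_le_mul_of_nonneg_left hNm' this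
      linarith
end

section
/- There exists an absolute constant c > 0 with the following property. Let Ω be a nonempty set, let Φ = {φ_1,…,φ_N} be a linearly independent system of bounded real-valued functions on Ω satisfying ∑_{i=1}^N φ_i(ω)² ≤ N t² for all ω ∈ Ω, let X_N := span{φ_1,…,φ_N}, and let B_Φ(L_∞) := {(a_1,…,a_N) ∈ ℝ^N : ‖∑_{i=1}^N a_i φ_i‖_∞ ≤ 1}, where ‖f‖_∞ := sup_{ω∈Ω}|f(ω)|. Assume that vol(B_Φ(L_∞))^{1/N} ≤ K N^{−1/2}, where vol denotes N-dimensional Lebesgue measure, and that points ξ^1,…,ξ^m ∈ Ω satisfy ‖f‖_∞ ≤ D max_{1≤j≤m}|f(ξ^j)| for all f ∈ X_N. Then m ≥ (N/e)·exp(c (tKD)^{−2}). -/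
open MeasureTheory

noncomputable def cubeMeas (N : ℕ) : Measure (Fin N → ℝ) :=
  Measure.pi (fun _ => volume.restrict (Set.Icc (-(1/2) : ℝ) (1/2)))

instance cubeProb1 : IsProbabilityMeasure (volume.restrict (Set.Icc (-(1/2) : ℝ) (1/2))) :=
  ⟨by simp; norm_num⟩

instance cubeProb (N : ℕ) : IsProbabilityMeasure (cubeMeas N) := by
  unfold cubeMeas; infer_instance

lemma cubeMeas_eq (N : ℕ) : cubeMeas N =
    volume.restrict (Set.univ.pi (fun _ : Fin N => Set.Icc (-(1/2) : ℝ) (1/2))) := by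
  unfold cubeMeas
  rw [volume_pi, Measure.restrict_pi_pi]

lemma one_dim (a : ℝ) : ∫ x in Set.Icc (-(1/2) : ℝ) (1/2), Real.exp (a * x) ≤
    Real.exp (a ^ 2 / 2) := by
  have h := ProbabilityTheory.hasSubgaussianMGF_of_mem_Icc_of_integral_eq_zero
    (μ := volume.restrict (Set.Icc (-(1/2) : ℝ) (1/2))) (X := fun x => x)
    (a := -(1/2)) (b := 1/2) (by fun_prop)
    (ae_restrict_mem measurableSet_Icc)
    (by
      rw [integral_Icc_eq_integral_Ioc, ← intervalIntegral.integral_of_le (by norm_num)]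
      simp)
  have h2 := h.mgf_le a
  unfold ProbabilityTheory.mgf at h2
  refine h2.trans (Real.exp_le_exp.2 ?_)
  norm_num
  nlinarith [sq_nonneg a]

lemma integ_exp (N : ℕ) (u : Fin N → ℝ) :
    Integrable (fun x => Real.exp (∑ i, u i * x i)) (cubeMeas N) := by
  simp_rw [Real.exp_sum]
  unfold cubeMeas
  refine Integrable.fintype_prod (f := fun i y => Real.exp (u i * y)) (fun i => ?_)
  exact (Continuous.integrableOn_Icc (by fun_prop))

lemma int_exp (N : ℕ) (u : Fin N → ℝ) :
    ∫ x, Real.exp (∑ i, u i * x i) ∂(cubeMeas N) ≤ Real.exp ((∑ i, u i ^ 2) / 2) := by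
  simp_rw [Real.exp_sum]
  unfold cubeMeas
  rw [integral_fintype_prod_eq_prod (f := fun i y => Real.exp (u i * y)), Finset.sum_div,
    Real.exp_sum]
  exact Finset.prod_le_prod (fun i _ => integral_nonneg fun _ => (Real.exp_pos _).le)
    (fun i _ => one_dim (u i))

lemma pointwise_cost (L y : ℝ) (hL : 2 ≤ L) :
    L * (round (y / (8 * √L)) : ℝ) ^ 2 ≤
      Real.exp (-(3 * L / 2)) * Real.cosh (√L * y) := by
  set k := round (y / (8 * √L)) with hk
  have hq : 0 < √L := Real.sqrt_pos.2 (by linarith)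
  have hqq : √L * √L = L := Real.mul_self_sqrt (by linarith)
  rcases eq_or_ne k 0 with h0 | h0
  · rw [h0]; simp; positivity
  have h1 : (1 : ℝ) ≤ |(k : ℝ)| := by
    exact_mod_cast Int.one_le_abs h0
  have h2 := abs_sub_round (y / (8 * √L))
  rw [← hk] at h2
  have h3 : |(k : ℝ)| ≤ |y / (8 * √L)| + 1 / 2 := by
    have := abs_sub_abs_le_abs_sub (k : ℝ) (y / (8 * √L))
    rw [abs_sub_comm] at this
    linarith
  have h4 : |y / (8 * √L)| = |y| / (8 * √L) := by
    rw [abs_div, abs_of_pos (by positivity : 0 < 8 * √L)]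
  rw [h4] at h3
  have h5 : |(k : ℝ)| ≤ 2 * (|y| / (8 * √L)) := by linarith
  have h6 : |(k : ℝ)| * (4 * √L) ≤ |y| := by
    rw [← mul_div_assoc, le_div_iff₀ (by positivity)] at h5
    linarith
  set v := √L * |y| with hv
  have hv4 : |(k : ℝ)| * (4 * L) ≤ v := by
    have := mul_le_mul_of_nonneg_left h6 hq.le
    calc |(k : ℝ)| * (4 * L) = √L * (|(k : ℝ)| * (4 * √L)) := by
          nth_rewrite 1 [← hqq]; ring
      _ ≤ v := this
  have hvL : 4 * L ≤ v := by nlinarith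
  have hk2 : L * (k : ℝ) ^ 2 ≤ v ^ 2 / 32 := by
    rw [← sq_abs (k : ℝ)]
    have : (|(k : ℝ)| * (4 * L)) ^ 2 ≤ v ^ 2 := by gcongr
    nlinarith [mul_nonneg (by linarith : (0:ℝ) ≤ L - 2) (by positivity : 0 ≤ L * |(k:ℝ)| ^ 2)]
  have hc : Real.cosh (√L * y) = Real.cosh v := by
    rw [← Real.cosh_abs, abs_mul, abs_of_pos hq]
  rw [hc]
  have hc2 : Real.exp v / 2 ≤ Real.cosh v := by
    rw [Real.cosh_eq]; linarith [Real.exp_pos (-v)]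
  have he : Real.exp (5 * v / 8) ≤ Real.exp (-(3 * L / 2)) * Real.exp v := by
    rw [← Real.exp_add]; apply Real.exp_le_exp.2; linarith
  have hq2 := Real.quadratic_le_exp_of_nonneg (x := 5 * v / 8) (by linarith)
  have := mul_le_mul_of_nonneg_left hc2 (Real.exp_pos (-(3 * L / 2))).le
  nlinarith [sq_nonneg v]

lemma sum_cells (L : ℝ) (hL : 2 ≤ L) (M : ℕ) :
    ∑ k ∈ Finset.Icc (-(M : ℤ)) M, Real.exp (-(L * (k : ℝ) ^ 2)) ≤
      1 + 3 * Real.exp (-L) := by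
  set r := Real.exp (-L) with hr
  have hr0 : 0 < r := Real.exp_pos _
  have hr1 : r ≤ 1 / 3 := by
    rw [hr, Real.exp_neg, inv_le_comm₀ (Real.exp_pos _) (by norm_num)]
    have := Real.add_one_le_exp L
    norm_num; linarith
  have key : ∀ M : ℕ, ∑ k ∈ Finset.Icc (-(M : ℤ)) M, Real.exp (-(L * (k : ℝ) ^ 2)) ≤
      1 + 3 * r * (1 - r ^ M) := by
    intro M
    induction M with
    | zero => simp
    | succ M ih =>
      have hset : Finset.Icc (-((M + 1 : ℕ) : ℤ)) ((M + 1 : ℕ) : ℤ) =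
          insert (-((M : ℤ) + 1)) (insert ((M : ℤ) + 1) (Finset.Icc (-(M : ℤ)) M)) := by
        ext k; simp only [Finset.mem_Icc, Finset.mem_insert]; push_cast; omega
      rw [hset, Finset.sum_insert (by simp; omega), Finset.sum_insert (by simp)]
      have e1 : Real.exp (-(L * (((M : ℝ) + 1)) ^ 2)) ≤ r ^ (M + 1) := by
        rw [hr, ← Real.exp_nat_mul]
        apply Real.exp_le_exp.2
        push_cast
        have : (0 : ℝ) ≤ M := Nat.cast_nonneg M
        nlinarith [mul_nonneg (by linarith : (0:ℝ) ≤ L) (mul_nonneg this (by linarith : (0:ℝ) ≤ M + 1))]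
      have e2 : Real.exp (-(L * ((-((M : ℤ) + 1) : ℤ) : ℝ) ^ 2)) ≤ r ^ (M + 1) := by
        push_cast
        rw [neg_sq]; exact e1
      have e3 : Real.exp (-(L * ((((M : ℤ) + 1) : ℤ) : ℝ) ^ 2)) ≤ r ^ (M + 1) := by
        push_cast; exact e1
      have hp : 0 < r ^ M := by positivity
      have hps : r ^ (M + 1) = r ^ M * r := pow_succ r M
      rw [hps] at e2 e3 ⊢
      nlinarith [mul_pos hp hr0]
  refine (key M).trans ?_
  have : 0 < r ^ M := by positivity
  nlinarith [mul_pos hr0 this]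

lemma core_volume (N m : ℕ) (u : Fin m → Fin N → ℝ) (hu : ∀ j, ∑ i, u j i ^ 2 ≤ 1)
    (L : ℝ) (hL : 2 ≤ L) (hm : 3 * m * Real.exp (-L) ≤ N) :
    ENNReal.ofReal (Real.exp (-(2 * N))) ≤
      volume {x : Fin N → ℝ | ∀ j, |∑ i, u j i * x i| ≤ 8 * √L} := by
  set P := {x : Fin N → ℝ | ∀ j, |∑ i, u j i * x i| ≤ 8 * √L} with hP
  by_cases htop : volume P = ⊤
  · rw [htop]; exact le_top
  have hq : 0 < √L := Real.sqrt_pos.2 (by linarith)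
  have hqq : √L ^ 2 = L := Real.sq_sqrt (by linarith)
  have hs : 0 < 8 * √L := by positivity
  let kk : (Fin N → ℝ) → Fin m → ℤ := fun x j => round ((∑ i, u j i * x i) / (8 * √L))
  let Q : (Fin m → ℤ) → Set (Fin N → ℝ) := fun k => {x | ∀ j, kk x j = k j}
  have hQm : ∀ k, MeasurableSet (Q k) := by
    intro k
    have : Q k = ⋂ j, {x | kk x j = k j} := by ext; simp [Q]
    rw [this]
    refine MeasurableSet.iInter fun j => ?_
    have hmeas : Measurable (fun x => kk x j) := by
      simp only [kk, round_eq]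
      exact Int.measurable_floor.comp (by fun_prop)
    exact hmeas (measurableSet_singleton (k j))
  have hQP : ∀ k, volume (Q k) ≤ volume P := by
    intro k
    rcases (Q k).eq_empty_or_nonempty with h | ⟨x0, hx0⟩
    · rw [h]; simp
    · rw [← measure_preimage_add_right volume (-x0) P]
      apply measure_mono
      intro x hx j
      have e : ∑ i, u j i * (x + -x0) i = ∑ i, u j i * x i - ∑ i, u j i * x0 i := by
        simp [mul_add, Finset.sum_add_distrib, sub_eq_add_neg]
      rw [e]
      have a1 := abs_sub_round ((∑ i, u j i * x i) / (8 * √L))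
      have a2 := abs_sub_round ((∑ i, u j i * x0 i) / (8 * √L))
      have b1 : round ((∑ i, u j i * x i) / (8 * √L)) = k j := hx j
      have b2 : round ((∑ i, u j i * x0 i) / (8 * √L)) = k j := hx0 j
      rw [b1] at a1
      rw [b2] at a2
      have a3 : |(∑ i, u j i * x i) / (8 * √L) - (∑ i, u j i * x0 i) / (8 * √L)| ≤ 1 := by
        rw [abs_le] at *
        constructor <;> linarith [a1.1, a1.2, a2.1, a2.2]
      rw [← sub_div, abs_div, abs_of_pos hs, div_le_one hs] at a3
      exact a3
  have hμQ : ∀ k, (cubeMeas N).real (Q k) ≤ volume.real P := by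
    intro k
    apply ENNReal.toReal_mono htop
    refine le_trans ?_ (hQP k)
    rw [cubeMeas_eq]
    exact Measure.restrict_apply_le _ _
  obtain ⟨M, hM⟩ := exists_nat_ge (∑ j, ∑ i, |u j i| + 1)
  let F : Finset (Fin m → ℤ) := Fintype.piFinset (fun _ => Finset.Icc (-(M : ℤ)) M)
  let w : (Fin m → ℤ) → ℝ := fun k => ∏ j, Real.exp (-(L * (k j : ℝ) ^ 2))
  have hw0 : ∀ k, 0 ≤ w k := fun k => Finset.prod_nonneg fun _ _ => (Real.exp_pos _).le
  have hwsum : ∑ k ∈ F, w k ≤ Real.exp N := by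
    have : ∑ k ∈ F, w k = ∏ _j : Fin m, ∑ k ∈ Finset.Icc (-(M : ℤ)) M,
        Real.exp (-(L * (k : ℝ) ^ 2)) :=
      (Finset.prod_univ_sum (fun _ => Finset.Icc (-(M : ℤ)) M)
        (fun _ k => Real.exp (-(L * (k : ℝ) ^ 2)))).symm
    rw [this]
    calc _ ≤ ∏ _j : Fin m, Real.exp (3 * Real.exp (-L)) := by
          refine Finset.prod_le_prod (fun _ _ => Finset.sum_nonneg fun _ _ => (Real.exp_pos _).le)
            fun _ _ => (sum_cells L hL M).trans ?_
          linarith [Real.add_one_le_exp (3 * Real.exp (-L))]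
      _ = Real.exp (3 * m * Real.exp (-L)) := by
          rw [Finset.prod_const, Finset.card_univ, Fintype.card_fin, ← Real.exp_nat_mul]
          ring_nf
      _ ≤ _ := Real.exp_le_exp.2 hm
  let G : (Fin N → ℝ) → ℝ := fun x =>
    ∑ j, Real.exp (-(3 * L / 2)) * Real.cosh (√L * ∑ i, u j i * x i)
  have hcosh : ∀ j, (fun x : Fin N → ℝ => Real.cosh (√L * ∑ i, u j i * x i)) = fun x =>
      (Real.exp (∑ i, (√L * u j i) * x i) + Real.exp (∑ i, (-(√L * u j i)) * x i)) / 2 := by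
    intro j; funext x
    rw [Real.cosh_eq]
    simp [Finset.mul_sum, mul_assoc]
  have hci : ∀ j, Integrable (fun x : Fin N → ℝ => Real.cosh (√L * ∑ i, u j i * x i))
      (cubeMeas N) := by
    intro j; rw [hcosh j]
    exact ((integ_exp N _).add (integ_exp N _)).div_const 2
  have hcint : ∀ j, ∫ x, Real.cosh (√L * ∑ i, u j i * x i) ∂(cubeMeas N) ≤
      Real.exp (L / 2) := by
    intro j; rw [hcosh j, integral_div, integral_add (integ_exp N _) (integ_exp N _)]
    have h1 := int_exp N (fun i => √L * u j i)
    have h2 := int_exp N (fun i => -(√L * u j i))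
    have e : ∑ i, (√L * u j i) ^ 2 ≤ L := by
      simp_rw [mul_pow, hqq]
      rw [← Finset.mul_sum]
      nlinarith [hu j]
    have e2 : ∑ i, (-(√L * u j i)) ^ 2 ≤ L := by simpa using e
    have h1' := h1.trans (Real.exp_le_exp.2 (div_le_div_of_nonneg_right e (by norm_num : (0:ℝ) ≤ 2)))
    have h2' := h2.trans (Real.exp_le_exp.2 (div_le_div_of_nonneg_right e2 (by norm_num : (0:ℝ) ≤ 2)))
    linarith
  have hGi : Integrable G (cubeMeas N) :=
    integrable_finsetSum _ fun j _ => (hci j).const_mul _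
  have hGint : ∫ x, G x ∂(cubeMeas N) ≤ N := by
    simp only [G]
    rw [integral_finsetSum _ fun j _ => (hci j).const_mul _]
    calc _ ≤ ∑ _j : Fin m, Real.exp (-L) := by
          refine Finset.sum_le_sum fun j _ => ?_
          rw [integral_const_mul]
          calc _ ≤ Real.exp (-(3 * L / 2)) * Real.exp (L / 2) := by gcongr; exact hcint j
            _ = _ := by rw [← Real.exp_add]; ring_nf
      _ = m * Real.exp (-L) := by simp
      _ ≤ N := by
          have : 0 ≤ m * Real.exp (-L) := by positivity
          linarith
  have hpt : ∀ᵐ x ∂(cubeMeas N), Real.exp (-N) * (1 + N - G x) ≤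
      ∑ k ∈ F, w k * (Q k).indicator (fun _ => (1 : ℝ)) x := by
    rw [cubeMeas_eq]
    filter_upwards [ae_restrict_mem (MeasurableSet.univ_pi fun _ => measurableSet_Icc)] with x hx
    have hkF : kk x ∈ F := by
      simp only [F, Fintype.mem_piFinset, Finset.mem_Icc]
      intro j
      have hy : |∑ i, u j i * x i| ≤ ∑ j, ∑ i, |u j i| := by
        calc _ ≤ ∑ i, |u j i * x i| := Finset.abs_sum_le_sum_abs _ _
          _ ≤ ∑ i, |u j i| := by
            refine Finset.sum_le_sum fun i _ => ?_
            rw [abs_mul]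
            have := hx i (Set.mem_univ i)
            have h1 : |x i| ≤ 1 := abs_le.2 ⟨by linarith [this.1], by linarith [this.2]⟩
            exact mul_le_of_le_one_right (abs_nonneg _) h1
          _ ≤ _ := Finset.single_le_sum (f := fun j => ∑ i, |u j i|)
            (fun j _ => Finset.sum_nonneg fun _ _ => abs_nonneg _) (Finset.mem_univ j)
      have h1s : 1 ≤ 8 * √L := by
        have : 1 ≤ √L := Real.one_le_sqrt.2 (by linarith)
        linarith
      have hz : |(∑ i, u j i * x i) / (8 * √L)| ≤ ∑ j, ∑ i, |u j i| := by
        rw [abs_div, abs_of_pos hs]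
        exact (div_le_self (abs_nonneg _) h1s).trans hy
      have a1 := abs_sub_round ((∑ i, u j i * x i) / (8 * √L))
      rw [abs_le] at a1 hz
      have c1 : ((kk x j : ℤ) : ℝ) = (round ((∑ i, u j i * x i) / (8 * √L)) : ℝ) := rfl
      rw [← c1] at a1
      constructor
      · have : (-(M : ℝ)) ≤ (kk x j : ℝ) := by linarith [a1.1, a1.2, hz.1, hz.2]
        exact_mod_cast this
      · have : (kk x j : ℝ) ≤ (M : ℝ) := by linarith [a1.1, a1.2, hz.1, hz.2]
        exact_mod_cast this
    have hxQ : x ∈ Q (kk x) := fun j => rfl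
    have hsum : w (kk x) ≤ ∑ k ∈ F, w k * (Q k).indicator (fun _ => (1 : ℝ)) x := by
      refine le_trans ?_ (Finset.single_le_sum
        (f := fun k => w k * (Q k).indicator (fun _ => (1 : ℝ)) x) (fun k _ =>
          mul_nonneg (hw0 k) (Set.indicator_nonneg (fun _ _ => zero_le_one) _)) hkF)
      simp [hxQ]
    refine le_trans ?_ hsum
    have hw : Real.exp (-G x) ≤ w (kk x) := by
      simp only [w]
      rw [← Real.exp_sum]
      apply Real.exp_le_exp.2
      rw [Finset.sum_neg_distrib]
      apply neg_le_neg
      exact Finset.sum_le_sum fun j _ => pointwise_cost L _ hL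
    refine le_trans ?_ hw
    have : Real.exp (-G x) = Real.exp (-N) * Real.exp (N - G x) := by
      rw [← Real.exp_add]; ring_nf
    rw [this]
    gcongr
    linarith [Real.add_one_le_exp (N - G x)]
  have hind : ∀ k, Integrable (fun x => w k * (Q k).indicator (fun _ => (1 : ℝ)) x)
      (cubeMeas N) := fun k =>
    ((integrable_const (1 : ℝ)).indicator (hQm k)).const_mul _
  have hint := integral_mono_ae (((integrable_const (1 + (N : ℝ))).sub hGi).const_mul
    (Real.exp (-N))) (integrable_finsetSum F fun k _ => hind k) hpt
  rw [integral_finsetSum F fun k _ => hind k, integral_const_mul,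
    integral_sub' (integrable_const _) hGi] at hint
  have hR : ∑ k ∈ F, ∫ x, w k * (Q k).indicator (fun _ => (1 : ℝ)) x ∂(cubeMeas N) ≤
      Real.exp N * volume.real P := by
    calc _ ≤ ∑ k ∈ F, w k * volume.real P := by
          refine Finset.sum_le_sum fun k _ => ?_
          rw [integral_const_mul, integral_indicator_const _ (hQm k)]
          simp only [smul_eq_mul, mul_one]
          exact mul_le_mul_of_nonneg_left (hμQ k) (hw0 k)
      _ = (∑ k ∈ F, w k) * volume.real P := by rw [Finset.sum_mul]
      _ ≤ _ := by gcongr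
  have hl : Real.exp (-N) ≤ Real.exp N * volume.real P := by
    refine le_trans ?_ (hint.trans hR)
    simp only [integral_const, probReal_univ, smul_eq_mul, one_mul]
    exact le_mul_of_one_le_right (Real.exp_pos _).le (by linarith)
  rw [ENNReal.ofReal_le_iff_le_toReal htop]
  have : Real.exp (-(2 * N)) = Real.exp (-N) * Real.exp (-N) := by
    rw [← Real.exp_add]; ring_nf
  rw [this]
  calc _ ≤ Real.exp (-N) * (Real.exp N * volume.real P) := by gcongr
    _ = volume.real P := by rw [← mul_assoc, ← Real.exp_add]; simp

/-- Theorem 7.1: there is an absolute constant `c > 0` such that if a linearly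
independent system `φ` of bounded functions satisfies `∑_i φ_i(ω)² ≤ Nt²`,
`vol(B_Φ(L_∞))^{1/N} ≤ K N^{-1/2}`, and the LDI `‖f‖_∞ ≤ D max_j |f(ξ^j)|` holds on
`X_N = span Φ`, then `m ≥ (N/e) e^{c(tKD)^{-2}}`. -/
theorem stmt_18 :
    ∃ c : ℝ, 0 < c ∧
      ∀ (Ω : Type), Nonempty Ω →
      ∀ (N : ℕ) (φ : Fin N → Ω → ℝ) (t K D : ℝ),
        0 < t → 0 < K → 0 < D →
        LinearIndependent ℝ φ →
        (∀ i, ∃ B : ℝ, ∀ ω, |φ i ω| ≤ B) →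
        (∀ ω, ∑ i, (φ i ω) ^ 2 ≤ N * t ^ 2) →
        (volume {a : Fin N → ℝ | supNorm (fun ω => ∑ i, a i * φ i ω) ≤ 1}).toReal
            ^ ((1 : ℝ) / N) ≤ K * (N : ℝ) ^ (-(1 : ℝ) / 2) →
        ∀ (m : ℕ) (ξ : Fin m → Ω),
          (∀ f ∈ Submodule.span ℝ (Set.range φ), supNorm f ≤ D * ⨆ j, |f (ξ j)|) →
          (N : ℝ) / Real.exp 1 * Real.exp (c / (t * K * D) ^ 2) ≤ m := by
  refine ⟨Real.exp (-4) / 128, by positivity, ?_⟩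
  intro Ω hΩ N φ t K D ht hK hD hli hbd hsq hvol m ξ hdisc
  rcases Nat.eq_zero_or_pos N with hN0 | hN
  · subst hN0; simp
  have hNr : (0 : ℝ) < N := by exact_mod_cast hN
  -- boundedness
  have hbdd : ∀ a : Fin N → ℝ, BddAbove (Set.range fun ω => |∑ i, a i * φ i ω|) := by
    intro a
    choose B hB using hbd
    refine ⟨∑ i, |a i| * B i, ?_⟩
    rintro _ ⟨ω, rfl⟩
    refine (Finset.abs_sum_le_sum_abs _ _).trans (Finset.sum_le_sum fun i _ => ?_)
    rw [abs_mul]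
    exact mul_le_mul_of_nonneg_left (hB i ω) (abs_nonneg _)
  have hle : ∀ (a : Fin N → ℝ) ω, |∑ i, a i * φ i ω| ≤ supNorm (fun ω => ∑ i, a i * φ i ω) :=
    fun a ω => le_ciSup (hbdd a) ω
  have hspan : ∀ a : Fin N → ℝ, (fun ω => ∑ i, a i * φ i ω) ∈
      Submodule.span ℝ (Set.range φ) := by
    intro a
    have : (fun ω => ∑ i, a i * φ i ω) = ∑ i, a i • φ i := by
      funext ω; simp
    rw [this]
    exact Submodule.sum_mem _ fun i _ =>
      Submodule.smul_mem _ _ (Submodule.subset_span ⟨i, rfl⟩)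
  -- evaluation map
  let T : (Fin N → ℝ) →ₗ[ℝ] (Fin m → ℝ) :=
    { toFun := fun a j => ∑ i, a i * φ i (ξ j)
      map_add' := by
        intro a b; funext j; simp [add_mul, Finset.sum_add_distrib]
      map_smul' := by
        intro r a; funext j; simp [Finset.mul_sum, mul_assoc] }
  have hTker : LinearMap.ker T = ⊥ := by
    rw [LinearMap.ker_eq_bot']
    intro a ha
    have h0 : ∀ j, ∑ i, a i * φ i (ξ j) = 0 := fun j => congrFun ha j
    have h1 := hdisc _ (hspan a)
    simp only [h0, abs_zero, Real.iSup_const_zero, mul_zero] at h1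
    have h2 : ∑ i, a i • φ i = 0 := by
      funext ω
      have := (hle a ω).trans h1
      simpa using abs_nonpos_iff.1 this
    funext i
    exact Fintype.linearIndependent_iff.1 hli a h2 i
  have hNm : N ≤ m := by
    have := LinearMap.finrank_le_finrank_of_injective (LinearMap.ker_eq_bot.1 hTker)
    simpa using this
  have hNmr : (N : ℝ) ≤ m := by exact_mod_cast hNm
  have hmr : (0 : ℝ) < m := lt_of_lt_of_le hNr hNmr
  set S := {a : Fin N → ℝ | supNorm (fun ω => ∑ i, a i * φ i ω) ≤ 1} with hS
  have hSfin : volume S ≠ ⊤ := by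
    obtain ⟨C, _, hC⟩ := T.exists_antilipschitzWith hTker
    have hb := hC.isBounded_preimage (Metric.isBounded_closedBall (x := (0 : Fin m → ℝ)) (r := 1))
    refine ((measure_mono ?_).trans_lt hb.measure_lt_top).ne
    intro a ha
    rw [Set.mem_preimage, mem_closedBall_zero_iff, pi_norm_le_iff_of_nonneg zero_le_one]
    intro j
    exact (hle a (ξ j)).trans ha
  set Λ := 1 + Real.log (m / N) with hΛ
  have hΛ1 : 1 ≤ Λ := by
    have := Real.log_nonneg ((one_le_div hNr).2 hNmr)
    linarith
  have hexpΛ : Real.exp Λ = Real.exp 1 * (m / N) := by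
    rw [hΛ, Real.exp_add, Real.exp_log (by positivity)]
  set L := 2 * Λ with hL
  have hL2 : 2 ≤ L := by linarith
  have hmL : 3 * m * Real.exp (-L) ≤ N := by
    have e : Real.exp (-L) = (Real.exp Λ * Real.exp Λ)⁻¹ := by
      rw [← Real.exp_add, ← Real.exp_neg]; congr 1; rw [hL]; ring
    rw [e, hexpΛ, ← div_eq_mul_inv, div_le_iff₀ (by positivity)]
    have e1 : (2 : ℝ) ≤ Real.exp 1 := by linarith [Real.add_one_le_exp (1 : ℝ)]
    have e2 : (4 : ℝ) ≤ Real.exp 1 * Real.exp 1 := by nlinarith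
    have e3 : (N : ℝ) * (Real.exp 1 * (m / N) * (Real.exp 1 * (m / N))) =
        (Real.exp 1 * Real.exp 1) * (m * (m / N)) := by field_simp
    rw [e3]
    have e4 : (m : ℝ) ≤ m * (m / N) := le_mul_of_one_le_right hmr.le ((one_le_div hNr).2 hNmr)
    nlinarith
  have hsN : 0 < √(N : ℝ) := Real.sqrt_pos.2 hNr
  have hsNN : √(N : ℝ) ^ 2 = N := Real.sq_sqrt hNr.le
  have hsL : 0 < √L := Real.sqrt_pos.2 (by linarith)
  have hsLL : √L ^ 2 = L := Real.sq_sqrt (by linarith)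
  have hcore := core_volume N m (fun j i => φ i (ξ j) / (t * √(N : ℝ))) (by
    intro j
    simp_rw [div_pow]
    rw [← Finset.sum_div, div_le_one (by positivity), mul_pow, hsNN]
    linarith [hsq (ξ j)]) L hL2 hmL
  set P := {x : Fin N → ℝ | ∀ j, |∑ i, φ i (ξ j) / (t * √(N : ℝ)) * x i| ≤ 8 * √L} with hP
  set r := 1 / (D * t * √(N : ℝ) * (8 * √L)) with hr
  have hr0 : 0 < r := by positivity
  open scoped Pointwise in
  have hsub : r • P ⊆ S := by
    rintro _ ⟨x, hx, rfl⟩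
    have h1 := hdisc _ (hspan (r • x))
    refine h1.trans ?_
    have h2 : ⨆ j, |∑ i, (r • x) i * φ i (ξ j)| ≤ 1 / D := by
      refine Real.iSup_le (fun j => ?_) (by positivity)
      have h3 := hx j
      have h4 : ∑ i, (r • x) i * φ i (ξ j) =
          (r * (t * √(N : ℝ))) * ∑ i, φ i (ξ j) / (t * √(N : ℝ)) * x i := by
        rw [Finset.mul_sum]
        refine Finset.sum_congr rfl fun i _ => ?_
        simp only [Pi.smul_apply, smul_eq_mul]
        field_simp
      rw [h4, abs_mul, abs_of_pos (by positivity)]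
      calc _ ≤ (r * (t * √(N : ℝ))) * (8 * √L) := by gcongr
        _ = 1 / D := by rw [hr]; field_simp
    calc D * ⨆ j, |∑ i, (r • x) i * φ i (ξ j)| ≤ D * (1 / D) := by gcongr
      _ = 1 := by field_simp
  have hV : r ^ N * Real.exp (-(2 * N)) ≤ (volume S).toReal := by
    rw [← ENNReal.ofReal_le_iff_le_toReal hSfin]
    refine le_trans ?_ (measure_mono hsub)
    rw [Measure.addHaar_smul_of_nonneg _ hr0.le, ENNReal.ofReal_mul (by positivity)]
    simp only [Module.finrank_fintype_fun_eq_card, Fintype.card_fin]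
    gcongr
  have hroot : r * Real.exp (-2) ≤ (volume S).toReal ^ ((1 : ℝ) / N) := by
    have e : r ^ N * Real.exp (-(2 * N)) = (r * Real.exp (-2)) ^ N := by
      rw [mul_pow, ← Real.exp_nat_mul]; ring_nf
    rw [e] at hV
    have := Real.rpow_le_rpow (by positivity) hV (by positivity : (0 : ℝ) ≤ 1 / N)
    rwa [one_div, Real.pow_rpow_inv_natCast (by positivity) hN.ne', ← one_div] at this
  have hfin := hroot.trans hvol
  have hpow : (N : ℝ) ^ (-(1 : ℝ) / 2) = 1 / √(N : ℝ) := by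
    rw [Real.sqrt_eq_rpow, neg_div, Real.rpow_neg hNr.le, one_div, one_div]
  rw [hpow, hr] at hfin
  have h5 : Real.exp (-2) ≤ (t * K * D) * (8 * √L) := by
    have e : 1 / (D * t * √(N : ℝ) * (8 * √L)) * Real.exp (-2) =
        Real.exp (-2) / (D * t * (8 * √L)) * (1 / √(N : ℝ)) := by field_simp
    rw [e] at hfin
    have := le_of_mul_le_mul_right hfin (by positivity)
    rw [div_le_iff₀ (by positivity)] at this
    linarith
  have h6 : Real.exp (-4) / 128 / (t * K * D) ^ 2 ≤ Λ := by
    rw [div_le_iff₀ (by positivity)]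
    have h7 : Real.exp (-2) ^ 2 ≤ ((t * K * D) * (8 * √L)) ^ 2 := by gcongr
    have h8 : Real.exp (-2) ^ 2 = Real.exp (-4) := by
      rw [← Real.exp_nat_mul]; norm_num
    rw [h8, mul_pow, mul_pow 8, hsLL] at h7
    rw [hL] at h7
    linarith
  calc (N : ℝ) / Real.exp 1 * Real.exp (Real.exp (-4) / 128 / (t * K * D) ^ 2)
      ≤ N / Real.exp 1 * Real.exp Λ := by gcongr
    _ = m := by rw [hexpΛ]; field_simp
end

section
/- There exists an absolute constant c > 0 with the following property. Let Ω be a nonempty set and let Φ = {φ_1,…,φ_N} be a system of bounded real-valued functions on Ω which is a uniformly bounded Sidon system: β ∑_{i=1}^N |a_i| ≤ ‖∑_{i=1}^N a_i φ_i‖_∞ for all real a_1,…,a_N, and ‖φ_i‖_∞ ≤ B for i = 1,…,N, where β, B > 0. Let X_N := span{φ_1,…,φ_N}. If points ξ^1,…,ξ^m ∈ Ω satisfy ‖f‖_∞ ≤ D max_{1≤j≤m}|f(ξ^j)| for all f ∈ X_N, then m ≥ (N/e)·exp(c β² N/(B² D²)). -/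
open MeasureTheory

lemma greedy_aux {ι : Type} {N : ℕ} (w : ι → Fin N → ℝ) (B γ : ℝ)
    (hw : ∀ j i, |w j i| ≤ B) (hγ : γ ≤ B)
    (h : ∀ a : Fin N → ℝ, ∃ j, γ * ∑ i, |a i| ≤ ∑ i, a i * w j i)
    (u : Fin N → ℝ) (hu : ∀ i, |u i| ≤ γ) (k : ℕ) :
    ∃ s : Multiset ι, Multiset.card s = k ∧
      ∑ i, ((s.map (fun j => w j i)).sum - k * u i) ^ 2 ≤ 4 * k * B ^ 2 * N := by
  induction k with
  | zero => exact ⟨0, by simp, by simp⟩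
  | succ k ih =>
    obtain ⟨s, hs, hS⟩ := ih
    set S : Fin N → ℝ := fun i => (s.map (fun j => w j i)).sum - k * u i with hSdef
    obtain ⟨j, hj⟩ := h (fun i => - S i)
    refine ⟨j ::ₘ s, by simp [hs], ?_⟩
    have e1 : ∀ i, (((j ::ₘ s).map (fun j => w j i)).sum - ((k + 1 : ℕ) : ℝ) * u i) ^ 2
        = S i ^ 2 + 2 * (S i * (w j i - u i)) + (w j i - u i) ^ 2 := by
      intro i
      simp only [hSdef, Multiset.map_cons, Multiset.sum_cons]
      push_cast
      ring
    rw [Finset.sum_congr rfl (fun i _ => e1 i), Finset.sum_add_distrib, Finset.sum_add_distrib,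
      ← Finset.mul_sum]
    have e2 : ∑ i, S i * (w j i - u i) ≤ 0 := by
      have : ∑ i, -(S i * u i) ≤ γ * ∑ i, |-S i| := by
        rw [Finset.mul_sum]
        apply Finset.sum_le_sum
        intro i _
        have h1 : -(S i * u i) ≤ |S i| * |u i| := by
          rw [← abs_mul]; exact neg_le_abs _
        have h2 : |S i| * |u i| ≤ |S i| * γ := mul_le_mul_of_nonneg_left (hu i) (abs_nonneg _)
        rw [abs_neg]; linarith
      have h3 : ∑ i, S i * (w j i - u i) = ∑ i, -(S i * u i) - ∑ i, -S i * w j i := by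
        rw [← Finset.sum_sub_distrib]
        exact Finset.sum_congr rfl (fun i _ => by ring)
      rw [h3]; linarith
    have e3 : ∑ i, (w j i - u i) ^ 2 ≤ 4 * B ^ 2 * N := by
      have : ∑ i : Fin N, (w j i - u i) ^ 2 ≤ ∑ i : Fin N, 4 * B ^ 2 := by
        apply Finset.sum_le_sum
        intro i _
        have h1 := abs_le.1 (hw j i)
        have h2 := abs_le.1 ((hu i).trans hγ)
        nlinarith
      simp at this
      linarith
    push_cast
    have : ∑ i, S i ^ 2 ≤ 4 * k * B ^ 2 * N := hS
    nlinarith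

lemma count_aux {N : ℕ} (e₀ : Fin N → Bool) (F : Finset (Fin N → Bool))
    (hF : ∀ e ∈ F, 8 * ∑ i, (if e i = e₀ i then (0:ℝ) else 1) ≤ N) :
    (F.card : ℝ) ≤ (1 + Real.exp (-1)) ^ N * Real.exp (N / 8) := by
  have h1 : ∑ e : Fin N → Bool, Real.exp (-∑ i, (if e i = e₀ i then (0:ℝ) else 1))
      = (1 + Real.exp (-1)) ^ N := by
    have := Finset.prod_univ_sum (fun _ : Fin N => (Finset.univ : Finset Bool))
      (fun i b => Real.exp (-(if b = e₀ i then (0:ℝ) else 1)))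
    rw [Fintype.piFinset_univ] at this
    simp_rw [← Finset.sum_neg_distrib, Real.exp_sum]
    rw [← this]
    have h2 : ∀ i, ∑ b : Bool, Real.exp (-(if b = e₀ i then (0:ℝ) else 1)) = 1 + Real.exp (-1) := by
      intro i
      cases e₀ i <;> simp [add_comm]
    rw [Finset.prod_congr rfl (fun i _ => h2 i)]
    simp
  rw [← h1]
  calc (F.card : ℝ) = ∑ e ∈ F, 1 := by simp
    _ ≤ ∑ e ∈ F, Real.exp (-∑ i, (if e i = e₀ i then (0:ℝ) else 1)) * Real.exp (N / 8) := by
        apply Finset.sum_le_sum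
        intro e he
        rw [← Real.exp_add]
        apply Real.one_le_exp
        have := hF e he
        linarith
    _ ≤ ∑ e : Fin N → Bool, Real.exp (-∑ i, (if e i = e₀ i then (0:ℝ) else 1)) * Real.exp (N / 8) :=
        Finset.sum_le_univ_sum_of_nonneg
          (fun e => mul_nonneg (Real.exp_pos _).le (Real.exp_pos _).le)
    _ = _ := by rw [Finset.sum_mul]

lemma entropy_aux {ι : Type} [Fintype ι] {N : ℕ} (w : ι → Fin N → ℝ) (B γ : ℝ)
    (hγ0 : 0 < γ) (hw : ∀ j i, |w j i| ≤ B) (hγ : γ ≤ B)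
    (h : ∀ a : Fin N → ℝ, ∃ j, γ * ∑ i, |a i| ≤ ∑ i, a i * w j i)
    (k : ℕ) (hk : 32 * B ^ 2 ≤ k * γ ^ 2) :
    Real.exp (N / 8) ≤ ((Fintype.card ι).multichoose k : ℝ) := by
  classical
  have hB : 0 < B := hγ0.trans_le hγ
  have hk0 : (0:ℝ) < k := by
    by_contra hc
    have : (k:ℝ) * γ ^ 2 ≤ 0 := mul_nonpos_of_nonpos_of_nonneg (not_lt.1 hc) (by positivity)
    nlinarith [pow_pos hB 2]
  let u : (Fin N → Bool) → Fin N → ℝ := fun e i => if e i then γ else -γ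
  have hu : ∀ e i, |u e i| ≤ γ := by
    intro e i
    simp only [u]
    split_ifs <;> simp [abs_of_pos hγ0]
  choose s hs hS using fun e => greedy_aux w B γ hw hγ h (u e) (hu e) k
  let M : (Fin N → Bool) → Sym ι k := fun e => ⟨s e, hs e⟩
  have hfib : ∀ e e', M e = M e' → 8 * ∑ i, (if e i = e' i then (0:ℝ) else 1) ≤ N := by
    intro e e' hM
    have hM' : s e = s e' := congrArg Subtype.val hM
    have h1 := hS e
    have h2 := hS e'
    rw [← hM'] at h2
    have h3 : ∀ i, (k * γ) ^ 2 * 4 * (if e i = e' i then (0:ℝ) else 1) ≤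
        2 * (((s e).map (fun j => w j i)).sum - k * u e i) ^ 2
        + 2 * (((s e).map (fun j => w j i)).sum - k * u e' i) ^ 2 := by
      intro i
      generalize ((s e).map (fun j => w j i)).sum = y
      simp only [u]
      cases e i <;> cases e' i <;> simp <;> nlinarith [sq_nonneg y, sq_nonneg (y - k*γ), sq_nonneg (y + k*γ)]
    have h4 := Finset.sum_le_sum (fun i (_ : i ∈ Finset.univ) => h3 i)
    rw [Finset.sum_add_distrib, ← Finset.mul_sum, ← Finset.mul_sum, ← Finset.mul_sum] at h4
    set H := ∑ i, (if e i = e' i then (0:ℝ) else 1)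
    have hH : 0 ≤ H := Finset.sum_nonneg (fun i _ => by split_ifs <;> norm_num)
    have h5 : (k * γ) ^ 2 * 4 * H ≤ 16 * k * B ^ 2 * N := by linarith
    have h6 : k * B ^ 2 * (32 * 4 * H) ≤ k * B ^ 2 * (16 * N) := by
      have : k * (32 * B ^ 2) * (4 * H) ≤ k * (k * γ ^ 2) * (4 * H) := by gcongr
      linarith
    have h7 := le_of_mul_le_mul_left h6 (by positivity)
    linarith
  have hcard : ((2:ℝ)) ^ N ≤ ((Fintype.card ι).multichoose k : ℝ) *
      ((1 + Real.exp (-1)) ^ N * Real.exp (N / 8)) := by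
    have h1 : (Finset.univ : Finset (Fin N → Bool)).card =
        ∑ b : Sym ι k, (Finset.univ.filter (fun e => M e = b)).card :=
      Finset.card_eq_sum_card_fiberwise (fun _ _ => Finset.mem_univ _)
    have h2 : ((Finset.univ : Finset (Fin N → Bool)).card : ℝ) = 2 ^ N := by simp
    rw [← h2, h1, ← Sym.card_sym_eq_multichoose]
    push_cast
    rw [← nsmul_eq_mul, ← Finset.card_univ]
    apply Finset.sum_le_card_nsmul
    intro b _
    rcases (Finset.univ.filter (fun e => M e = b)).eq_empty_or_nonempty with h0 | ⟨e₀, he₀⟩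
    · rw [h0]; simp; positivity
    · apply count_aux e₀
      intro e he
      apply hfib
      rw [(Finset.mem_filter.1 he).2, (Finset.mem_filter.1 he₀).2]
  have hnum : (1 + Real.exp (-1)) * (Real.exp (1/8) * Real.exp (1/8)) ≤ 2 := by
    have a1 : Real.exp (-1) ≤ 0.4 := by
      rw [Real.exp_neg]
      have := Real.exp_one_gt_d9
      rw [inv_le_comm₀ (by positivity) (by norm_num)]
      norm_num; linarith
    have a2 : Real.exp (1/8) * Real.exp (1/8) ≤ 4/3 := by
      rw [← Real.exp_add]
      have := Real.one_sub_le_exp_neg (1/8 + 1/8 : ℝ)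
      rw [Real.exp_neg] at this
      rw [← inv_le_inv₀ (by norm_num) (by positivity)]
      norm_num at this ⊢; linarith
    have := Real.exp_pos (-1)
    calc _ ≤ (1 + 0.4) * (4/3 : ℝ) := by gcongr
      _ ≤ 2 := by norm_num
  have h8 : Real.exp ((N:ℝ) / 8) = Real.exp (1/8) ^ N := by
    rw [← Real.exp_nat_mul]; congr 1; ring
  have h9 : ((1 + Real.exp (-1)) ^ N * Real.exp ((N:ℝ) / 8)) * Real.exp ((N:ℝ)/8) ≤ 2 ^ N := by
    rw [h8, ← mul_pow, ← mul_pow]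
    apply pow_le_pow_left₀ (by positivity)
    linarith
  have h10 := h9.trans hcard
  rw [mul_comm ((Fintype.card ι).multichoose k : ℝ)] at h10
  exact le_of_mul_le_mul_left h10 (by positivity)

lemma multichoose_aux (n k : ℕ) (hk : 0 < k) :
    (n.multichoose k : ℝ) ≤ (Real.exp 1 * (n + k) / k) ^ k := by
  rw [Nat.multichoose_eq]
  have h1 : ((n + k - 1).choose k : ℝ) ≤ ((n + k - 1 : ℕ) : ℝ) ^ k / k.factorial :=
    Nat.choose_le_pow_div k _
  have h2 : ((n + k - 1 : ℕ) : ℝ) ≤ n + k := by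
    have : n + k - 1 ≤ n + k := Nat.sub_le _ _
    exact_mod_cast this
  have h3 : (k:ℝ) ^ k / k.factorial ≤ Real.exp k := Real.pow_div_factorial_le_exp k (by positivity) k
  have hk' : (0:ℝ) < k := by exact_mod_cast hk
  have h4 : (1:ℝ) / k.factorial ≤ Real.exp k / k ^ k := by
    rw [le_div_iff₀ (by positivity)]
    calc _ = (k:ℝ) ^ k / k.factorial := by ring
      _ ≤ _ := h3
  calc ((n + k - 1).choose k : ℝ) ≤ ((n + k - 1 : ℕ) : ℝ) ^ k * (1 / k.factorial) := by
        rw [mul_one_div]; exact h1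
    _ ≤ ((n:ℝ) + k) ^ k * (Real.exp k / k ^ k) := by gcongr
    _ = _ := by
      rw [div_pow, mul_pow, ← Real.exp_nat_mul, mul_one]; ring

lemma final_aux (N m : ℕ) (hN : 0 < N) (hm : N ≤ m) (x : ℝ) (hx : 0 < x) (hx1 : x ≤ 1)
    (h : ∀ k : ℕ, 32 ≤ k * x → Real.exp (N / 8) ≤ ((2 * m).multichoose k : ℝ)) :
    (N : ℝ) / Real.exp 1 * Real.exp (1 / 2640 * (x * N)) ≤ m := by
  have hN' : (0:ℝ) < N := by exact_mod_cast hN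
  have hm' : (N:ℝ) ≤ m := by exact_mod_cast hm
  rcases le_total (1 / 2640 * (x * N)) 1 with hz | hz
  · calc _ ≤ (N : ℝ) / Real.exp 1 * Real.exp 1 := by gcongr
      _ = N := by field_simp
      _ ≤ m := hm'
  · obtain ⟨z, hzd⟩ : ∃ z : ℝ, z = 1 / 2640 * (x * N) := ⟨_, rfl⟩
    rw [← hzd] at hz ⊢
    set k := ⌈32 / x⌉₊ with hkd
    have hk1 : 32 / x ≤ k := Nat.le_ceil _
    have hk2 : (k:ℝ) < 32 / x + 1 := Nat.ceil_lt_add_one (by positivity)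
    have hk3 : 32 ≤ k * x := (div_le_iff₀ hx).1 hk1
    have hk4 : k * x ≤ 33 := by
      have : (k:ℝ) * x ≤ (32 / x + 1) * x := by gcongr
      have e : (32 / x + 1) * x = 32 + x := by field_simp
      linarith
    have hkpos : (0:ℝ) < k := by
      have : 0 < 32 / x := by positivity
      linarith
    have hkn : 0 < k := by exact_mod_cast hkpos
    have h1 := (h k hk3).trans (multichoose_aux (2 * m) k hkn)
    have h2 : Real.exp ((N:ℝ) / 8) = Real.exp (N / 8 / k) ^ k := by
      rw [← Real.exp_nat_mul]; congr 1; field_simp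
    rw [h2] at h1
    have h3 := le_of_pow_le_pow_left₀ hkn.ne' (by positivity) h1
    have h4 : 10 * z ≤ N / 8 / k := by
      rw [hzd, div_div, le_div_iff₀ (by positivity)]
      nlinarith
    have h5 := (Real.exp_le_exp.2 h4).trans h3
    push_cast at h5
    rw [le_div_iff₀ hkpos] at h5
    -- exp (10 z) * k ≤ e * (2m + k)
    have hz0 : 0 < z := by linarith
    have h6 : Real.exp (10 * z) = Real.exp z * Real.exp z * Real.exp (8 * z) := by
      rw [← Real.exp_add, ← Real.exp_add]; congr 1; ring
    have h7 : z + 1 ≤ Real.exp z := Real.add_one_le_exp z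
    have h8 : (1000:ℝ) ≤ Real.exp (8 * z) := by
      have : (2.7:ℝ) ≤ Real.exp 1 := by have := Real.exp_one_gt_d9; linarith
      calc (1000:ℝ) ≤ 2.7 ^ 8 := by norm_num
        _ ≤ Real.exp 1 ^ 8 := by gcongr
        _ = Real.exp 8 := by rw [← Real.exp_nat_mul]; norm_num
        _ ≤ _ := Real.exp_le_exp.2 (by linarith)
    have h9 : 1000 * z * Real.exp z + 1000 * Real.exp z ≤ Real.exp (10 * z) := by
      rw [h6]
      have : Real.exp z * (z + 1) * 1000 ≤ Real.exp z * Real.exp z * Real.exp (8 * z) := by gcongr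
      linarith
    have he3 : Real.exp 1 ≤ 3 := by have := Real.exp_one_lt_d9; linarith
    have he1 : 1 ≤ Real.exp z := Real.one_le_exp hz0.le
    have h10 : 1000 * z * Real.exp z * k ≤ Real.exp 1 * (2 * m) := by
      have : (1000 * z * Real.exp z + 1000 * Real.exp z) * k ≤ Real.exp (10 * z) * k := by gcongr
      have h11 : Real.exp 1 * k ≤ 1000 * Real.exp z * k := by gcongr; linarith
      linarith
    have h12 : 32 * (N:ℝ) ≤ 2640 * z * k := by
      have : 2640 * z * k = k * x * N := by rw [hzd]; ring
      rw [this]; gcongr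
    have h13 : 32 * N * Real.exp z ≤ 2640 * z * k * Real.exp z := by gcongr
    rw [div_mul_eq_mul_div, div_le_iff₀ (by positivity)]
    have h14 : 0 < Real.exp z * N := by positivity
    linarith

/-- Corollary 7.1: there is an absolute constant `c > 0` such that if
`φ_1,…,φ_N` is a uniformly bounded Sidon system (`β ∑_i |a_i| ≤ ‖∑_i a_i φ_i‖_∞` and
`‖φ_i‖_∞ ≤ B`) and the LDI `‖f‖_∞ ≤ D max_j |f(ξ^j)|` holds on `X_N = span Φ`, then
`m ≥ (N/e) e^{cβ²N/(B²D²)}`. -/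
theorem stmt_19 :
    ∃ c : ℝ, 0 < c ∧
      ∀ (Ω : Type), Nonempty Ω →
      ∀ (N : ℕ) (φ : Fin N → Ω → ℝ) (β B D : ℝ),
        0 < β → 0 < B → 0 < D →
        (∀ a : Fin N → ℝ, β * ∑ i, |a i| ≤ supNorm (fun ω => ∑ i, a i * φ i ω)) →
        (∀ i, supNorm (φ i) ≤ B) →
        ∀ (m : ℕ) (ξ : Fin m → Ω),
          (∀ f ∈ Submodule.span ℝ (Set.range φ), supNorm f ≤ D * ⨆ j, |f (ξ j)|) →
          (N : ℝ) / Real.exp 1 * Real.exp (c * β ^ 2 * N / (B ^ 2 * D ^ 2)) ≤ m := by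
  refine ⟨1 / 2640, by norm_num, ?_⟩
  intro Ω _ N φ β B D hβ hB hD hSid hbd m ξ hD'
  rcases Nat.eq_zero_or_pos N with rfl | hN
  · simp
  have hφ : ∀ i ω, |φ i ω| ≤ B := by
    intro i ω
    have hb : BddAbove (Set.range fun ω => |φ i ω|) := by
      by_contra hc
      have h1 := hSid (Pi.single i 1)
      have h2 : supNorm (fun ω => ∑ i', (Pi.single i 1 : Fin N → ℝ) i' * φ i' ω) = 0 := by
        have : (fun ω => ∑ i', (Pi.single i 1 : Fin N → ℝ) i' * φ i' ω) = φ i := by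
          funext ω
          simp [Pi.single_apply]
        rw [this]
        exact Real.iSup_of_not_bddAbove hc
      have h3 : ∑ i', |(Pi.single i 1 : Fin N → ℝ) i'| = 1 := by
        simp [Pi.single_apply, apply_ite abs]
      rw [h2, h3] at h1
      linarith
    exact (le_ciSup hb ω).trans (hbd i)
  have hkey : ∀ a : Fin N → ℝ, β / D * ∑ i, |a i| ≤ ⨆ j, |∑ i, a i * φ i (ξ j)| := by
    intro a
    have hmem : (fun ω => ∑ i, a i * φ i ω) ∈ Submodule.span ℝ (Set.range φ) := by
      have : (fun ω => ∑ i, a i * φ i ω) = ∑ i, a i • φ i := by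
        funext ω; simp
      rw [this]
      exact Submodule.sum_mem _ (fun i _ => Submodule.smul_mem _ _ (Submodule.subset_span ⟨i, rfl⟩))
    have := (hSid a).trans (hD' _ hmem)
    rw [div_mul_eq_mul_div, div_le_iff₀ hD]
    linarith
  have hγ0 : 0 < β / D := by positivity
  have hNm : N ≤ m := by
    let L : (Fin N → ℝ) →ₗ[ℝ] (Fin m → ℝ) :=
      { toFun := fun a j => ∑ i, a i * φ i (ξ j)
        map_add' := by
          intro a b; funext j; simp [add_mul, Finset.sum_add_distrib]
        map_smul' := by
          intro r a; funext j; simp [Finset.mul_sum, mul_assoc] }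
    have hL : Function.Injective L := by
      rw [injective_iff_map_eq_zero]
      intro a ha
      have h1 := hkey a
      have h2 : ∀ j, ∑ i, a i * φ i (ξ j) = 0 := fun j => congrFun ha j
      simp only [h2, abs_zero, Real.iSup_const_zero] at h1
      have h3 : ∑ i, |a i| ≤ 0 := by
        by_contra hc
        have := mul_pos hγ0 (not_le.1 hc)
        linarith
      funext i
      have := Finset.single_le_sum (f := fun i => |a i|) (fun i _ => abs_nonneg _) (Finset.mem_univ i)
      exact abs_nonpos_iff.1 (this.trans h3)
    simpa using LinearMap.finrank_le_finrank_of_injective hL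
  haveI : Nonempty (Fin m) := ⟨⟨0, by omega⟩⟩
  have hkey2 : ∀ a : Fin N → ℝ, ∃ j, β / D * ∑ i, |a i| ≤ |∑ i, a i * φ i (ξ j)| := by
    intro a
    obtain ⟨j, hj⟩ := exists_eq_ciSup_of_finite (f := fun j => |∑ i, a i * φ i (ξ j)|)
    exact ⟨j, by rw [hj]; exact hkey a⟩
  have hγ : β / D ≤ B := by
    obtain ⟨j, hj⟩ := hkey2 (Pi.single ⟨0, hN⟩ 1)
    have h3 : ∑ i', |(Pi.single ⟨0, hN⟩ 1 : Fin N → ℝ) i'| = 1 := by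
      simp [Pi.single_apply, apply_ite abs]
    have h4 : ∑ i', (Pi.single ⟨0, hN⟩ 1 : Fin N → ℝ) i' * φ i' (ξ j) = φ ⟨0, hN⟩ (ξ j) := by
      simp [Pi.single_apply]
    rw [h3, h4, mul_one] at hj
    exact hj.trans (hφ _ _)
  have hx1 : (β / D) ^ 2 / B ^ 2 ≤ 1 := by
    rw [div_le_one (by positivity)]
    gcongr
  have hfin := final_aux N m hN hNm ((β / D) ^ 2 / B ^ 2) (by positivity) hx1 (by
    intro k hk
    have := entropy_aux (ι := Fin m × Bool)
      (fun p i => if p.2 then φ i (ξ p.1) else - φ i (ξ p.1)) B (β / D) hγ0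
      (by rintro ⟨j, b⟩ i; cases b <;> simp [hφ]) hγ
      (by
        intro a
        obtain ⟨j, hj⟩ := hkey2 a
        rcases abs_choice (∑ i, a i * φ i (ξ j)) with h | h
        · exact ⟨(j, true), by rw [h] at hj; simpa using hj⟩
        · exact ⟨(j, false), by rw [h] at hj; simpa using hj⟩)
      k (by
        rw [← mul_div_assoc, le_div_iff₀ (by positivity)] at hk
        exact hk)
    simpa [mul_comm] using this)
  have e : 1 / 2640 * β ^ 2 * N / (B ^ 2 * D ^ 2) = 1 / 2640 * ((β / D) ^ 2 / B ^ 2 * N) := by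
    field_simp
  rw [e]
  exact hfin
end
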